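/- arXiv:2010.00277 — 6 statements merged into one kernel-verified Lean document; each statement's English description precedes it below -/
import Mathlib

section
/- Every Jordan net in S⁴, i.e., every 3-dimensional Jordan subalgebra L of (S⁴, •_U) with invertible unit U ∈ L, is congruent (L ↦ P L Pᵀ, P ∈ GL(4, ℂ)) to one of the following eight nets (each given as the span of three matrices, with E_{ij} the matrix units and J₂ = E₁₂+E₂₁, J₃ = E₁₃+E₂₂+E₃₁, J₄ = E₁₄+E₂₃+E₃₂+E₄₁): 1(a): span{E₁₁+E₂₂, E₃₃, E₄₄}; 1(b): {Diag(A, A) : A a symmetric 2×2 matrix}; 2(a1): span{E₁₂+E₂₁, E₁₁, E₃₃+E₄₄}; 2(a2): span{E₁₃+E₃₁+E₂₂, E₁₁, E₄₄}; 2(b): span{E₁₂+E₂₁, E₃₄+E₄₃, E₁₃+E₃₁}; 3(a): span{E₁₃+E₃₁+E₂₂+E₄₄, E₁₂+E₂₁, E₁₁}; 3(b1): span{J₄, E₁₁, E₂₂}; 3(b2): span{J₄, E₁₁, E₁₃+E₃₁}. -/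
open Matrix

noncomputable section

abbrev Mat (n : ℕ) := Matrix (Fin n) (Fin n) ℂ

/-- The Jordan product on symmetric matrices with unit `U`. -/
def jmul {n : ℕ} (U X Y : Mat n) : Mat n :=
  (1 / 2 : ℂ) • (X * U⁻¹ * Y + Y * U⁻¹ * X)

/-- Congruence by `P`, i.e. `X ↦ P X Pᵀ`, as a linear map. -/
def congMap {n : ℕ} (P : Mat n) : Mat n →ₗ[ℂ] Mat n where
  toFun X := P * X * Pᵀ
  map_add' := by intros; simp [Matrix.mul_add, Matrix.add_mul]
  map_smul' := by intros; simp [Matrix.mul_smul, Matrix.smul_mul]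

/-- Net 1(a): `span{E₁₁+E₂₂, E₃₃, E₄₄}`, i.e. `Diag(x·1₂, y, z)`. -/
def net1a : Submodule ℂ (Mat 4) := Submodule.span ℂ
  {!![(1:ℂ),0,0,0;0,1,0,0;0,0,0,0;0,0,0,0],
   !![(0:ℂ),0,0,0;0,0,0,0;0,0,1,0;0,0,0,0],
   !![(0:ℂ),0,0,0;0,0,0,0;0,0,0,0;0,0,0,1]}

/-- Net 1(b): `{Diag(A, A) : A ∈ S²}`, the Kronecker product of `1₂` with `S²`. -/
def net1b : Submodule ℂ (Mat 4) := Submodule.span ℂ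
  {!![(1:ℂ),0,0,0;0,0,0,0;0,0,1,0;0,0,0,0],
   !![(0:ℂ),1,0,0;1,0,0,0;0,0,0,1;0,0,1,0],
   !![(0:ℂ),0,0,0;0,1,0,0;0,0,0,0;0,0,0,1]}

/-- Net 2(a1): `span{E₁₂+E₂₁, E₁₁, E₃₃+E₄₄}`. -/
def net2a1 : Submodule ℂ (Mat 4) := Submodule.span ℂ
  {!![(0:ℂ),1,0,0;1,0,0,0;0,0,0,0;0,0,0,0],
   !![(1:ℂ),0,0,0;0,0,0,0;0,0,0,0;0,0,0,0],
   !![(0:ℂ),0,0,0;0,0,0,0;0,0,1,0;0,0,0,1]}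

/-- Net 2(a2): `span{E₁₃+E₃₁+E₂₂, E₁₁, E₄₄}`. -/
def net2a2 : Submodule ℂ (Mat 4) := Submodule.span ℂ
  {!![(0:ℂ),0,1,0;0,1,0,0;1,0,0,0;0,0,0,0],
   !![(1:ℂ),0,0,0;0,0,0,0;0,0,0,0;0,0,0,0],
   !![(0:ℂ),0,0,0;0,0,0,0;0,0,0,0;0,0,0,1]}

/-- Net 2(b): `span{E₁₂+E₂₁, E₃₄+E₄₃, E₁₃+E₃₁}`. -/
def net2b : Submodule ℂ (Mat 4) := Submodule.span ℂ
  {!![(0:ℂ),1,0,0;1,0,0,0;0,0,0,0;0,0,0,0],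
   !![(0:ℂ),0,0,0;0,0,0,0;0,0,0,1;0,0,1,0],
   !![(0:ℂ),0,1,0;0,0,0,0;1,0,0,0;0,0,0,0]}

/-- Net 3(a): `span{E₁₃+E₃₁+E₂₂+E₄₄, E₁₂+E₂₁, E₁₁}`. -/
def net3a : Submodule ℂ (Mat 4) := Submodule.span ℂ
  {!![(0:ℂ),0,1,0;0,1,0,0;1,0,0,0;0,0,0,1],
   !![(0:ℂ),1,0,0;1,0,0,0;0,0,0,0;0,0,0,0],
   !![(1:ℂ),0,0,0;0,0,0,0;0,0,0,0;0,0,0,0]}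

/-- Net 3(b1): `span{J₄, E₁₁, E₂₂}`. -/
def net3b1 : Submodule ℂ (Mat 4) := Submodule.span ℂ
  {!![(0:ℂ),0,0,1;0,0,1,0;0,1,0,0;1,0,0,0],
   !![(1:ℂ),0,0,0;0,0,0,0;0,0,0,0;0,0,0,0],
   !![(0:ℂ),0,0,0;0,1,0,0;0,0,0,0;0,0,0,0]}

/-- Net 3(b2): `span{J₄, E₁₁, E₁₃+E₃₁}`. -/
def net3b2 : Submodule ℂ (Mat 4) := Submodule.span ℂ
  {!![(0:ℂ),0,0,1;0,0,1,0;0,1,0,0;1,0,0,0],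
   !![(1:ℂ),0,0,0;0,0,0,0;0,0,0,0;0,0,0,0],
   !![(0:ℂ),0,1,0;0,0,0,0;1,0,0,0;0,0,0,0]}

set_option linter.all false


/-- congruent to one of the eight nets -/
def Good (L : Submodule ℂ (Mat 4)) : Prop :=
    ∃ P : Mat 4, IsUnit P.det ∧
      (Submodule.map (congMap P) L = net1a ∨
       Submodule.map (congMap P) L = net1b ∨
       Submodule.map (congMap P) L = net2a1 ∨
       Submodule.map (congMap P) L = net2a2 ∨
       Submodule.map (congMap P) L = net2b ∨
       Submodule.map (congMap P) L = net3a ∨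
       Submodule.map (congMap P) L = net3b1 ∨
       Submodule.map (congMap P) L = net3b2)

lemma congMap_apply' {n : ℕ} (P X : Mat n) : congMap P X = P * X * Pᵀ := rfl

lemma congMap_comp (P R : Mat 4) (L : Submodule ℂ (Mat 4)) :
    Submodule.map (congMap P) (Submodule.map (congMap R) L) = Submodule.map (congMap (P * R)) L := by
  rw [← Submodule.map_comp]
  congr 1
  ext1 X
  simp [congMap_apply', Matrix.mul_assoc]

lemma good_of_map (R : Mat 4) (hR : IsUnit R.det) (L : Submodule ℂ (Mat 4))
    (h : Good (Submodule.map (congMap R) L)) : Good L := by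
  obtain ⟨P, hP, h⟩ := h
  refine ⟨P * R, by rw [det_mul]; exact hP.mul hR, ?_⟩
  simpa only [congMap_comp] using h

abbrev V4 := Fin 4 → ℂ
/-- rank one -/
abbrev T (a b : V4) : Mat 4 := vecMulVec a b
/-- symmetrised rank one -/
abbrev S (a b : V4) : Mat 4 := vecMulVec a b + vecMulVec b a

lemma map_eq_of (L : Submodule ℂ (Mat 4)) (hd : Module.finrank ℂ L = 3)
    (Q : Mat 4) (hQ : IsUnit Q.det) (N1 N2 N3 : Mat 4)
    (hli : ∀ a b c : ℂ, a • N1 + b • N2 + c • N3 = 0 → a = 0 ∧ b = 0 ∧ c = 0)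
    (h1 : Q * N1 * Qᵀ ∈ L) (h2 : Q * N2 * Qᵀ ∈ L) (h3 : Q * N3 * Qᵀ ∈ L) :
    Submodule.map (congMap Q⁻¹) L = Submodule.span ℂ {N1, N2, N3} := by
  have hLI : LinearIndependent ℂ ![N1, N2, N3] := by
    rw [Fintype.linearIndependent_iff]
    intro g hg
    simp only [Fin.sum_univ_three, Matrix.cons_val] at hg
    obtain ⟨ha, hb, hc⟩ := hli _ _ _ hg
    intro i
    fin_cases i <;> assumption
  have hr : Set.range ![N1, N2, N3] = {N1, N2, N3} := by
    simp only [Matrix.range_cons, Matrix.range_empty, Set.union_empty, Set.singleton_union]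
  have hf : Module.finrank ℂ (Submodule.span ℂ {N1, N2, N3}) = 3 := by
    rw [← hr, finrank_span_eq_card hLI]; simp
  have key : ∀ N : Mat 4, Q * N * Qᵀ ∈ L → N ∈ Submodule.map (congMap Q⁻¹) L := by
    intro N hN
    refine ⟨_, hN, ?_⟩
    rw [congMap_apply', Matrix.transpose_nonsing_inv]
    have hQ' : IsUnit Qᵀ.det := by rwa [det_transpose]
    rw [Matrix.mul_assoc, Matrix.mul_assoc (Q * N), Matrix.mul_nonsing_inv _ hQ', Matrix.mul_one,
      ← Matrix.mul_assoc, Matrix.nonsing_inv_mul _ hQ, Matrix.one_mul]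
  symm
  apply Submodule.eq_of_le_of_finrank_le
  · rw [Submodule.span_le]
    rintro N (rfl | rfl | rfl)
    · exact key _ h1
    · exact key _ h2
    · exact key _ h3
  · rw [hf, ← hd]
    exact Submodule.finrank_map_le _ _

/-- matrix with given columns -/
def cols (a b c d : V4) : Mat 4 := Matrix.of fun i j => ![a, b, c, d] j i

lemma inv_of (Q N : Mat 4) (h : Q * N * Qᵀ = 1) : IsUnit Q.det := by
  have := congrArg Matrix.det h
  rw [Matrix.mul_assoc, det_mul, det_one] at this
  exact IsUnit.of_mul_eq_one _ this

lemma cols_expand (a b c d : V4) (n00 n01 n02 n03 n10 n11 n12 n13 n20 n21 n22 n23 n30 n31 n32 n33 : ℂ) :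
    cols a b c d * !![n00, n01, n02, n03; n10, n11, n12, n13; n20, n21, n22, n23; n30, n31, n32, n33] * (cols a b c d)ᵀ =
      n00 • T a a + n01 • T a b + n02 • T a c + n03 • T a d
      + n10 • T b a + n11 • T b b + n12 • T b c + n13 • T b d
      + n20 • T c a + n21 • T c b + n22 • T c c + n23 • T c d
      + n30 • T d a + n31 • T d b + n32 • T d c + n33 • T d d := by
  ext i j
  simp [cols, Matrix.mul_apply, Fin.sum_univ_four, vecMulVec_apply]
  ring

lemma fin_gen (L : Submodule ℂ (Mat 4)) (hd : Module.finrank ℂ L = 3) (a b c d : V4)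
    (N0 N1 N2 N3 : Mat 4) (h0 : cols a b c d * N0 * (cols a b c d)ᵀ = 1)
    (hli : ∀ a b c : ℂ, a • N1 + b • N2 + c • N3 = 0 → a = 0 ∧ b = 0 ∧ c = 0)
    (h1 : cols a b c d * N1 * (cols a b c d)ᵀ ∈ L) (h2 : cols a b c d * N2 * (cols a b c d)ᵀ ∈ L)
    (h3 : cols a b c d * N3 * (cols a b c d)ᵀ ∈ L) :
    ∃ P : Mat 4, IsUnit P.det ∧ Submodule.map (congMap P) L = Submodule.span ℂ {N1, N2, N3} := by
  have h := inv_of _ _ h0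
  exact ⟨(cols a b c d)⁻¹, Matrix.isUnit_nonsing_inv_det _ h, map_eq_of L hd _ h _ _ _ hli h1 h2 h3⟩

lemma fin1a (L : Submodule ℂ (Mat 4)) (hd : Module.finrank ℂ L = 3) (a b c d : V4)
    (h : T a a + T b b + T c c + T d d = 1) (h1 : T a a + T b b ∈ L)
    (h2 : T c c ∈ L) (h3 : T d d ∈ L) : Good L := by
  suffices e : ∃ P : Mat 4, IsUnit P.det ∧ Submodule.map (congMap P) L = net1a by
    obtain ⟨P, hP, e⟩ := e
    exact ⟨P, hP, by tauto⟩
  refine fin_gen L hd a b c d !![1,0,0,0;0,1,0,0;0,0,1,0;0,0,0,1] _ _ _ ?_ ?_ ?_ ?_ ?_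
  · rw [cols_expand, ← h]; module
  · intro p q r h
    have e0 := congrFun (congrFun h 0) 0
    have e1 := congrFun (congrFun h 2) 2
    have e2 := congrFun (congrFun h 3) 3
    simp at e0 e1 e2
    exact ⟨e0, e1, e2⟩
  · rw [cols_expand]; convert h1 using 1; module
  · rw [cols_expand]; convert h2 using 1; module
  · rw [cols_expand]; convert h3 using 1; module

lemma fin1b (L : Submodule ℂ (Mat 4)) (hd : Module.finrank ℂ L = 3) (a b c d : V4)
    (h : T a a + T b b + T c c + T d d = 1) (h1 : T a a + T c c ∈ L)
    (h2 : S a b + S c d ∈ L) (h3 : T b b + T d d ∈ L) : Good L := by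
  suffices e : ∃ P : Mat 4, IsUnit P.det ∧ Submodule.map (congMap P) L = net1b by
    obtain ⟨P, hP, e⟩ := e
    exact ⟨P, hP, by tauto⟩
  refine fin_gen L hd a b c d !![1,0,0,0;0,1,0,0;0,0,1,0;0,0,0,1] _ _ _ ?_ ?_ ?_ ?_ ?_
  · rw [cols_expand, ← h]; module
  · intro p q r h
    have e0 := congrFun (congrFun h 0) 0
    have e1 := congrFun (congrFun h 0) 1
    have e2 := congrFun (congrFun h 1) 1
    simp at e0 e1 e2
    exact ⟨e0, e1, e2⟩
  · rw [cols_expand]; convert h1 using 1; module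
  · rw [cols_expand]; convert h2 using 1; module
  · rw [cols_expand]; convert h3 using 1; module

lemma fin2a1 (L : Submodule ℂ (Mat 4)) (hd : Module.finrank ℂ L = 3) (a b c d : V4)
    (h : S a b + T c c + T d d = 1) (h1 : S a b ∈ L)
    (h2 : T a a ∈ L) (h3 : T c c + T d d ∈ L) : Good L := by
  suffices e : ∃ P : Mat 4, IsUnit P.det ∧ Submodule.map (congMap P) L = net2a1 by
    obtain ⟨P, hP, e⟩ := e
    exact ⟨P, hP, by tauto⟩
  refine fin_gen L hd a b c d !![0,1,0,0;1,0,0,0;0,0,1,0;0,0,0,1] _ _ _ ?_ ?_ ?_ ?_ ?_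
  · rw [cols_expand, ← h]; module
  · intro p q r h
    have e0 := congrFun (congrFun h 0) 1
    have e1 := congrFun (congrFun h 0) 0
    have e2 := congrFun (congrFun h 2) 2
    simp at e0 e1 e2
    exact ⟨e0, e1, e2⟩
  · rw [cols_expand]; convert h1 using 1; module
  · rw [cols_expand]; convert h2 using 1; module
  · rw [cols_expand]; convert h3 using 1; module

lemma fin2a2 (L : Submodule ℂ (Mat 4)) (hd : Module.finrank ℂ L = 3) (a b c d : V4)
    (h : S a c + T b b + T d d = 1) (h1 : S a c + T b b ∈ L)
    (h2 : T a a ∈ L) (h3 : T d d ∈ L) : Good L := by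
  suffices e : ∃ P : Mat 4, IsUnit P.det ∧ Submodule.map (congMap P) L = net2a2 by
    obtain ⟨P, hP, e⟩ := e
    exact ⟨P, hP, by tauto⟩
  refine fin_gen L hd a b c d !![0,0,1,0;0,1,0,0;1,0,0,0;0,0,0,1] _ _ _ ?_ ?_ ?_ ?_ ?_
  · rw [cols_expand, ← h]; module
  · intro p q r h
    have e0 := congrFun (congrFun h 0) 2
    have e1 := congrFun (congrFun h 0) 0
    have e2 := congrFun (congrFun h 3) 3
    simp at e0 e1 e2
    exact ⟨e0, e1, e2⟩
  · rw [cols_expand]; convert h1 using 1; module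
  · rw [cols_expand]; convert h2 using 1; module
  · rw [cols_expand]; convert h3 using 1; module

lemma fin2b (L : Submodule ℂ (Mat 4)) (hd : Module.finrank ℂ L = 3) (a b c d : V4)
    (h : S a b + S c d = 1) (h1 : S a b ∈ L)
    (h2 : S c d ∈ L) (h3 : S a c ∈ L) : Good L := by
  suffices e : ∃ P : Mat 4, IsUnit P.det ∧ Submodule.map (congMap P) L = net2b by
    obtain ⟨P, hP, e⟩ := e
    exact ⟨P, hP, by tauto⟩
  refine fin_gen L hd a b c d !![0,1,0,0;1,0,0,0;0,0,0,1;0,0,1,0] _ _ _ ?_ ?_ ?_ ?_ ?_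
  · rw [cols_expand, ← h]; module
  · intro p q r h
    have e0 := congrFun (congrFun h 0) 1
    have e1 := congrFun (congrFun h 2) 3
    have e2 := congrFun (congrFun h 0) 2
    simp at e0 e1 e2
    exact ⟨e0, e1, e2⟩
  · rw [cols_expand]; convert h1 using 1; module
  · rw [cols_expand]; convert h2 using 1; module
  · rw [cols_expand]; convert h3 using 1; module

lemma fin3a (L : Submodule ℂ (Mat 4)) (hd : Module.finrank ℂ L = 3) (a b c d : V4)
    (h : S a c + T b b + T d d = 1) (h1 : S a c + T b b + T d d ∈ L)
    (h2 : S a b ∈ L) (h3 : T a a ∈ L) : Good L := by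
  suffices e : ∃ P : Mat 4, IsUnit P.det ∧ Submodule.map (congMap P) L = net3a by
    obtain ⟨P, hP, e⟩ := e
    exact ⟨P, hP, by tauto⟩
  refine fin_gen L hd a b c d !![0,0,1,0;0,1,0,0;1,0,0,0;0,0,0,1] _ _ _ ?_ ?_ ?_ ?_ ?_
  · rw [cols_expand, ← h]; module
  · intro p q r h
    have e0 := congrFun (congrFun h 0) 2
    have e1 := congrFun (congrFun h 0) 1
    have e2 := congrFun (congrFun h 0) 0
    simp at e0 e1 e2
    exact ⟨e0, e1, e2⟩
  · rw [cols_expand]; convert h1 using 1; module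
  · rw [cols_expand]; convert h2 using 1; module
  · rw [cols_expand]; convert h3 using 1; module

lemma fin3b1 (L : Submodule ℂ (Mat 4)) (hd : Module.finrank ℂ L = 3) (a b c d : V4)
    (h : S a d + S b c = 1) (h1 : S a d + S b c ∈ L)
    (h2 : T a a ∈ L) (h3 : T b b ∈ L) : Good L := by
  suffices e : ∃ P : Mat 4, IsUnit P.det ∧ Submodule.map (congMap P) L = net3b1 by
    obtain ⟨P, hP, e⟩ := e
    exact ⟨P, hP, by tauto⟩
  refine fin_gen L hd a b c d !![0,0,0,1;0,0,1,0;0,1,0,0;1,0,0,0] _ _ _ ?_ ?_ ?_ ?_ ?_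
  · rw [cols_expand, ← h]; module
  · intro p q r h
    have e0 := congrFun (congrFun h 0) 3
    have e1 := congrFun (congrFun h 0) 0
    have e2 := congrFun (congrFun h 1) 1
    simp at e0 e1 e2
    exact ⟨e0, e1, e2⟩
  · rw [cols_expand]; convert h1 using 1; module
  · rw [cols_expand]; convert h2 using 1; module
  · rw [cols_expand]; convert h3 using 1; module

lemma fin3b2 (L : Submodule ℂ (Mat 4)) (hd : Module.finrank ℂ L = 3) (a b c d : V4)
    (h : S a d + S b c = 1) (h1 : S a d + S b c ∈ L)
    (h2 : T a a ∈ L) (h3 : S a c ∈ L) : Good L := by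
  suffices e : ∃ P : Mat 4, IsUnit P.det ∧ Submodule.map (congMap P) L = net3b2 by
    obtain ⟨P, hP, e⟩ := e
    exact ⟨P, hP, by tauto⟩
  refine fin_gen L hd a b c d !![0,0,0,1;0,0,1,0;0,1,0,0;1,0,0,0] _ _ _ ?_ ?_ ?_ ?_ ?_
  · rw [cols_expand, ← h]; module
  · intro p q r h
    have e0 := congrFun (congrFun h 0) 3
    have e1 := congrFun (congrFun h 0) 0
    have e2 := congrFun (congrFun h 0) 2
    simp at e0 e1 e2
    exact ⟨e0, e1, e2⟩
  · rw [cols_expand]; convert h1 using 1; module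
  · rw [cols_expand]; convert h2 using 1; module
  · rw [cols_expand]; convert h3 using 1; module



lemma exists_sqrt (U : Mat 4) (hs : Uᵀ = U) (hU : IsUnit U.det) :
    ∃ Q : Mat 4, Q * Qᵀ = U := by
  let B : V4 →ₗ[ℂ] V4 →ₗ[ℂ] ℂ := Matrix.toLinearMap₂' ℂ U
  have hB : B.SeparatingLeft := by
    rw [LinearMap.separatingLeft_toLinearMap₂'_iff_det_ne_zero]
    exact hU.ne_zero
  let q : QuadraticForm ℂ V4 := LinearMap.BilinMap.toQuadraticMap B
  have hsymm : LinearMap.IsSymm B := by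
    constructor
    intro x y
    simp only [B, Matrix.toLinearMap₂'_apply', RingHom.id_apply]
    rw [Matrix.dotProduct_mulVec, ← Matrix.mulVec_transpose, hs, dotProduct_comm]
  have hq : QuadraticMap.associated (R := ℂ) q = B := by
    apply QuadraticMap.associated_left_inverse
    exact fun x y => hsymm.eq x y
  obtain ⟨e⟩ := QuadraticForm.equivalent_weightedSumSquares_of_isAlgClosed q (hq ▸ hB)
  have key : ∀ n : ℕ, n = 4 → ∀ f : V4 →ₗ[ℂ] (Fin n → ℂ),
      (∀ x, q x = ∑ i, f x i * f x i) → ∃ Q : Mat 4, Q * Qᵀ = U := by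
    rintro n rfl f hf
    have hpol : ∀ x y, x ⬝ᵥ U *ᵥ y = ∑ i, f x i * f y i := by
      intro x y
      have h1 := hf (x + y)
      have h2 := hf x
      have h3 := hf y
      have h4 := hsymm.eq x y
      simp only [q, LinearMap.BilinMap.toQuadraticMap_apply, map_add, LinearMap.add_apply, RingHom.id_apply] at h1 h2 h3 h4
      rw [h2, h3, h4] at h1
      simp only [B, Matrix.toLinearMap₂'_apply'] at h1 h4
      rw [← h4] at h1
      simp only [Fin.sum_univ_four, Pi.add_apply] at h1 ⊢
      linear_combination h1 / 2
    refine ⟨(LinearMap.toMatrix' f)ᵀ, ?_⟩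
    ext i j
    have := hpol (Pi.single i 1) (Pi.single j 1)
    simp at this
    rw [this]
    simp [Matrix.mul_apply, LinearMap.toMatrix'_apply]
  refine key _ (by simp) e.toLinearEquiv.toLinearMap ?_
  intro x
  have := e.map_app x
  rw [QuadraticMap.weightedSumSquares_apply] at this
  rw [← this]
  simp

/-- symmetric idempotent -/
structure SI (g : Mat 4) : Prop where
  sym : gᵀ = g
  idem : g * g = g

lemma dsym {X : Mat 4} (h : Xᵀ = X) (a b : V4) : a ⬝ᵥ X *ᵥ b = (X *ᵥ a) ⬝ᵥ b := by
  rw [Matrix.dotProduct_mulVec, ← Matrix.mulVec_transpose, h]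

lemma Tmul {X : Mat 4} (h : Xᵀ = X) (a b : V4) : vecMulVec a b * X = vecMulVec a (X *ᵥ b) := by
  rw [vecMulVec_mul, ← Matrix.mulVec_transpose, h]

lemma TT (a b c d : V4) : vecMulVec a b * vecMulVec c d = (b ⬝ᵥ c) • vecMulVec a d := by
  rw [vecMulVec_mul_vecMulVec, vecMulVec_smul]

lemma Tapp (a b c : V4) : vecMulVec a b *ᵥ c = (b ⬝ᵥ c) • a := by
  rw [vecMulVec_mulVec]; ext i; simp [mul_comm]

lemma Ttr (a b : V4) : (vecMulVec a b)ᵀ = vecMulVec b a := by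
  rw [transpose_vecMulVec]

lemma Ttrace (a b : V4) : (vecMulVec a b).trace = a ⬝ᵥ b := trace_vecMulVec a b

lemma SI.trace_nat {g : Mat 4} (h : SI g) : ∃ n : ℕ, g.trace = n ∧ (n = 0 → g = 0) := by
  have hi : IsIdempotentElem (Matrix.toLin' g) := by
    rw [IsIdempotentElem, Module.End.mul_eq_comp, ← Matrix.toLin'_mul, h.idem]
  have := (LinearMap.isProj_range_iff_isIdempotentElem _).2 hi |>.trace
  rw [Matrix.trace_toLin'_eq] at this
  refine ⟨_, this, fun h0 => ?_⟩
  rw [h0, ← Matrix.trace_toLin'_eq] at this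
  have := (LinearMap.IsIdempotentElem.trace_eq_zero_iff hi).1 (by simpa using this)
  simpa using this

lemma SI.compl {g : Mat 4} (h : SI g) : SI (1 - g) := by
  constructor
  · simp [h.sym]
  · rw [mul_sub, sub_mul, sub_mul, h.idem]; simp

/-- a nonzero symmetric matrix has a non isotropic vector -/
lemma exists_aniso {g : Mat 4} (h : gᵀ = g) (h0 : g ≠ 0) : ∃ p, p ⬝ᵥ g *ᵥ p ≠ 0 := by
  by_contra! hc
  apply h0
  have : ∀ a b, a ⬝ᵥ g *ᵥ b = 0 := by
    intro a b
    have h1 := hc (a + b)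
    rw [mulVec_add, add_dotProduct, dotProduct_add, dotProduct_add, hc, hc, dsym h b a,
      dotProduct_comm (g *ᵥ b)] at h1
    linear_combination h1 / 2
  ext i j
  simpa using this (Pi.single i 1) (Pi.single j 1)

lemma SI.exists_unit {g : Mat 4} (h : SI g) (h0 : g ≠ 0) :
    ∃ u, u ⬝ᵥ u = 1 ∧ g *ᵥ u = u := by
  obtain ⟨p, hp⟩ := exists_aniso h.sym h0
  obtain ⟨s, hs⟩ := IsAlgClosed.exists_pow_nat_eq (p ⬝ᵥ g *ᵥ p) (n := 2) (by norm_num)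
  have hs0 : s ≠ 0 := by rintro rfl; apply hp; rw [← hs]; simp
  have hg : (g *ᵥ p) ⬝ᵥ (g *ᵥ p) = p ⬝ᵥ g *ᵥ p := by
    rw [← dsym h.sym, mulVec_mulVec, h.idem]
  refine ⟨s⁻¹ • (g *ᵥ p), ?_, ?_⟩
  · simp only [smul_dotProduct, dotProduct_smul, hg, ← hs, smul_eq_mul]
    field_simp
  · rw [mulVec_smul, mulVec_mulVec, h.idem]

lemma SI.sub {g : Mat 4} (h : SI g) {u : V4} (hu : u ⬝ᵥ u = 1) (hg : g *ᵥ u = u) :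
    SI (g - T u u) := by
  constructor
  · simp [h.sym, Ttr]
  · simp only [mul_sub, sub_mul, h.idem, T, Tmul h.sym, mul_vecMulVec, Tapp, smul_vecMulVec, hg, hu]
    module

lemma SI.fac1 {g : Mat 4} (h : SI g) (ht : g.trace = 1) : ∃ u, u ⬝ᵥ u = 1 ∧ g = T u u := by
  obtain ⟨u, hu, hg⟩ := h.exists_unit (by rintro rfl; simp at ht)
  refine ⟨u, hu, ?_⟩
  obtain ⟨n, hn, hn0⟩ := (h.sub hu hg).trace_nat
  rw [trace_sub, Ttrace, ht, hu] at hn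
  exact sub_eq_zero.1 (hn0 (by exact_mod_cast (by simpa using hn.symm)))

lemma SI.fac2 {g : Mat 4} (h : SI g) (ht : g.trace = 2) : ∃ u v, u ⬝ᵥ u = 1 ∧ v ⬝ᵥ v = 1 ∧ g = T u u + T v v := by
  obtain ⟨u, hu, hg⟩ := h.exists_unit (by rintro rfl; simp at ht)
  obtain ⟨v, hv, e⟩ := (h.sub hu hg).fac1 (by rw [trace_sub, Ttrace, ht, hu]; norm_num)
  refine ⟨u, v, hu, hv, ?_⟩
  rw [← e]; abel

/-- hyperbolic partner -/
lemma hyp {f : Mat 4} (h : SI f) {v : V4} (hv : v ≠ 0) (hvv : v ⬝ᵥ v = 0) (hf : f *ᵥ v = 0) :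
    ∃ w, v ⬝ᵥ w = 1 ∧ w ⬝ᵥ w = 0 ∧ f *ᵥ w = 0 ∧ SI (1 - f - S v w) := by
  obtain ⟨z, hz⟩ : ∃ z, v ⬝ᵥ z ≠ 0 := by
    by_contra! hc
    exact hv (dotProduct_eq_zero _ hc)
  let w0 := (v ⬝ᵥ z)⁻¹ • (z - f *ᵥ z)
  have h1 : v ⬝ᵥ w0 = 1 := by
    simp only [w0, dotProduct_smul, dotProduct_sub, dsym h.sym, hf, zero_dotProduct, smul_eq_mul]
    field_simp; simp
  have h2 : f *ᵥ w0 = 0 := by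
    simp only [w0, mulVec_smul, mulVec_sub, mulVec_mulVec, h.idem]; simp
  let w := w0 - (w0 ⬝ᵥ w0 / 2) • v
  have e1 : v ⬝ᵥ w = 1 := by simp [w, h1, hvv]
  have e2 : w ⬝ᵥ w = 0 := by
    simp only [w, dotProduct_sub, sub_dotProduct, dotProduct_smul, smul_dotProduct, dotProduct_comm w0 v, h1, hvv, smul_eq_mul]
    ring
  have e3 : f *ᵥ w = 0 := by simp [w, mulVec_sub, mulVec_smul, h2, hf]
  have e4 : w ⬝ᵥ v = 1 := by rw [dotProduct_comm, e1]
  refine ⟨w, e1, e2, e3, ?_, ?_⟩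
  · simp only [transpose_sub, transpose_add, S, Ttr, h.sym, transpose_one]; abel
  · simp only [mul_sub, sub_mul, mul_add, add_mul, h.idem, S, Tmul h.sym, mul_vecMulVec, Tapp, smul_vecMulVec, hf, e1, e2, e3, e4, hvv, mul_one, one_mul]
    simp


lemma case1a (L : Submodule ℂ (Mat 4)) (hd : Module.finrank ℂ L = 3) (e1 e2 e3 : Mat 4)
    (h1 : SI e1) (h2 : SI e2) (h3 : SI e3) (m1 : e1 ∈ L) (m2 : e2 ∈ L) (m3 : e3 ∈ L)
    (n1 : e1 ≠ 0) (n2 : e2 ≠ 0) (n3 : e3 ≠ 0) (hs : e1 + e2 + e3 = 1) : Good L := by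
  obtain ⟨u1, hu1, hg1⟩ := h1.exists_unit n1
  obtain ⟨u2, hu2, hg2⟩ := h2.exists_unit n2
  obtain ⟨u3, hu3, hg3⟩ := h3.exists_unit n3
  obtain ⟨k1, t1, z1⟩ := (h1.sub hu1 hg1).trace_nat
  obtain ⟨k2, t2, z2⟩ := (h2.sub hu2 hg2).trace_nat
  obtain ⟨k3, t3, z3⟩ := (h3.sub hu3 hg3).trace_nat
  have ht : k1 + k2 + k3 = 1 := by
    have := congrArg Matrix.trace hs
    rw [trace_sub, Ttrace] at t1 t2 t3
    rw [trace_add, trace_add, trace_one] at this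
    have : (k1 + k2 + k3 : ℂ) = 1 := by
      rw [← t1, ← t2, ← t3, hu1, hu2, hu3]
      simp at this
      linear_combination this
    exact_mod_cast this
  have : (k1 = 1 ∧ k2 = 0 ∧ k3 = 0) ∨ (k1 = 0 ∧ k2 = 1 ∧ k3 = 0) ∨ (k1 = 0 ∧ k2 = 0 ∧ k3 = 1) := by
    omega
  rcases this with ⟨rfl, rfl, rfl⟩ | ⟨rfl, rfl, rfl⟩ | ⟨rfl, rfl, rfl⟩
  · obtain ⟨u4, -, e4⟩ := (h1.sub hu1 hg1).fac1 (by simpa using t1)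
    have z2 := sub_eq_zero.1 (z2 rfl)
    have z3 := sub_eq_zero.1 (z3 rfl)
    have z1 : e1 = T u1 u1 + T u4 u4 := by rw [← e4]; abel
    exact fin1a L hd u1 u4 u2 u3 (by rw [← z1, ← z2, ← z3, hs]) (z1 ▸ m1) (z2 ▸ m2) (z3 ▸ m3)
  · obtain ⟨u4, -, e4⟩ := (h2.sub hu2 hg2).fac1 (by simpa using t2)
    have z1 := sub_eq_zero.1 (z1 rfl)
    have z3 := sub_eq_zero.1 (z3 rfl)
    have z2 : e2 = T u2 u2 + T u4 u4 := by rw [← e4]; abel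
    exact fin1a L hd u2 u4 u1 u3 (by rw [← z1, ← z2, ← z3, ← hs]; abel) (z2 ▸ m2) (z1 ▸ m1) (z3 ▸ m3)
  · obtain ⟨u4, -, e4⟩ := (h3.sub hu3 hg3).fac1 (by simpa using t3)
    have z1 := sub_eq_zero.1 (z1 rfl)
    have z2 := sub_eq_zero.1 (z2 rfl)
    have z3 : e3 = T u3 u3 + T u4 u4 := by rw [← e4]; abel
    exact fin1a L hd u3 u4 u1 u2 (by rw [← z1, ← z2, ← z3, ← hs]; abel) (z3 ▸ m3) (z1 ▸ m1) (z2 ▸ m2)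

lemma case1b (L : Submodule ℂ (Mat 4)) (hd : Module.finrank ℂ L = 3) (h1 : 1 ∈ L) (e r : Mat 4)
    (he : SI e) (hr : rᵀ = r) (hrr : r * r = 1) (her : e * r + r * e = r)
    (me : e ∈ L) (mr : r ∈ L) : Good L := by
  have hrer : r * e * r = 1 - e := by
    have : r * e = r - e * r := by rw [← her]; abel_nf; simp [her]
    rw [this, sub_mul, hrr, mul_assoc, hrr, mul_one]
  have ht : e.trace = 2 := by
    have := congrArg Matrix.trace hrer
    rw [trace_mul_cycle, hrr, one_mul, trace_sub, trace_one] at this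
    simp at this
    linear_combination this / 2
  obtain ⟨u, v, -, -, e2⟩ := he.fac2 ht
  have h3 : T (r *ᵥ u) (r *ᵥ u) + T (r *ᵥ v) (r *ᵥ v) = 1 - e := by
    rw [← hrer, e2]
    simp only [mul_add, add_mul, T, Tmul hr, mul_vecMulVec]
  have h4 : S u (r *ᵥ u) + S v (r *ᵥ v) = r := by
    conv_rhs => rw [← her, e2]
    simp only [mul_add, add_mul, T, S, Tmul hr, mul_vecMulVec]
    abel
  refine fin1b L hd u (r *ᵥ u) v (r *ᵥ v) ?_ ?_ ?_ ?_
  · have : T u u + T (r *ᵥ u) (r *ᵥ u) + T v v + T (r *ᵥ v) (r *ᵥ v) = (T u u + T v v) + (T (r *ᵥ u) (r *ᵥ u) + T (r *ᵥ v) (r *ᵥ v)) := by abel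
    rw [this, h3, ← e2]; abel
  · rw [← e2]; exact me
  · rw [h4]; exact mr
  · rw [h3]; exact L.sub_mem h1 me

lemma ne_mulVec {X : Mat 4} (h : X ≠ 0) : ∃ p, X *ᵥ p ≠ 0 := by
  by_contra! hc
  apply h
  ext i j
  have := congrFun (hc (Pi.single j 1)) i
  simpa using this

lemma trace_one4 : (1 : Mat 4).trace = 4 := by simp

lemma case2a (L : Submodule ℂ (Mat 4)) (hd : Module.finrank ℂ L = 3) (h1 : 1 ∈ L) (f n : Mat 4)
    (hf : SI f) (hn : nᵀ = n) (hnn : n * n = 0) (hfn : f * n = 0) (n0 : n ≠ 0) (f0 : f ≠ 0)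
    (mf : f ∈ L) (mn : n ∈ L) : Good L := by
  obtain ⟨p, hp⟩ := ne_mulVec n0
  obtain ⟨v, hv⟩ : ∃ v, v = n *ᵥ p := ⟨_, rfl⟩
  rw [← hv] at hp
  have nv : n *ᵥ v = 0 := by rw [hv, mulVec_mulVec, hnn]; simp
  have vv : v ⬝ᵥ v = 0 := by
    have := dsym hn v p
    rw [← hv, nv] at this
    simpa using this
  have fv : f *ᵥ v = 0 := by rw [hv, mulVec_mulVec, hfn]; simp
  have hnf : n * f = 0 := by
    have := congrArg Matrix.transpose hfn
    simpa [hn, hf.sym] using this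
  obtain ⟨w, vw, ww, fw, hg⟩ := hyp hf hp vv fv
  have wv : w ⬝ᵥ v = 1 := by rw [dotProduct_comm, vw]
  obtain ⟨k, tk, zk⟩ := hf.trace_nat
  obtain ⟨l, tl, zl⟩ := hg.trace_nat
  have hk : k ≠ 0 := fun h => f0 (zk h)
  have hkl : k + l = 2 := by
    simp only [trace_sub, trace_add, S, Ttrace, vw, wv, tk, trace_one4] at tl
    have : (k + l : ℂ) = 2 := by rw [← tl]; ring
    exact_mod_cast this
  have : (k = 1 ∧ l = 1) ∨ (k = 2 ∧ l = 0) := by omega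
  have vnw : v ⬝ᵥ n *ᵥ w = 0 := by rw [dsym hn, nv]; simp
  have fnz : ∀ z, f *ᵥ n *ᵥ z = 0 := by intro z; rw [mulVec_mulVec, hfn]; simp
  have nn : ∀ z z', (n *ᵥ z) ⬝ᵥ (n *ᵥ z') = 0 := by
    intro z z'; rw [← dsym hn, mulVec_mulVec, hnn]; simp
  rcases this with ⟨rfl, rfl⟩ | ⟨rfl, rfl⟩
  · obtain ⟨d, dd, e1⟩ := hf.fac1 (by simpa using tk)
    obtain ⟨u, uu, e2⟩ := hg.fac1 (by simpa using tl)
    have h1' : (1 : Mat 4) = f + S v w + T u u := by rw [← e2]; abel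
    have ex : ∀ z, n *ᵥ z = (w ⬝ᵥ n *ᵥ z) • v + (u ⬝ᵥ n *ᵥ z) • u := by
      intro z
      have := congrArg (fun X => X *ᵥ (n *ᵥ z)) h1'
      simp only [one_mulVec, add_mulVec, S, Tapp, fnz, dsym hn v, nv] at this
      refine this.trans ?_
      simp
    have uv : u ⬝ᵥ v = 0 := by
      have := congrArg (fun X => u ⬝ᵥ X *ᵥ v) e2
      simpa only [sub_mulVec, add_mulVec, one_mulVec, S, T, Tapp, fv, vv, wv, dotProduct_sub, dotProduct_add,
        dotProduct_smul, smul_eq_mul, one_mul, zero_mul, dotProduct_zero, sub_zero, add_zero, sub_self, uu, mul_one,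
        eq_comm] using this
    have vu : v ⬝ᵥ u = 0 := by rw [dotProduct_comm, uv]
    have c0 : u ⬝ᵥ n *ᵥ u = 0 := by
      have := nn u u
      rw [ex u] at this
      simpa [vv, uv, vu, uu] using this
    have b0 : u ⬝ᵥ n *ᵥ w = 0 := by
      have := nn w w
      rw [ex w] at this
      simpa [vv, uv, vu, uu] using this
    have nu : n *ᵥ u = 0 := by
      rw [ex u, c0, dsym hn, dotProduct_comm, b0]; simp
    have nw := ex w
    rw [b0, zero_smul, add_zero] at nw
    obtain ⟨a, ha⟩ : ∃ a, a = w ⬝ᵥ n *ᵥ w := ⟨_, rfl⟩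
    rw [← ha] at nw
    have hn1 : n = a • T v v := by
      have := congrArg (fun X => n * X) h1'
      simp only [mul_one, mul_add, hnf, S, mul_vecMulVec, nv, nw, nu, smul_vecMulVec] at this
      simpa using this
    have a0 : a ≠ 0 := by rintro rfl; apply n0; simpa using hn1
    have hT : T v v ∈ L := by
      have := L.smul_mem a⁻¹ mn
      rwa [hn1, smul_smul, inv_mul_cancel₀ a0, one_smul] at this
    refine fin2a2 L hd v u w d ?_ ?_ hT (e1 ▸ mf)
    · rw [h1', e1]; abel
    · have : S v w + T u u = 1 - f := by rw [h1']; abel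
      rw [this]; exact L.sub_mem h1 mf
  · obtain ⟨c, d, -, -, e1⟩ := hf.fac2 (by simpa using tk)
    have e2 := zl rfl
    have h1' : (1 : Mat 4) = f + S v w := by rw [sub_eq_zero] at e2; rw [← e2]; abel
    have ex : ∀ z, n *ᵥ z = (w ⬝ᵥ n *ᵥ z) • v := by
      intro z
      have := congrArg (fun X => X *ᵥ (n *ᵥ z)) h1'
      simp only [one_mulVec, add_mulVec, S, Tapp, fnz, dsym hn v, nv] at this
      refine this.trans ?_
      simp
    have nw := ex w
    obtain ⟨a, ha⟩ : ∃ a, a = w ⬝ᵥ n *ᵥ w := ⟨_, rfl⟩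
    rw [← ha] at nw
    have hn1 : n = a • T v v := by
      have := congrArg (fun X => n * X) h1'
      simp only [mul_one, mul_add, hnf, S, mul_vecMulVec, nv, nw, smul_vecMulVec] at this
      simpa using this
    have a0 : a ≠ 0 := by rintro rfl; apply n0; simpa using hn1
    have hT : T v v ∈ L := by
      have := L.smul_mem a⁻¹ mn
      rwa [hn1, smul_smul, inv_mul_cancel₀ a0, one_smul] at this
    refine fin2a1 L hd v w c d ?_ ?_ hT (e1 ▸ mf)
    · rw [h1', e1]; abel
    · have : S v w = 1 - f := by rw [h1']; abel
      rw [this]; exact L.sub_mem h1 mf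

lemma pre2b {e y : Mat 4} (he : SI e) (hy : yᵀ = y) (hyy : y * y = 0) (hey : e * y + y * e = y)
    (y0 : y ≠ 0) : ∃ v w : V4, v ⬝ᵥ w = 1 ∧ w ⬝ᵥ w = 0 ∧ y *ᵥ v = 0 ∧ e *ᵥ w = w ∧
      ∃ n : ℕ, e.trace = n + 2 ∧ (n = 0 → e = S v w) := by
  have ey0 : e * y ≠ 0 := by
    intro h
    have := congrArg Matrix.transpose h
    simp [hy, he.sym] at this
    rw [h, this] at hey
    exact y0 (by simpa using hey.symm)
  have hye : y * e = y - e * y := by rw [eq_sub_iff_add_eq, add_comm, hey]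
  have yey : y * e * y = 0 := by rw [hye, sub_mul, mul_assoc, hyy]; simp
  obtain ⟨p, hp⟩ := ne_mulVec ey0
  obtain ⟨v, hv⟩ : ∃ v, v = (e * y) *ᵥ p := ⟨_, rfl⟩
  rw [← hv] at hp
  have yv : y *ᵥ v = 0 := by rw [hv, mulVec_mulVec, ← mul_assoc, yey]; simp
  have ev : e *ᵥ v = v := by rw [hv, mulVec_mulVec, ← mul_assoc, he.idem]
  have vv : v ⬝ᵥ v = 0 := by
    have : v ⬝ᵥ (e *ᵥ (y *ᵥ p)) = 0 := by rw [dsym he.sym, ev, dsym hy, yv]; simp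
    rwa [mulVec_mulVec, ← hv] at this
  obtain ⟨w, vw, ww, fw, hg⟩ := hyp he.compl hp vv (by rw [sub_mulVec, ev]; simp)
  have wv : w ⬝ᵥ v = 1 := by rw [dotProduct_comm, vw]
  obtain ⟨n, tn, zn⟩ := hg.trace_nat
  rw [sub_sub_cancel] at tn zn
  refine ⟨v, w, vw, ww, yv, ?_, n, ?_, fun h => sub_eq_zero.1 (zn h)⟩
  · rw [sub_mulVec, one_mulVec, sub_eq_zero] at fw; exact fw.symm
  · simp only [trace_sub, trace_add, S, Ttrace, vw, wv] at tn
    rw [← tn]; ring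

lemma case2b (L : Submodule ℂ (Mat 4)) (hd : Module.finrank ℂ L = 3) (h1 : 1 ∈ L) (e y : Mat 4)
    (he : SI e) (hy : yᵀ = y) (hyy : y * y = 0) (hey : e * y + y * e = y) (y0 : y ≠ 0)
    (me : e ∈ L) (my : y ∈ L) : Good L := by
  obtain ⟨v, w, vw, ww, yv, ew, n, tn, zn⟩ := pre2b he hy hyy hey y0
  obtain ⟨-, -, -, -, -, -, n', tn', -⟩ := pre2b he.compl hy hyy (by
    rw [mul_sub, sub_mul]
    have : 1 * y - e * y + (y * 1 - y * e) = y + y - (e * y + y * e) := by rw [one_mul, mul_one]; abel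
    rw [this, hey]; simp) y0
  have hn : n + n' = 0 := by
    rw [trace_sub, trace_one4, tn] at tn'
    have : (n + n' : ℂ) = 0 := by linear_combination - tn'
    exact_mod_cast this
  have hn0 : n = 0 := by omega
  subst hn0
  have e1 := zn rfl
  obtain ⟨u, hu⟩ : ∃ u, u = y *ᵥ w := ⟨_, rfl⟩
  have hye : y * e = T u v := by
    rw [e1]; simp only [S, T, mul_add, mul_vecMulVec, yv, hu]; simp
  have hey' : e * y = T v u := by
    have := congrArg Matrix.transpose hye
    simpa [hy, he.sym] using this
  have hu0 : u ≠ 0 := by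
    rintro rfl
    rw [hye, hey'] at hey
    apply y0
    simpa using hey.symm
  have yu : y *ᵥ u = 0 := by rw [hu, mulVec_mulVec, hyy]; simp
  have uu : u ⬝ᵥ u = 0 := by
    have := dsym hy u w
    rw [← hu, yu] at this
    simpa using this
  have eu : e *ᵥ u = 0 := by
    have : e * y = y - y * e := by rw [eq_sub_iff_add_eq, hey]
    rw [hu, mulVec_mulVec, this, sub_mulVec, ← mulVec_mulVec, ew]; simp
  obtain ⟨u', uu', _, _, hg⟩ := hyp he hu0 uu eu
  have uu'' : u' ⬝ᵥ u = 1 := by rw [dotProduct_comm, uu']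
  obtain ⟨k, tk, zk⟩ := hg.trace_nat
  have hk : k = 0 := by
    simp only [trace_sub, trace_add, S, Ttrace, uu', uu'', trace_one4, tn] at tk
    have : (k : ℂ) = 0 := by rw [← tk]; norm_num
    exact_mod_cast this
  have e2 := sub_eq_zero.1 (zk hk)
  refine fin2b L hd v w u u' ?_ (e1 ▸ me) (e2 ▸ L.sub_mem h1 me) ?_
  · rw [← e2, ← e1]; abel
  · have : S v u = y := by rw [S, ← hey, hye, hey']
    rw [this]; exact my

lemma case3a (L : Submodule ℂ (Mat 4)) (hd : Module.finrank ℂ L = 3) (h1 : 1 ∈ L) (x : Mat 4)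
    (hx : xᵀ = x) (hx3 : x * x * x = 0) (hx2 : x * x ≠ 0)
    (mx : x ∈ L) (mxx : x * x ∈ L) : Good L := by
  obtain ⟨p, hp, hc⟩ : ∃ p, p ⬝ᵥ (x * x) *ᵥ p = 1 ∧ True := by
    obtain ⟨p, hp⟩ := exists_aniso (g := x * x) (by rw [transpose_mul, hx]) hx2
    obtain ⟨s, hs⟩ := IsAlgClosed.exists_pow_nat_eq (p ⬝ᵥ (x * x) *ᵥ p) (n := 2) (by norm_num)
    have hs0 : s ≠ 0 := by rintro rfl; apply hp; rw [← hs]; simp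
    refine ⟨s⁻¹ • p, ?_, trivial⟩
    simp only [mulVec_smul, smul_dotProduct, dotProduct_smul, ← hs, smul_eq_mul]
    field_simp
  obtain ⟨q, hq⟩ : ∃ q, q = x *ᵥ p := ⟨_, rfl⟩
  obtain ⟨v, hv⟩ : ∃ v, v = x *ᵥ q := ⟨_, rfl⟩
  have hv' : v = (x * x) *ᵥ p := by rw [hv, hq, mulVec_mulVec]
  have xv : x *ᵥ v = 0 := by rw [hv', mulVec_mulVec, ← mul_assoc, hx3]; simp
  have pv : p ⬝ᵥ v = 1 := by rw [hv', hp]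
  have vp : v ⬝ᵥ p = 1 := by rw [dotProduct_comm, pv]
  have v0 : v ≠ 0 := by rintro h; rw [h] at pv; simp at pv
  have qv : q ⬝ᵥ v = 0 := by rw [hq, ← dsym hx, xv]; simp
  have vq : v ⬝ᵥ q = 0 := by rw [dotProduct_comm, qv]
  have vv : v ⬝ᵥ v = 0 := by
    have := dsym hx v q
    rw [← hv, xv] at this
    simpa using this
  have qq : q ⬝ᵥ q = 1 := by
    have := dsym hx p q
    rw [← hv, ← hq, pv] at this
    exact this.symm
  have hf : SI (T q q) := ⟨by rw [Ttr], by rw [TT, qq, one_smul]⟩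
  obtain ⟨w, vw, ww, fw, hg⟩ := hyp hf v0 vv (by rw [Tapp, qv, zero_smul])
  have wv : w ⬝ᵥ v = 1 := by rw [dotProduct_comm, vw]
  obtain ⟨u, uu, e2⟩ := hg.fac1 (by
    simp only [trace_sub, trace_add, S, T, Ttrace, vw, wv, qq, trace_one4]; norm_num)
  have qw : q ⬝ᵥ w = 0 := by
    have := congrArg (fun z => q ⬝ᵥ z) fw
    simpa only [T, Tapp, dotProduct_smul, qq, smul_eq_mul, mul_one, dotProduct_zero] using this
  have wq : w ⬝ᵥ q = 0 := by rw [dotProduct_comm, qw]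
  have uv : u ⬝ᵥ v = 0 := by
    have := congrArg (fun X => u ⬝ᵥ X *ᵥ v) e2
    simpa only [sub_mulVec, add_mulVec, one_mulVec, S, T, Tapp, qv, vv, wv, dotProduct_sub, dotProduct_add,
        dotProduct_smul, smul_eq_mul, one_mul, zero_mul, dotProduct_zero, sub_zero, add_zero, sub_self, uu, mul_one,
        eq_comm] using this
  have uq : u ⬝ᵥ q = 0 := by
    have := congrArg (fun X => u ⬝ᵥ X *ᵥ q) e2
    simpa only [sub_mulVec, add_mulVec, one_mulVec, S, T, Tapp, qq, vq, wq, dotProduct_sub, dotProduct_add,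
        dotProduct_smul, smul_eq_mul, one_mul, zero_mul, dotProduct_zero, sub_zero, add_zero, sub_self, uu, mul_one,
        eq_comm] using this
  have h1' : (1 : Mat 4) = S v w + T q q + T u u := by rw [← e2]; abel
  have ex : ∀ z, x *ᵥ z = (w ⬝ᵥ x *ᵥ z) • v + (v ⬝ᵥ z) • q + (u ⬝ᵥ x *ᵥ z) • u := by
    intro z
    have := congrArg (fun X => X *ᵥ (x *ᵥ z)) h1'
    simp only [one_mulVec, add_mulVec, S, T, Tapp, dsym hx v, xv, dsym hx q, ← hv] at this
    refine this.trans ?_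
    simp
  have t0 : u ⬝ᵥ x *ᵥ u = 0 := by
    have a1 := ex u
    rw [dotProduct_comm v u, uv, zero_smul, add_zero] at a1
    obtain ⟨s, hs⟩ : ∃ s, s = w ⬝ᵥ x *ᵥ u := ⟨_, rfl⟩
    obtain ⟨t, ht⟩ : ∃ t, t = u ⬝ᵥ x *ᵥ u := ⟨_, rfl⟩
    rw [← hs, ← ht] at a1
    have : u ⬝ᵥ (x * x * x) *ᵥ u = t ^ 3 := by
      rw [← mulVec_mulVec, ← mulVec_mulVec]
      simp only [a1, mulVec_add, mulVec_smul, xv, dotProduct_add, dotProduct_smul, uv, uu, smul_eq_mul, mulVec_zero, smul_zero, dotProduct_zero]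
      ring
    rw [hx3] at this
    rw [← ht]
    simpa using this.symm
  have s0 : w ⬝ᵥ x *ᵥ u = 0 := by
    have a1 := ex u
    rw [dotProduct_comm v u, uv, zero_smul, add_zero, t0, zero_smul, add_zero] at a1
    have a2 : p ⬝ᵥ x *ᵥ u = 0 := by rw [dsym hx, ← hq, dotProduct_comm, uq]
    rw [a1] at a2
    simpa [pv] using a2
  have xu : x *ᵥ u = 0 := by rw [ex u, s0, t0, dotProduct_comm v u, uv]; simp
  obtain ⟨a, ha⟩ : ∃ a, a = w ⬝ᵥ x *ᵥ w := ⟨_, rfl⟩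
  have xw : x *ᵥ w = a • v + q := by
    rw [ex w, ← ha, vw, dsym hx u, xu]; simp
  have hx1 : x = a • T v v + S v q := by
    have := congrArg (fun X => x * X) h1'
    simp only [mul_one, mul_add, S, T, mul_vecMulVec, xv, xw, xu, ← hv, smul_vecMulVec, add_vecMulVec] at this
    rw [this]
    simp [S]; abel
  have hxx : x * x = T v v := by
    rw [hx1]
    simp only [mul_add, add_mul, S, T, TT, smul_mul_assoc, mul_smul_comm, vv, vq, qv, qq]
    simp
  rw [hxx] at mxx
  refine fin3a L hd v q w u h1'.symm ?_ ?_ mxx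
  · rw [← h1']; exact h1
  · have : S v q = x - a • T v v := by rw [hx1]; abel
    rw [this]; exact L.sub_mem mx (L.smul_mem _ mxx)


lemma quad (a b c : ℂ) (ha : a ≠ 0) : ∃ t, a * (t * t) + b * t + c = 0 := by
  obtain ⟨s, hs⟩ := IsAlgClosed.exists_pow_nat_eq (discrim a b c) (n := 2) (by norm_num)
  exact exists_quadratic_eq_zero ha ⟨s, by rw [← hs]; ring⟩

lemma csqrt (a : ℂ) : ∃ s, s * s = a := by
  obtain ⟨s, hs⟩ := IsAlgClosed.exists_pow_nat_eq a (n := 2) (by norm_num)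
  exact ⟨s, by rw [← hs]; ring⟩

/-- pencil containing `v vᵀ` -/
lemma plane1 (L : Submodule ℂ (Mat 4)) (hd : Module.finrank ℂ L = 3) (h1 : 1 ∈ L) (v j w j' : V4)
    (h : (1 : Mat 4) = S v w + S j j') (mv : T v v ∈ L) (A B C : ℂ)
    (my : A • T v v + B • S v j + C • T j j ∈ L) (h0 : B ≠ 0 ∨ C ≠ 0) : Good L := by
  have my2 : B • S v j + C • T j j ∈ L := by
    have : B • S v j + C • T j j = (A • T v v + B • S v j + C • T j j) - A • T v v := by abel
    rw [this]; exact L.sub_mem my (L.smul_mem _ mv)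
  by_cases hC : C = 0
  · have hB : B ≠ 0 := by tauto
    rw [hC, zero_smul, add_zero] at my2
    have := L.smul_mem B⁻¹ my2
    rw [smul_smul, inv_mul_cancel₀ hB, one_smul] at this
    have e : S v w + S j' j = 1 := by rw [h]; simp only [S]; abel
    exact fin3b2 L hd v j' j w e (e ▸ h1) mv this
  · let k := j + (B / C) • v
    let w2 := w - (B / C) • j'
    have e : S v w2 + S k j' = 1 := by
      rw [h]
      simp only [S, k, w2, sub_vecMulVec, vecMulVec_sub, add_vecMulVec, vecMulVec_add, smul_vecMulVec, vecMulVec_smul]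
      module
    refine fin3b1 L hd v k j' w2 e (e ▸ h1) mv ?_
    have : T k k = C⁻¹ • (B • S v j + C • T j j) + (B / C) ^ 2 • T v v := by
      simp only [S, T, k, add_vecMulVec, vecMulVec_add, smul_vecMulVec, vecMulVec_smul]
      match_scalars <;> field_simp
    rw [this]
    exact L.add_mem (L.smul_mem _ my2) (L.smul_mem _ mv)

lemma plane2 (L : Submodule ℂ (Mat 4)) (hd : Module.finrank ℂ L = 3) (h1 : 1 ∈ L) (v j w j' : V4)
    (h : (1 : Mat 4) = S v w + S j j') (p q : ℂ) (hp : p ≠ 0) (A B C : ℂ)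
    (mx : (p * p) • T v v + (p * q) • S v j + (q * q) • T j j ∈ L)
    (my : A • T v v + B • S v j + C • T j j ∈ L)
    (h0 : ∀ t : ℂ, A • T v v + B • S v j + C • T j j ≠
      t • ((p * p) • T v v + (p * q) • S v j + (q * q) • T j j)) : Good L := by
  let l := p • v + q • j
  have hl : (p * p) • T v v + (p * q) • S v j + (q * q) • T j j = T l l := by
    simp only [S, T, l, add_vecMulVec, vecMulVec_add, smul_vecMulVec, vecMulVec_smul]
    module
  have hy : A • T v v + B • S v j + C • T j j =
      (A / p ^ 2) • T l l + (B / p - A * q / p ^ 2) • S l j + (C - 2 * B * q / p + A * q ^ 2 / p ^ 2) • T j j := by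
    simp only [S, T, l, add_vecMulVec, vecMulVec_add, smul_vecMulVec, vecMulVec_smul]
    match_scalars <;> field_simp <;> ring
  rw [hl] at mx h0
  rw [hy] at my h0
  refine plane1 L hd h1 l j (p⁻¹ • w) (j' - (q / p) • w) ?_ mx _ _ _ my ?_
  · rw [h]
    simp only [S, T, l, add_vecMulVec, vecMulVec_add, smul_vecMulVec, vecMulVec_smul, sub_vecMulVec, vecMulVec_sub]
    match_scalars <;> field_simp <;> ring
  · by_contra! hc
    apply h0 (A / p ^ 2)
    rw [hc.1, hc.2]
    simp

lemma plane3 (L : Submodule ℂ (Mat 4)) (hd : Module.finrank ℂ L = 3) (h1 : 1 ∈ L) (v j w j' : V4)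
    (h : (1 : Mat 4) = S v w + S j j') (a b c A B C : ℂ) (hdisc : a * c = b * b)
    (mx : a • T v v + b • S v j + c • T j j ∈ L) (x0 : a • T v v + b • S v j + c • T j j ≠ 0)
    (my : A • T v v + B • S v j + C • T j j ∈ L)
    (h0 : ∀ t : ℂ, A • T v v + B • S v j + C • T j j ≠
      t • (a • T v v + b • S v j + c • T j j)) : Good L := by
  by_cases ha : a = 0
  · subst ha
    have hb : b = 0 := by simpa using hdisc.symm
    subst hb
    obtain ⟨q, hq⟩ := csqrt c
    have hq0 : q ≠ 0 := by
      rintro rfl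
      apply x0
      rw [← hq]; simp
    refine plane2 L hd h1 j v j' w ?_ q 0 hq0 C B A ?_ ?_ ?_
    · rw [h]; abel
    · convert mx using 1; rw [← hq]; module
    · convert my using 1; module
    · intro t ht
      apply h0 t
      rw [← hq]
      convert ht using 1 <;> module
  · obtain ⟨p, hp⟩ := csqrt a
    have hp0 : p ≠ 0 := by
      rintro rfl
      exact ha (by rw [← hp]; simp)
    have e1 : b = p * (b / p) := by field_simp
    have e2 : c = (b / p) * (b / p) := by
      field_simp; rw [pow_two, pow_two, hp, ← hdisc]; ring
    rw [e2, ← hp] at mx h0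
    nth_rw 2 [e1] at mx
    refine plane2 L hd h1 v j w j' h p (b / p) hp0 A B C ?_ my ?_
    · rw [← e1]; rw [← e1] at mx; exact mx
    · intro t; rw [← e1]; exact h0 t

lemma plane4 (L : Submodule ℂ (Mat 4)) (hd : Module.finrank ℂ L = 3) (h1 : 1 ∈ L) (v j w j' : V4)
    (h : (1 : Mat 4) = S v w + S j j') (a b c A B C : ℂ) (x y : Mat 4)
    (hx : x = a • T v v + b • S v j + c • T j j) (hy : y = A • T v v + B • S v j + C • T j j)
    (mx : x ∈ L) (my : y ∈ L)
    (h0 : ∀ s t : ℂ, s • x + t • y = 0 → s = 0 ∧ t = 0) : Good L := by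
  by_cases hD : A * C - B * B = 0
  · rw [hx] at mx
    rw [hy] at my
    refine plane3 L hd h1 v j w j' h A B C a b c (sub_eq_zero.1 hD) my ?_ mx ?_
    · rw [← hy]; intro h; have := h0 0 1 (by simp [h]); simp at this
    · rw [← hy, ← hx]; intro t ht
      have := h0 1 (-t) (by rw [ht]; module)
      simp at this
  · obtain ⟨t, ht⟩ := quad (A * C - B * B) (a * C + A * c - 2 * b * B) (a * c - b * b) hD
    have mz := L.add_mem mx (L.smul_mem t my)
    have ez : x + t • y = (a + t * A) • T v v + (b + t * B) • S v j + (c + t * C) • T j j := by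
      rw [hx, hy]; module
    have my' := my
    rw [ez] at mz
    rw [hy] at my'
    refine plane3 L hd h1 v j w j' h _ _ _ A B C (by linear_combination ht) mz ?_ my' ?_
    · rw [← ez]; intro h; have := h0 1 t (by simpa using h); simp at this
    · rw [← ez, ← hy]; intro s hs
      have := h0 (-s) (1 - s * t) (by
        have : (-s) • x + (1 - s * t) • y = y - s • (x + t • y) := by module
        rw [this, ← hs, sub_self])
      have h2 : s = 0 := by simpa using this.1
      rw [h2] at this; simp at this

lemma scal3b (b b' c d c' B B' C D C' : ℂ)
    (h1 : b * b' = 0) (h2 : b * d + b' * c = 0) (h3 : b * c' + b' * d = 0) (h4 : c * d = 0)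
    (h5 : d * c' = 0) (h6 : d * d + c * c' = 0)
    (k1 : B * B' = 0) (k2 : B * D + B' * C = 0) (k3 : B * C' + B' * D = 0) (k4 : C * D = 0)
    (k5 : D * C' = 0) (k6 : D * D + C * C' = 0)
    (m1 : b * B' + B * b' = 0) (m2 : b * D + b' * C + (B * d + B' * c) = 0)
    (m3 : b * C' + b' * D + (B * c' + B' * d) = 0)
    (m6 : d * D + c * C' + (D * d + C * c') + (d * D + C * c' + (D * d + c * C')) = 0) :
    (d = 0 ∧ D = 0) ∧ ((b' = 0 ∧ c' = 0 ∧ B' = 0 ∧ C' = 0) ∨ (b = 0 ∧ c = 0 ∧ B = 0 ∧ C = 0)) := by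
  have hd : d = 0 := by
    have : d * d * d = 0 := by linear_combination d * h6 - c * h5
    simpa using this
  have hD : D = 0 := by
    have : D * D * D = 0 := by linear_combination D * k6 - C * k5
    simpa using this
  subst hd hD
  refine ⟨⟨rfl, rfl⟩, ?_⟩
  simp only [mul_zero, zero_mul, zero_add, add_zero, mul_eq_zero] at *
  grind

lemma gram (a b c d : V4) (h : (1 : Mat 4) = S a b + S c d) :
    a ⬝ᵥ a = 0 ∧ a ⬝ᵥ c = 0 ∧ a ⬝ᵥ d = 0 ∧ c ⬝ᵥ c = 0 ∧ d ⬝ᵥ d = 0 ∧ c ⬝ᵥ d = 1 := by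
  let N : Mat 4 := !![0,1,0,0;1,0,0,0;0,0,0,1;0,0,1,0]
  let Q := cols a b c d
  have hNN : N * N = 1 := by
    ext i j; fin_cases i <;> fin_cases j <;> simp [N, Matrix.mul_apply, Fin.sum_univ_four]
  have h2 : Q * (N * Qᵀ) = 1 := by
    rw [← mul_assoc, cols_expand, h]; module
  have h3 : N * Qᵀ * Q = 1 := mul_eq_one_comm.1 h2
  have h4 : Qᵀ * Q = N := by
    have := congrArg (fun X => N * X) h3
    simp only [← mul_assoc, hNN] at this
    simpa using this
  have e : ∀ i k, ![a, b, c, d] i ⬝ᵥ ![a, b, c, d] k = N i k := by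
    intro i k
    rw [← h4]; rfl
  refine ⟨e 0 0, e 0 2, e 0 3, e 2 2, e 3 3, e 2 3⟩

lemma exvec (v j w j' : V4) (h : (1 : Mat 4) = S v w + S j j') (x : Mat 4) (hx : xᵀ = x)
    (xv : x *ᵥ v = 0) (z : V4) :
    x *ᵥ z = (w ⬝ᵥ x *ᵥ z) • v + (j' ⬝ᵥ x *ᵥ z) • j + (j ⬝ᵥ x *ᵥ z) • j' := by
  have := congrArg (fun X => X *ᵥ (x *ᵥ z)) h
  simp only [one_mulVec, add_mulVec, S, T, Tapp, dsym hx v, xv] at this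
  refine this.trans ?_
  simp
  abel

lemma exmat (v j w j' : V4) (h : (1 : Mat 4) = S v w + S j j') (x : Mat 4) (hx : xᵀ = x)
    (xv : x *ᵥ v = 0) : ∃ a b b' c d c' : ℂ, x *ᵥ w = a • v + b • j + b' • j' ∧
      x *ᵥ j' = b • v + c • j + d • j' ∧ x *ᵥ j = b' • v + d • j + c' • j' ∧
      x = a • T v v + b • S v j + b' • S v j' + c • T j j + d • S j j' + c' • T j' j' := by
  have e1 := exvec v j w j' h x hx xv w
  have e2 := exvec v j w j' h x hx xv j'
  have e3 := exvec v j w j' h x hx xv j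
  rw [dsym hx w, dotProduct_comm _ j'] at e2
  rw [dsym hx w, dotProduct_comm _ j, dsym hx j', dotProduct_comm _ j] at e3
  refine ⟨_, _, _, _, _, _, e1, e2, e3, ?_⟩
  generalize w ⬝ᵥ x *ᵥ w = a at *
  generalize j' ⬝ᵥ x *ᵥ w = a at *
  generalize j ⬝ᵥ x *ᵥ w = a at *
  generalize j' ⬝ᵥ x *ᵥ j' = a at *
  generalize j ⬝ᵥ x *ᵥ j' = a at *
  generalize j ⬝ᵥ x *ᵥ j = a at *
  have := congrArg (fun X => x * X) h
  simp only [mul_one, mul_add, S, T, mul_vecMulVec, xv, e1, e2, e3, smul_vecMulVec, add_vecMulVec] at this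
  rw [this]
  simp only [S, T, zero_vecMulVec]
  module

lemma case3b (L : Submodule ℂ (Mat 4)) (hd : Module.finrank ℂ L = 3) (h1 : 1 ∈ L) (x y : Mat 4)
    (hx : xᵀ = x) (hy : yᵀ = y) (hxx : x * x = 0) (hyy : y * y = 0) (hxy : x * y + y * x = 0)
    (mx : x ∈ L) (my : y ∈ L)
    (h0 : ∀ s t : ℂ, s • x + t • y = 0 → s = 0 ∧ t = 0) : Good L := by
  have hyx : y * x = - (x * y) := by rw [eq_neg_iff_add_eq_zero, add_comm, hxy]
  have dxx : ∀ z z', (x *ᵥ z) ⬝ᵥ (x *ᵥ z') = 0 := by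
    intro z z'; rw [← dsym hx, mulVec_mulVec, hxx]; simp
  have dyy : ∀ z z', (y *ᵥ z) ⬝ᵥ (y *ᵥ z') = 0 := by
    intro z z'; rw [← dsym hy, mulVec_mulVec, hyy]; simp
  have dxy : ∀ z z', (x *ᵥ z) ⬝ᵥ (y *ᵥ z') + (y *ᵥ z) ⬝ᵥ (x *ᵥ z') = 0 := by
    intro z z'
    rw [← dsym hx, ← dsym hy, mulVec_mulVec, mulVec_mulVec, ← dotProduct_add, ← add_mulVec, hxy]; simp
  obtain ⟨v, v0, vv, xv, yv⟩ : ∃ v : V4, v ≠ 0 ∧ v ⬝ᵥ v = 0 ∧ x *ᵥ v = 0 ∧ y *ᵥ v = 0 := by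
    by_cases h : x * y = 0
    · have hx0 : x ≠ 0 := by rintro rfl; have := h0 1 0 (by simp); simp at this
      obtain ⟨p, hp⟩ := ne_mulVec hx0
      refine ⟨_, hp, dxx _ _, ?_, ?_⟩
      · rw [mulVec_mulVec, hxx]; simp
      · rw [mulVec_mulVec, hyx, h]; simp
    · obtain ⟨p, hp⟩ := ne_mulVec h
      refine ⟨_, hp, ?_, ?_, ?_⟩
      · rw [← mulVec_mulVec]; exact dxx _ _
      · rw [mulVec_mulVec, ← mul_assoc, hxx]; simp
      · rw [mulVec_mulVec, ← mul_assoc, hyx, neg_mul, mul_assoc, hyy]; simp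
  have hf : SI (0 : Mat 4) := ⟨by simp, by simp⟩
  obtain ⟨w, vw, ww, -, hg⟩ := hyp hf v0 vv (by simp)
  have wv : w ⬝ᵥ v = 1 := by rw [dotProduct_comm, vw]
  obtain ⟨f1, f2, hf1, hf2, e2⟩ := hg.fac2 (by
    simp only [trace_sub, trace_add, S, T, Ttrace, vw, wv, trace_one4, trace_zero]; norm_num)
  let j := f1 + Complex.I • f2
  let j' := (1 / 2 : ℂ) • f1 - (Complex.I / 2) • f2
  have h : (1 : Mat 4) = S v w + S j j' := by
    have : S j j' = T f1 f1 + T f2 f2 := by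
      simp only [S, T, j, j', add_vecMulVec, vecMulVec_add, smul_vecMulVec, vecMulVec_smul, sub_vecMulVec, vecMulVec_sub]
      have hI := Complex.I_mul_I
      match_scalars
      · ring
      · ring
      · ring
      · linear_combination - hI
    rw [this, ← e2]; abel
  clear_value j j'
  obtain ⟨-, vj, vj', jj, jj', gjj⟩ := gram v w j j' h
  have jv : j ⬝ᵥ v = 0 := by rw [dotProduct_comm, vj]
  have j'v : j' ⬝ᵥ v = 0 := by rw [dotProduct_comm, vj']
  have gjj' : j' ⬝ᵥ j = 1 := by rw [dotProduct_comm, gjj]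
  obtain ⟨a, b, b', c, d, c', xw, xj', xj, ex⟩ := exmat v j w j' h x hx xv
  obtain ⟨A, B, B', C, D, C', yw, yj', yj, ey⟩ := exmat v j w j' h y hy yv
  have X1 := dxx w w
  have X2 := dxx w j'
  have X3 := dxx w j
  have X4 := dxx j' j'
  have X5 := dxx j j
  have X6 := dxx j j'
  have Y1 := dyy w w
  have Y2 := dyy w j'
  have Y3 := dyy w j
  have Y4 := dyy j' j'
  have Y5 := dyy j j
  have Y6 := dyy j j'
  have M1 := dxy w w
  have M2 := dxy w j'
  have M3 := dxy w j
  have M6 := dxy j j'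
  simp only [xw, xj', xj, yw, yj', yj, dotProduct_add, add_dotProduct, dotProduct_smul, smul_dotProduct,
    smul_eq_mul, vv, vj, vj', jj, jj', gjj, jv, j'v, gjj', mul_zero, mul_one, add_zero, zero_add]
    at X1 X2 X3 X4 X5 X6 Y1 Y2 Y3 Y4 Y5 Y6 M1 M2 M3 M6
  obtain ⟨⟨rfl, rfl⟩, ⟨rfl, rfl, rfl, rfl⟩ | ⟨rfl, rfl, rfl, rfl⟩⟩ := scal3b b b' c d c' B B' C D C'
    (by linear_combination X1 / 2) (by linear_combination X2) (by linear_combination X3)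
    (by linear_combination X4 / 2) (by linear_combination X5 / 2) (by linear_combination X6)
    (by linear_combination Y1 / 2) (by linear_combination Y2) (by linear_combination Y3)
    (by linear_combination Y4 / 2) (by linear_combination Y5 / 2) (by linear_combination Y6)
    (by linear_combination M1 / 2) (by linear_combination M2) (by linear_combination M3)
    (by linear_combination 2 * M6)
  · refine plane4 L hd h1 v j w j' h a b c A B C x y ?_ ?_ mx my h0
    · rw [ex]; module
    · rw [ey]; module
  · refine plane4 L hd h1 v j' w j (by rw [h]; simp only [S]; abel) a b' c' A B' C' x y ?_ ?_ mx my h0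
    · rw [ex]; module
    · rw [ey]; module


lemma span3 (L : Submodule ℂ (Mat 4)) (hd : Module.finrank ℂ L = 3) (x y z : Mat 4)
    (mx : x ∈ L) (my : y ∈ L) (mz : z ∈ L)
    (hli : ∀ a b c : ℂ, a • x + b • y + c • z = 0 → a = 0 ∧ b = 0 ∧ c = 0) (m : Mat 4) (hm : m ∈ L) :
    ∃ a b c : ℂ, m = a • x + b • y + c • z := by
  have := map_eq_of L hd 1 (by simp) x y z hli (by simpa using mx) (by simpa using my) (by simpa using mz)
  have h2 : Submodule.map (congMap (1 : Mat 4)⁻¹) L = L := by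
    have : congMap (1 : Mat 4)⁻¹ = LinearMap.id := by
      ext1 X; simp [congMap_apply']
    rw [this, Submodule.map_id]
  rw [← h2, this, Submodule.mem_span_triple] at hm
  obtain ⟨a, b, c, h⟩ := hm
  exact ⟨a, b, c, h.symm⟩

/-- `X²` is not in the span of `1, X` -/
def NQ (X : Mat 4) : Prop := ∀ a b : ℂ, X * X ≠ a • 1 + b • X

lemma NQ.affine {X : Mat 4} (h : NQ X) (c r : ℂ) (hc : c ≠ 0) : NQ (c • (X - r • 1)) := by
  intro a b e
  simp only [smul_mul_assoc, mul_smul_comm, mul_sub, sub_mul, mul_one, one_mul] at e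
  apply h (a / c ^ 2 - b * r / c - r ^ 2) (b / c + 2 * r)
  have e2 : X * X = (c⁻¹ * c⁻¹) • (c • (c • (X * X - r • X - (r • X - r • r • (1 : Mat 4))))) + (2 * r) • X - (r ^ 2) • (1 : Mat 4) := by
    match_scalars <;> field_simp <;> ring
  have e' : c • (c • (X * X - r • X - (r • X - r • r • (1 : Mat 4)))) = a • 1 + b • c • (X - r • 1) := by
    rw [← e]; module
  rw [e2, e']
  match_scalars <;> field_simp <;> ring

lemma A_triple (L : Submodule ℂ (Mat 4)) (hd : Module.finrank ℂ L = 3)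
    (hsym : ∀ X ∈ L, Xᵀ = X) (h1 : 1 ∈ L) (hsq : ∀ X ∈ L, X * X ∈ L)
    (Y : Mat 4) (mY : Y ∈ L) (hY : NQ Y) (h : Y * Y * Y = 0) : Good L :=
  case3a L hd h1 Y (hsym _ mY) h (fun e => hY 0 0 (by rw [e]; simp)) mY (hsq _ mY)

lemma A_double (L : Submodule ℂ (Mat 4)) (hd : Module.finrank ℂ L = 3)
    (hsym : ∀ X ∈ L, Xᵀ = X) (h1 : 1 ∈ L) (hsq : ∀ X ∈ L, X * X ∈ L)
    (Y : Mat 4) (mY : Y ∈ L) (hY : NQ Y) (h : Y * Y * Y = Y * Y) : Good L := by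
  have m2 := hsq _ mY
  have h4 : Y * Y * Y * Y = Y * Y := by rw [h, h]
  refine case2a L hd h1 (Y * Y) (Y - Y * Y) ⟨hsym _ m2, ?_⟩ (hsym _ (L.sub_mem mY m2)) ?_ ?_ ?_ ?_ m2
    (L.sub_mem mY m2)
  · rw [← mul_assoc, h4]
  · simp only [mul_sub, sub_mul, ← mul_assoc, h]; abel
  · simp only [mul_sub, sub_mul, ← mul_assoc, h]; abel
  · intro e
    exact hY 0 1 (by rw [sub_eq_zero] at e; rw [← e]; simp)
  · exact (fun e => hY 0 0 (by rw [e]; simp))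

lemma A_distinct (L : Submodule ℂ (Mat 4)) (hd : Module.finrank ℂ L = 3)
    (hsym : ∀ X ∈ L, Xᵀ = X) (h1 : 1 ∈ L) (hsq : ∀ X ∈ L, X * X ∈ L)
    (Y : Mat 4) (mY : Y ∈ L) (hY : NQ Y) (t : ℂ) (ht0 : t ≠ 0) (ht1 : t ≠ 1)
    (h : Y * Y * Y = (1 + t) • (Y * Y) - t • Y) : Good L := by
  have m2 := hsq _ mY
  have ht2 : t - 1 ≠ 0 := sub_ne_zero.2 ht1
  have ht3 : 1 - t ≠ 0 := sub_ne_zero.2 ht1.symm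
  have key : ∀ a b c : ℂ, c ≠ 0 → a • (1 : Mat 4) + b • Y + c • (Y * Y) ≠ 0 := by
    intro a b c hc e
    apply hY (-a / c) (-b / c)
    have : Y * Y = c⁻¹ • (a • (1 : Mat 4) + b • Y + c • (Y * Y)) - (a / c) • 1 - (b / c) • Y := by
      match_scalars <;> field_simp <;> ring
    rw [this, e]; module
  have mm : ∀ a b c : ℂ, a • (1 : Mat 4) + b • Y + c • (Y * Y) ∈ L := fun a b c =>
    L.add_mem (L.add_mem (L.smul_mem _ h1) (L.smul_mem _ mY)) (L.smul_mem _ m2)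
  have h4 : Y * Y * Y * Y = (1 + t + t ^ 2) • (Y * Y) - (t + t ^ 2) • Y := by
    rw [h, sub_mul, smul_mul_assoc, h, smul_mul_assoc]; module
  have si : ∀ a b c : ℂ, a * a = a → 
      2 * a * b - 2 * b * c * t - c ^ 2 * (t + t ^ 2) = b → 
      b ^ 2 + 2 * a * c + 2 * b * c * (1 + t) + c ^ 2 * (1 + t + t ^ 2) = c →
      SI (a • (1 : Mat 4) + b • Y + c • (Y * Y)) := by
    intro a b c e1 e2 e3
    refine ⟨hsym _ (mm _ _ _), ?_⟩
    have h22 : Y * Y * (Y * Y) = (1 + t + t ^ 2) • (Y * Y) - (t + t ^ 2) • Y := by rw [← mul_assoc, h4]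
    have h3 : Y * (Y * Y) = (1 + t) • (Y * Y) - t • Y := by rw [← mul_assoc, h]
    simp only [mul_add, add_mul, smul_mul_assoc, mul_smul_comm, one_mul, mul_one, h22, h3, h]
    match_scalars
    · linear_combination e1
    · linear_combination e2
    · linear_combination e3
  refine case1a L hd _ _ _ (si 0 (-t / (1 - t)) (1 / (1 - t)) ?_ ?_ ?_)
    (si 0 (-1 / (t * (t - 1))) (1 / (t * (t - 1))) ?_ ?_ ?_) (si 1 (- (1 + t) / t) (1 / t) ?_ ?_ ?_)
    (mm _ _ _) (mm _ _ _) (mm _ _ _) (key _ _ _ ?_) (key _ _ _ ?_) (key _ _ _ ?_) ?_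
  any_goals simp [ht0, ht1, ht2, ht3]; done
  any_goals field_simp; ring; done
  have e : t - 1 = -(1 - t) := by ring
  rw [e]
  match_scalars <;> field_simp <;> ring

lemma caseA (L : Submodule ℂ (Mat 4)) (hd : Module.finrank ℂ L = 3)
    (hsym : ∀ X ∈ L, Xᵀ = X) (h1 : 1 ∈ L) (hsq : ∀ X ∈ L, X * X ∈ L)
    (hJ : ∀ X ∈ L, ∀ Y ∈ L, X * Y + Y * X ∈ L)
    (X : Mat 4) (mX : X ∈ L) (hX : NQ X) : Good L := by
  have m2 := hsq _ mX
  have m3 : X * X * X ∈ L := by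
    have := L.smul_mem (1 / 2 : ℂ) (hJ _ m2 _ mX)
    rw [← mul_assoc] at this
    convert this using 1
    module
  obtain ⟨α, β, γ, h⟩ := span3 L hd 1 X (X * X) h1 mX m2 (by
    intro a b c e
    have hc : c = 0 := by
      by_contra hc
      apply hX (-a / c) (-b / c)
      have : X * X = c⁻¹ • (a • (1 : Mat 4) + b • X + c • (X * X)) - (a / c) • 1 - (b / c) • X := by
        match_scalars <;> field_simp <;> ring
      rw [this, e]; module
    subst hc
    have hb : b = 0 := by
      by_contra hb
      have e1 : X = (-a / b) • (1 : Mat 4) := by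
        have : X = b⁻¹ • (a • (1 : Mat 4) + b • X + (0 : ℂ) • (X * X)) - (a / b) • 1 := by
          match_scalars <;> field_simp <;> ring
        rw [this, e]; module
      apply hX ((-a / b) ^ 2) 0
      rw [e1]
      simp only [smul_mul_assoc, mul_smul_comm, mul_one]; module
    subst hb
    refine ⟨?_, rfl, rfl⟩
    have := congrFun (congrFun e 0) 0
    simpa using this) _ m3
  obtain ⟨r1, hr1⟩ : ∃ r : ℂ, r ^ 3 - γ * r ^ 2 - β * r - α = 0 := by
    obtain ⟨r, hr⟩ := IsAlgClosed.exists_root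
      (Polynomial.X ^ 3 - Polynomial.C γ * Polynomial.X ^ 2 - Polynomial.C β * Polynomial.X - Polynomial.C α : Polynomial ℂ)
      (by
        have : (Polynomial.X ^ 3 - Polynomial.C γ * Polynomial.X ^ 2 - Polynomial.C β * Polynomial.X - Polynomial.C α : Polynomial ℂ).degree = 3 := by
          compute_degree!
        rw [this]; norm_num)
    exact ⟨r, by simpa using hr⟩
  obtain ⟨r2, hr2⟩ := quad 1 (r1 - γ) (r1 ^ 2 - γ * r1 - β) one_ne_zero
  obtain ⟨r3, hr3⟩ : ∃ r3, r3 = γ - r1 - r2 := ⟨_, rfl⟩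
  have hγ : γ = r1 + r2 + r3 := by rw [hr3]; ring
  have hβ : β = -(r1 * r2 + r1 * r3 + r2 * r3) := by rw [hr3]; linear_combination -hr2
  have hα : α = r1 * r2 * r3 := by rw [hr3]; linear_combination -hr1 + r1 * hr2
  clear hr1 hr2 hr3
  have my : ∀ c r : ℂ, c • (X - r • 1) ∈ L := fun c r =>
    L.smul_mem _ (L.sub_mem mX (L.smul_mem _ h1))
  have dbl : ∀ r s : ℂ, r ≠ s → α = r * r * s → β = -(r * r + 2 * r * s) → γ = 2 * r + s → Good L := by
    rintro r s hrs rfl rfl rfl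
    have hne : s - r ≠ 0 := sub_ne_zero.2 hrs.symm
    refine A_double L hd hsym h1 hsq _ (my (s - r)⁻¹ r) (hX.affine _ _ (inv_ne_zero hne)) ?_
    simp only [smul_mul_assoc, mul_smul_comm, mul_sub, sub_mul, mul_one, one_mul, h]
    match_scalars <;> field_simp <;> ring
  by_cases h12 : r1 = r2
  · by_cases h13 : r1 = r3
    · subst h12 h13 
      refine A_triple L hd hsym h1 hsq _ (my 1 r1) (hX.affine _ _ one_ne_zero) ?_
      simp only [smul_mul_assoc, mul_smul_comm, mul_sub, sub_mul, mul_one, one_mul, h, hα, hβ, hγ]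
      module
    · subst h12
      exact dbl r1 r3 h13 hα (by rw [hβ]; ring) (by rw [hγ]; ring)
  · by_cases h13 : r1 = r3
    · subst h13
      exact dbl r1 r2 h12 (by rw [hα]; ring) (by rw [hβ]; ring) (by rw [hγ]; ring)
    · by_cases h23 : r2 = r3
      · subst h23
        exact dbl r2 r1 (Ne.symm h12) (by rw [hα]; ring) (by rw [hβ]; ring) (by rw [hγ]; ring)
      · have hne : r2 - r1 ≠ 0 := sub_ne_zero.2 (Ne.symm h12)
        have hne3 : r3 - r1 ≠ 0 := sub_ne_zero.2 (Ne.symm h13)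
        refine A_distinct L hd hsym h1 hsq _ (my (r2 - r1)⁻¹ r1) (hX.affine _ _ (inv_ne_zero hne))
          ((r3 - r1) / (r2 - r1)) (div_ne_zero hne3 hne) ?_ ?_
        · rw [Ne, div_eq_one_iff_eq hne]
          intro e; apply h23; linear_combination -e
        · simp only [smul_mul_assoc, mul_smul_comm, mul_sub, sub_mul, mul_one, one_mul, h, hα, hβ, hγ]
          match_scalars <;> field_simp <;> ring


lemma B1 (L : Submodule ℂ (Mat 4)) (hd : Module.finrank ℂ L = 3)
    (hsym : ∀ X ∈ L, Xᵀ = X) (h1 : 1 ∈ L) (x y : Mat 4) (mx : x ∈ L) (my : y ∈ L)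
    (hxx : x * x = 0) (hyy : y * y = 0) (hxy : x * y + y * x = 1) : Good L := by
  have me : (1 / 2 : ℂ) • (1 + x + y) ∈ L := L.smul_mem _ (L.add_mem (L.add_mem h1 mx) my)
  have mr : Complex.I • (x - y) ∈ L := L.smul_mem _ (L.sub_mem mx my)
  have hyx : y * x = 1 - x * y := by rw [← hxy]; abel
  have hI := Complex.I_mul_I
  refine case1b L hd h1 _ _ ⟨hsym _ me, ?_⟩ (hsym _ mr) ?_ ?_ me mr
  · simp only [smul_mul_assoc, mul_smul_comm, mul_add, add_mul, mul_one, one_mul, hxx, hyy, hyx]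
    module
  · simp only [smul_mul_assoc, mul_smul_comm, mul_sub, sub_mul, mul_one, one_mul, hxx, hyy, hyx]
    match_scalars
    · linear_combination -hI
    all_goals ring
  · simp only [smul_mul_assoc, mul_smul_comm, mul_sub, sub_mul, mul_add, add_mul, mul_one, one_mul, hxx, hyy, hyx, smul_smul]
    module

lemma B2 (L : Submodule ℂ (Mat 4)) (hd : Module.finrank ℂ L = 3)
    (hsym : ∀ X ∈ L, Xᵀ = X) (h1 : 1 ∈ L) (x y : Mat 4) (mx : x ∈ L) (my : y ∈ L)
    (hli : ∀ a b c : ℂ, a • (1 : Mat 4) + b • x + c • y = 0 → a = 0 ∧ b = 0 ∧ c = 0)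
    (p α : ℂ) (hxx : x * x = p • 1) (hyy : y * y = 0) (hxy : x * y + y * x = α • 1) : Good L := by
  have hyx : y * x = α • 1 - x * y := by rw [← hxy]; abel
  by_cases hα : α = 0
  · subst hα
    by_cases hp : p = 0
    · subst hp
      refine case3b L hd h1 x y (hsym _ mx) (hsym _ my) (by simpa using hxx) hyy (by simpa using hxy) mx my ?_
      intro s t e
      have := hli 0 s t (by rw [zero_smul, zero_add, e])
      exact this.2
    · obtain ⟨s, hs⟩ := csqrt p
      have hs0 : s ≠ 0 := by rintro rfl; apply hp; rw [← hs]; ring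
      subst hs
      have me : (1 / 2 : ℂ) • (1 + s⁻¹ • x) ∈ L := L.smul_mem _ (L.add_mem h1 (L.smul_mem _ mx))
      refine case2b L hd h1 _ y ⟨hsym _ me, ?_⟩ (hsym _ my) hyy ?_ ?_ me my
      · simp only [smul_mul_assoc, mul_smul_comm, mul_add, add_mul, mul_one, one_mul, hxx]
        match_scalars <;> field_simp <;> ring
      · simp only [smul_mul_assoc, mul_smul_comm, mul_add, add_mul, mul_one, one_mul, hyx]
        module
      · intro e
        have := hli 0 0 1 (by rw [e]; simp)
        exact one_ne_zero this.2.2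
  · refine B1 L hd hsym h1 (x - (p / α) • y) (α⁻¹ • y) (L.sub_mem mx (L.smul_mem _ my)) (L.smul_mem _ my) ?_ ?_ ?_
    · simp only [smul_mul_assoc, mul_smul_comm, mul_sub, sub_mul, mul_one, one_mul, hxx, hyy, hyx]
      match_scalars <;> field_simp <;> ring
    · simp [hyy]
    · simp only [smul_mul_assoc, mul_smul_comm, mul_sub, sub_mul, mul_one, one_mul, hxx, hyy, hyx]
      match_scalars <;> field_simp <;> ring

lemma exists_indep (L : Submodule ℂ (Mat 4)) (hd : Module.finrank ℂ L = 3) (h1 : 1 ∈ L) :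
    ∃ x ∈ L, ∃ y ∈ L, ∀ a b c : ℂ, a • (1 : Mat 4) + b • x + c • y = 0 → a = 0 ∧ b = 0 ∧ c = 0 := by
  have key : ∀ x : Mat 4, ∃ y ∈ L, y ∉ Submodule.span ℂ {1, x} := by
    intro x
    by_contra! hc
    have hle : L ≤ Submodule.span ℂ {1, x} := hc
    have h2 := Submodule.finrank_mono hle
    have h3 : Module.finrank ℂ (Submodule.span ℂ (({1, x} : Finset (Mat 4)) : Set (Mat 4))) ≤ 2 :=
      (finrank_span_finset_le_card _).trans (Finset.card_le_two)
    rw [Finset.coe_pair] at h3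
    omega
  obtain ⟨x, mx, hx⟩ := key 1
  obtain ⟨y, my, hy⟩ := key x
  refine ⟨x, mx, y, my, ?_⟩
  intro a b c e
  have hc : c = 0 := by
    by_contra hc
    apply hy
    rw [Submodule.mem_span_pair]
    refine ⟨-a / c, -b / c, ?_⟩
    have : y = c⁻¹ • (a • (1 : Mat 4) + b • x + c • y) - (a / c) • 1 - (b / c) • x := by
      match_scalars <;> field_simp <;> ring
    rw [this, e]; module
  subst hc
  have hb : b = 0 := by
    by_contra hb
    apply hx
    rw [Submodule.mem_span_pair]
    refine ⟨-a / b, 0, ?_⟩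
    have : x = b⁻¹ • (a • (1 : Mat 4) + b • x + (0 : ℂ) • y) - (a / b) • 1 := by
      match_scalars <;> field_simp <;> ring
    rw [this, e]; module
  subst hb
  refine ⟨?_, rfl, rfl⟩
  have := congrFun (congrFun e 0) 0
  simpa using this

lemma caseB (L : Submodule ℂ (Mat 4)) (hd : Module.finrank ℂ L = 3)
    (hsym : ∀ X ∈ L, Xᵀ = X) (h1 : 1 ∈ L)
    (hJ : ∀ X ∈ L, ∀ Y ∈ L, X * Y + Y * X ∈ L)
    (hq : ∀ X ∈ L, ∃ a b : ℂ, X * X = a • 1 + b • X) : Good L := by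
  obtain ⟨x0, mx0, y0, my0, hli0⟩ := exists_indep L hd h1
  obtain ⟨a1, b1, e1⟩ := hq x0 mx0
  obtain ⟨a2, b2, e2⟩ := hq y0 my0
  obtain ⟨x, hx⟩ : ∃ x, x = x0 - (b1 / 2) • (1 : Mat 4) := ⟨_, rfl⟩
  obtain ⟨y, hy⟩ : ∃ y, y = y0 - (b2 / 2) • (1 : Mat 4) := ⟨_, rfl⟩
  have mx : x ∈ L := hx ▸ L.sub_mem mx0 (L.smul_mem _ h1)
  have my : y ∈ L := hy ▸ L.sub_mem my0 (L.smul_mem _ h1)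
  have hxx : x * x = (a1 + b1 ^ 2 / 4) • 1 := by
    rw [hx]
    simp only [smul_mul_assoc, mul_smul_comm, mul_sub, sub_mul, mul_one, one_mul, e1]
    module
  have hyy : y * y = (a2 + b2 ^ 2 / 4) • 1 := by
    rw [hy]
    simp only [smul_mul_assoc, mul_smul_comm, mul_sub, sub_mul, mul_one, one_mul, e2]
    module
  have hli : ∀ a b c : ℂ, a • (1 : Mat 4) + b • x + c • y = 0 → a = 0 ∧ b = 0 ∧ c = 0 := by
    intro a b c e
    obtain ⟨i, j, k⟩ := hli0 (a - b * (b1 / 2) - c * (b2 / 2)) b c (by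
      rw [← e, hx, hy]; module)
    subst j k
    exact ⟨by linear_combination i, rfl, rfl⟩
  generalize a1 + b1 ^ 2 / 4 = p at hxx
  generalize a2 + b2 ^ 2 / 4 = q at hyy
  clear hx hy e1 e2 hli0 mx0 my0
  obtain ⟨α, β, γ, h⟩ := span3 L hd 1 x y h1 mx my hli _ (hJ x mx y my)
  have hyx : y * x = α • 1 + β • x + γ • y - x * y := by rw [← h]; abel
  obtain ⟨c1, d1, f1⟩ := hq (x + y) (L.add_mem mx my)
  obtain ⟨c2, d2, f2⟩ := hq (x - y) (L.sub_mem mx my)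
  simp only [mul_add, add_mul, hxx, hyy, hyx] at f1
  simp only [mul_sub, sub_mul, hxx, hyy, hyx] at f2
  obtain ⟨-, i1, i2⟩ := hli (p + q + α - c1) (β - d1) (γ - d1) (by
    rw [← sub_eq_zero] at f1; rw [← f1]; module)
  obtain ⟨-, j1, j2⟩ := hli (p + q - α - c2) (-β - d2) (-γ + d2) (by
    rw [← sub_eq_zero] at f2; rw [← f2]; module)
  have hβ : β = 0 := by linear_combination (1 / 2) * (i1 - i2 - j1 - j2)
  have hγ : γ = 0 := by linear_combination (1 / 2) * (i2 - i1 - j1 - j2)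
  subst hβ hγ
  by_cases hq0 : q = 0
  · subst hq0
    exact B2 L hd hsym h1 x y mx my hli p α hxx (by simpa using hyy) (by rw [h]; module)
  · obtain ⟨t, ht⟩ := quad q α p hq0
    refine B2 L hd hsym h1 y (x + t • y) my (L.add_mem mx (L.smul_mem _ my)) ?_ q (α + 2 * t * q) hyy ?_ ?_
    · intro a b c e
      obtain ⟨i, j, k⟩ := hli a c (b + c * t) (by rw [← e]; module)
      subst i j
      exact ⟨rfl, by linear_combination k, rfl⟩
    · simp only [mul_add, add_mul, smul_mul_assoc, mul_smul_comm, hxx, hyy, hyx]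
      match_scalars
      · linear_combination ht
      all_goals ring
    · simp only [mul_add, add_mul, smul_mul_assoc, mul_smul_comm, hxx, hyy, hyx]
      module

lemma main1 (L : Submodule ℂ (Mat 4)) (hd : Module.finrank ℂ L = 3)
    (hsym : ∀ X ∈ L, Xᵀ = X) (h1 : 1 ∈ L)
    (hJ : ∀ X ∈ L, ∀ Y ∈ L, X * Y + Y * X ∈ L) : Good L := by
  have hsq : ∀ X ∈ L, X * X ∈ L := by
    intro X mX
    have := L.smul_mem (1 / 2 : ℂ) (hJ _ mX _ mX)
    convert this using 1
    module
  by_cases h : ∃ X ∈ L, NQ X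
  · obtain ⟨X, mX, hX⟩ := h
    exact caseA L hd hsym h1 hsq hJ X mX hX
  · refine caseB L hd hsym h1 hJ ?_
    intro X mX
    by_contra! hc
    exact h ⟨X, mX, hc⟩

lemma main2 (U : Mat 4) (hU : IsUnit U.det)
    (L : Submodule ℂ (Mat 4)) (hsym : ∀ X ∈ L, Matrix.IsSymm X)
    (hUL : U ∈ L) (hclosed : ∀ X ∈ L, ∀ Y ∈ L, jmul U X Y ∈ L)
    (hdim : Module.finrank ℂ L = 3) : Good L := by
  obtain ⟨Q, hQ⟩ := exists_sqrt U (hsym U hUL) hU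
  have hQd : IsUnit Q.det := by
    rw [← hQ, det_mul] at hU
    exact isUnit_of_mul_isUnit_left hU
  have hR : IsUnit (Q⁻¹).det := Matrix.isUnit_nonsing_inv_det _ hQd
  have a1 : Q⁻¹ * Q = 1 := Matrix.nonsing_inv_mul _ hQd
  have a2 : Qᵀ * (Q⁻¹)ᵀ = 1 := by rw [← transpose_mul, a1, transpose_one]
  have hUi : U⁻¹ = (Q⁻¹)ᵀ * Q⁻¹ := by
    rw [← hQ, Matrix.mul_inv_rev, transpose_nonsing_inv]
  have hinj : Function.Injective (congMap Q⁻¹) := by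
    intro X Y e
    have e2 : Q * (Q⁻¹ * X * (Q⁻¹)ᵀ) * Qᵀ = Q * (Q⁻¹ * Y * (Q⁻¹)ᵀ) * Qᵀ := by
      rw [congMap_apply', congMap_apply'] at e; rw [e]
    have b1 : Q * Q⁻¹ = 1 := Matrix.mul_nonsing_inv _ hQd
    have b2 : (Q⁻¹)ᵀ * Qᵀ = 1 := by rw [← transpose_mul, b1, transpose_one]
    have k : ∀ X : Mat 4, Q * (Q⁻¹ * X * (Q⁻¹)ᵀ) * Qᵀ = X := by
      intro X
      calc _ = (Q * Q⁻¹) * X * ((Q⁻¹)ᵀ * Qᵀ) := by simp only [mul_assoc]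
        _ = X := by rw [b1, b2, one_mul, mul_one]
    rwa [k, k] at e2
  apply good_of_map Q⁻¹ hR L
  apply main1
  · rw [← hdim]
    exact (Submodule.equivMapOfInjective _ hinj L).symm.finrank_eq
  · rintro _ ⟨X, mX, rfl⟩
    have : Xᵀ = X := hsym X mX
    rw [congMap_apply', transpose_mul, transpose_mul, transpose_transpose, this, mul_assoc]
  · refine ⟨U, hUL, ?_⟩
    rw [congMap_apply', ← hQ]
    calc _ = (Q⁻¹ * Q) * (Qᵀ * (Q⁻¹)ᵀ) := by simp only [mul_assoc]
      _ = 1 := by rw [a1, a2, one_mul]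
  · rintro _ ⟨X, mX, rfl⟩ _ ⟨Y, mY, rfl⟩
    refine ⟨(2 : ℂ) • jmul U X Y, L.smul_mem _ (hclosed _ mX _ mY), ?_⟩
    have : (2 : ℂ) • jmul U X Y = X * U⁻¹ * Y + Y * U⁻¹ * X := by
      rw [jmul, smul_smul]; norm_num
    rw [this, hUi]
    simp only [congMap_apply', mul_add, add_mul, mul_assoc]

/-- Every Jordan net in `S⁴` (a `3`-dimensional Jordan subalgebra of `(S⁴, •_U)`
with invertible unit `U`) is congruent to one of the eight listed nets. -/
theorem stmt14 (U : Mat 4) (hU : IsUnit U.det)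
    (L : Submodule ℂ (Mat 4)) (hsym : ∀ X ∈ L, Matrix.IsSymm X)
    (hUL : U ∈ L) (hclosed : ∀ X ∈ L, ∀ Y ∈ L, jmul U X Y ∈ L)
    (hdim : Module.finrank ℂ L = 3) :
    ∃ P : Mat 4, IsUnit P.det ∧
      (Submodule.map (congMap P) L = net1a ∨
       Submodule.map (congMap P) L = net1b ∨
       Submodule.map (congMap P) L = net2a1 ∨
       Submodule.map (congMap P) L = net2a2 ∨
       Submodule.map (congMap P) L = net2b ∨
       Submodule.map (congMap P) L = net3a ∨
       Submodule.map (congMap P) L = net3b1 ∨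
       Submodule.map (congMap P) L = net3b2) := by
  exact main2 U hU L hsym hUL hclosed hdim
end
end

section
/- Let L ⊆ Sⁿ be a 3-dimensional Jordan subalgebra of (Sⁿ, •_U) with invertible unit U ∈ L, admitting a basis {U, X, Y} with X •_U X = X, Y •_U Y = Y and X •_U Y = 0 (type 1(a)). Then there exist integers k₁ ≥ k₂ ≥ k₃ ≥ 1 with k₁ + k₂ + k₃ = n and an invertible P ∈ GL(n, ℂ) such that P L Pᵀ = {Diag(x·1_{k₁}, y·1_{k₂}, z·1_{k₃}) : x, y, z ∈ ℂ}. -/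
open Matrix

noncomputable section

/-- The diagonal `0/1` matrix with ones exactly in the diagonal positions `i` with
`a ≤ i < b`. -/
def diagBlk (n a b : ℕ) : Mat n :=
  Matrix.of fun i j => if i = j ∧ a ≤ (i : ℕ) ∧ (i : ℕ) < b then 1 else 0

theorem aux_factor {n : ℕ} (X : Mat n) (hX : X.IsSymm) :
    ∃ (k : ℕ) (A : Matrix (Fin n) (Fin k) ℂ) (B : Matrix (Fin k) (Fin n) ℂ),
      X = A * Aᵀ ∧ B * A = 1 := by
  have hs : LinearMap.IsSymm (Matrix.toBilin' X) := by
    constructor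
    intro x y
    simp only [Matrix.toBilin'_apply', RingHom.id_apply]
    rw [dotProduct_comm, ← Matrix.dotProduct_transpose_mulVec, hX.eq, dotProduct_comm]
  obtain ⟨v, hv⟩ := LinearMap.BilinForm.exists_orthogonal_basis hs
  let e : Fin (Module.finrank ℂ (Fin n → ℂ)) ≃ Fin n := finCongr (by simp)
  let b := v.reindex e
  let S : Mat n := Matrix.of fun i j => b i j
  have hSu : IsUnit S := by
    have : LinearIndependent ℂ S.row := b.linearIndependent
    exact Matrix.linearIndependent_rows_iff_isUnit.mp this
  have hSd : IsUnit S.det := (Matrix.isUnit_iff_isUnit_det S).mp hSu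
  obtain ⟨d, hd⟩ : ∃ d : Fin n → ℂ, S * X * Sᵀ = diagonal d := by
    refine ⟨fun i => (S * X * Sᵀ) i i, ?_⟩
    ext i j
    by_cases hij : i = j
    · subst hij; simp
    · rw [diagonal_apply_ne _ hij]
      have h1 := hv (i := e.symm i) (j := e.symm j) (by simpa using hij)
      have h2 : (S * X * Sᵀ) i j = Matrix.toBilin' X (b i) (b j) := by
        rw [Matrix.toBilin'_apply', Matrix.mul_assoc, Matrix.mul_apply]
        rfl
      rw [h2]
      simpa [b] using h1
  choose q hq using fun i => IsAlgClosed.exists_pow_nat_eq (d i) (n := 2) (by norm_num)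
  let ι := {i : Fin n // q i ≠ 0}
  let f : Fin (Fintype.card ι) ≃ ι := (Fintype.equivFin ι).symm
  let C : Matrix (Fin n) (Fin (Fintype.card ι)) ℂ :=
    of fun i a => if i = (f a : Fin n) then q i else 0
  let C' : Matrix (Fin (Fintype.card ι)) (Fin n) ℂ :=
    of fun a i => if i = (f a : Fin n) then (q i)⁻¹ else 0
  have hC : C * Cᵀ = diagonal d := by
    ext i j
    simp only [Matrix.mul_apply, C, transpose_apply, of_apply]
    rw [f.sum_comp (fun a : ι => (if i = (a : Fin n) then q i else 0) * (if j = (a : Fin n) then q j else 0))]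
    by_cases hi : q i = 0
    · by_cases hij : i = j
      · subst hij; simp [← hq, hi]
      · simp [hi, diagonal_apply_ne _ hij]
    · rw [Finset.sum_eq_single (⟨i, hi⟩ : ι)]
      · by_cases hij : i = j
        · subst hij; simp [← hq, sq]
        · simp [hij, Ne.symm hij]
      · intro a _ ha
        have : i ≠ a := fun h => ha (Subtype.ext h.symm)
        simp [this]
      · simp
  have hC' : C' * C = 1 := by
    ext a c
    simp only [Matrix.mul_apply, C, C', of_apply]
    rw [Finset.sum_eq_single (f a : Fin n)]
    · by_cases hac : a = c
      · subst hac; simp [(f a).2]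
      · have : ((f a : Fin n)) ≠ f c := fun h => hac (f.injective (Subtype.ext h))
        simp [this, hac]
    · intro i _ hi
      simp [hi]
    · simp
  have h1 : S⁻¹ * S = 1 := Matrix.nonsing_inv_mul _ hSd
  have h2 : S * S⁻¹ = 1 := Matrix.mul_nonsing_inv _ hSd
  refine ⟨_, S⁻¹ * C, C' * S, ?_, ?_⟩
  · have h3 : Sᵀ * S⁻¹ᵀ = 1 := by rw [← transpose_mul, h1, transpose_one]
    calc X = (S⁻¹ * S) * X * (Sᵀ * S⁻¹ᵀ) := by rw [h1, h3]; simp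
      _ = S⁻¹ * (S * X * Sᵀ) * S⁻¹ᵀ := by simp only [Matrix.mul_assoc]
      _ = _ := by rw [hd, ← hC, transpose_mul]; simp only [Matrix.mul_assoc]
  · calc C' * S * (S⁻¹ * C) = C' * (S * S⁻¹) * C := by simp only [Matrix.mul_assoc]
      _ = 1 := by rw [h2]; simpa using hC'

theorem aux_cancel {n a c : ℕ} {V M : Mat n} {A : Matrix (Fin n) (Fin a) ℂ}
    {B : Matrix (Fin a) (Fin n) ℂ} {C : Matrix (Fin n) (Fin c) ℂ}
    {D : Matrix (Fin c) (Fin n) ℂ} (hB : B * A = 1) (hD : D * C = 1)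
    (h : (A * Aᵀ) * V * (C * Cᵀ) = M) : Aᵀ * V * C = B * M * Dᵀ := by
  have hD' : Cᵀ * Dᵀ = 1 := by rw [← transpose_mul, hD, transpose_one]
  rw [← h]
  calc Aᵀ * V * C = (B * A) * (Aᵀ * V * C) * (Cᵀ * Dᵀ) := by rw [hB, hD']; simp
    _ = _ := by simp only [Matrix.mul_assoc]

theorem aux_core {n k₁ k₂ k₃ : ℕ} (L : Set (Mat n)) (V X₁ X₂ X₃ : Mat n)
    (A₁ : Matrix (Fin n) (Fin k₁) ℂ) (A₂ : Matrix (Fin n) (Fin k₂) ℂ)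
    (A₃ : Matrix (Fin n) (Fin k₃) ℂ)
    (hV : Vᵀ = V) (h1 : X₁ = A₁ * A₁ᵀ) (h2 : X₂ = A₂ * A₂ᵀ) (h3 : X₃ = A₃ * A₃ᵀ)
    (h11 : A₁ᵀ * V * A₁ = 1) (h22 : A₂ᵀ * V * A₂ = 1) (h33 : A₃ᵀ * V * A₃ = 1)
    (h12 : A₁ᵀ * V * A₂ = 0) (h13 : A₁ᵀ * V * A₃ = 0) (h23 : A₂ᵀ * V * A₃ = 0)
    (hs : (X₁ + X₂ + X₃) * V = 1)
    (hL : ∀ M, M ∈ L ↔ ∃ x y z : ℂ, M = x • X₁ + y • X₂ + z • X₃)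
    (hk : k₁ ≥ k₂ ∧ k₂ ≥ k₃ ∧ k₃ ≥ 1) :
    ∃ k₁ k₂ k₃ : ℕ, k₁ ≥ k₂ ∧ k₂ ≥ k₃ ∧ k₃ ≥ 1 ∧ k₁ + k₂ + k₃ = n ∧
      ∃ P : Mat n, IsUnit P.det ∧
        (fun A => P * A * Pᵀ) '' L =
          {M : Mat n | ∃ x y z : ℂ,
            M = x • diagBlk n 0 k₁ + y • diagBlk n k₁ (k₁ + k₂)
              + z • diagBlk n (k₁ + k₂) n} := by
  have tr : ∀ {a c : ℕ} (A : Matrix (Fin n) (Fin a) ℂ) (C : Matrix (Fin n) (Fin c) ℂ),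
      (Aᵀ * V * C)ᵀ = Cᵀ * V * A := by
    intro a c A C
    simp [transpose_mul, hV, Matrix.mul_assoc]
  have h21 : A₂ᵀ * V * A₁ = 0 := by rw [← tr, h12, transpose_zero]
  have h31 : A₃ᵀ * V * A₁ = 0 := by rw [← tr, h13, transpose_zero]
  have h32 : A₃ᵀ * V * A₂ = 0 := by rw [← tr, h23, transpose_zero]
  have hn : k₁ + k₂ + k₃ = n := by
    have ht : ∀ {a : ℕ} (A : Matrix (Fin n) (Fin a) ℂ), Aᵀ * V * A = 1 →
        trace (A * Aᵀ * V) = a := by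
      intro a A h
      rw [Matrix.mul_assoc, Matrix.trace_mul_comm, h]; simp
    have h := congrArg trace hs
    rw [h1, h2, h3, Matrix.add_mul, Matrix.add_mul, trace_add, trace_add, ht _ h11, ht _ h22,
      ht _ h33, trace_one, Fintype.card_fin] at h
    exact_mod_cast h
  subst hn
  let e : (Fin k₁ ⊕ Fin k₂) ⊕ Fin k₃ ≃ Fin (k₁ + k₂ + k₃) :=
    (Equiv.sumCongr finSumFinEquiv (Equiv.refl _)).trans finSumFinEquiv
  let Q := fromRows (fromRows (A₁ᵀ * V) (A₂ᵀ * V)) (A₃ᵀ * V)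
  let P : Mat (k₁ + k₂ + k₃) := Q.submatrix e.symm id
  have hPA : ∀ {a : ℕ} (A : Matrix (Fin (k₁ + k₂ + k₃)) (Fin a) ℂ) s i,
      (P * A) (e s) i = (fromRows (fromRows (A₁ᵀ * V * A) (A₂ᵀ * V * A)) (A₃ᵀ * V * A)) s i := by
    intro a A s i
    rw [← fromRows_mul, ← fromRows_mul, Matrix.mul_apply, Matrix.mul_apply]
    simp [P, Q]
  have hPP : ∀ {a : ℕ} (A : Matrix (Fin (k₁ + k₂ + k₃)) (Fin a) ℂ),
      P * (A * Aᵀ) * Pᵀ = (P * A) * (P * A)ᵀ := by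
    intro a A; simp [transpose_mul, Matrix.mul_assoc]
  have p1 : P * X₁ * Pᵀ = diagBlk (k₁ + k₂ + k₃) 0 k₁ := by
    rw [h1, hPP]
    ext i j
    obtain ⟨s, rfl⟩ := e.surjective i
    obtain ⟨t, rfl⟩ := e.surjective j
    rw [Matrix.mul_apply]
    simp only [transpose_apply, hPA, h11, h21, h31, diagBlk, of_apply, e.injective.eq_iff]
    rcases s with (s | s) | s <;> rcases t with (t | t) | t <;>
      simp [e, Matrix.one_apply, eq_comm] <;> omega
  have p2 : P * X₂ * Pᵀ = diagBlk (k₁ + k₂ + k₃) k₁ (k₁ + k₂) := by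
    rw [h2, hPP]
    ext i j
    obtain ⟨s, rfl⟩ := e.surjective i
    obtain ⟨t, rfl⟩ := e.surjective j
    rw [Matrix.mul_apply]
    simp only [transpose_apply, hPA, h12, h22, h32, diagBlk, of_apply, e.injective.eq_iff]
    rcases s with (s | s) | s <;> rcases t with (t | t) | t <;>
      simp [e, Matrix.one_apply, eq_comm] <;> omega
  have p3 : P * X₃ * Pᵀ = diagBlk (k₁ + k₂ + k₃) (k₁ + k₂) (k₁ + k₂ + k₃) := by
    rw [h3, hPP]
    ext i j
    obtain ⟨s, rfl⟩ := e.surjective i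
    obtain ⟨t, rfl⟩ := e.surjective j
    rw [Matrix.mul_apply]
    simp only [transpose_apply, hPA, h13, h23, h33, diagBlk, of_apply, e.injective.eq_iff]
    rcases s with (s | s) | s <;> rcases t with (t | t) | t <;>
      simp [e, Matrix.one_apply, eq_comm] <;> omega
  refine ⟨k₁, k₂, k₃, hk.1, hk.2.1, hk.2.2, rfl, P, ?_, ?_⟩
  · have : P * ((X₁ + X₂ + X₃) * Pᵀ) = 1 := by
      rw [← Matrix.mul_assoc, Matrix.mul_add, Matrix.mul_add, Matrix.add_mul, Matrix.add_mul,
        p1, p2, p3]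
      ext i j
      simp only [diagBlk, Matrix.add_apply, of_apply, Matrix.one_apply]
      have := i.2
      split_ifs <;> first | omega | simp
    exact Matrix.isUnit_det_of_right_inverse this
  · have key : ∀ x y z : ℂ, P * (x • X₁ + y • X₂ + z • X₃) * Pᵀ =
        x • diagBlk (k₁ + k₂ + k₃) 0 k₁ + y • diagBlk (k₁ + k₂ + k₃) k₁ (k₁ + k₂)
          + z • diagBlk (k₁ + k₂ + k₃) (k₁ + k₂) (k₁ + k₂ + k₃) := by
      intro x y z
      simp only [Matrix.mul_add, Matrix.add_mul, Matrix.mul_smul, Matrix.smul_mul, p1, p2, p3]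
    ext M
    constructor
    · rintro ⟨N, hN, rfl⟩
      obtain ⟨x, y, z, rfl⟩ := (hL N).1 hN
      exact ⟨x, y, z, key x y z⟩
    · rintro ⟨x, y, z, rfl⟩
      exact ⟨_, (hL _).2 ⟨x, y, z, rfl⟩, key x y z⟩

/-- Every Jordan net in `Sⁿ` of type 1(a) (basis `{U, X, Y}` with `X•X = X`,
`Y•Y = Y`, `X•Y = 0`) is congruent to the diagonal net
`Diag(x·1_{k₁}, y·1_{k₂}, z·1_{k₃})` for some `k₁ ≥ k₂ ≥ k₃ ≥ 1` with
`k₁ + k₂ + k₃ = n`. -/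
theorem stmt15 {n : ℕ} (U : Mat n) (hU : IsUnit U.det)
    (L : Submodule ℂ (Mat n)) (hsym : ∀ X ∈ L, Matrix.IsSymm X)
    (hUL : U ∈ L) (hclosed : ∀ X ∈ L, ∀ Y ∈ L, jmul U X Y ∈ L)
    (hdim : Module.finrank ℂ L = 3)
    (X Y : Mat n) (hX : X ∈ L) (hY : Y ∈ L)
    (hbasis : LinearIndependent ℂ ![U, X, Y])
    (hspan : Submodule.span ℂ {U, X, Y} = L)
    (hXX : jmul U X X = X) (hYY : jmul U Y Y = Y) (hXY : jmul U X Y = 0) :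
    ∃ k₁ k₂ k₃ : ℕ, k₁ ≥ k₂ ∧ k₂ ≥ k₃ ∧ k₃ ≥ 1 ∧ k₁ + k₂ + k₃ = n ∧
      ∃ P : Mat n, IsUnit P.det ∧
        (fun A => P * A * Pᵀ) '' (L : Set (Mat n)) =
          {M : Mat n | ∃ x y z : ℂ,
            M = x • diagBlk n 0 k₁ + y • diagBlk n k₁ (k₁ + k₂)
              + z • diagBlk n (k₁ + k₂) n} := by
  set V : Mat n := U⁻¹ with hVdef
  have hUV : U * V = 1 := Matrix.mul_nonsing_inv _ hU
  have hVU : V * U = 1 := Matrix.nonsing_inv_mul _ hU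
  have hVs : Vᵀ = V := by rw [hVdef, Matrix.transpose_nonsing_inv, (hsym U hUL).eq]
  have idem : ∀ W : Mat n, jmul U W W = W → W * V * W = W := by
    intro W h
    unfold jmul at h
    rw [← two_smul ℂ, smul_smul] at h
    simpa using h
  have hX2 := idem X hXX
  have hY2 := idem Y hYY
  have hsum : X * V * Y + Y * V * X = 0 := by
    unfold jmul at hXY
    exact (smul_eq_zero.mp hXY).resolve_left (by norm_num)
  have e1 : X * V * Y + X * V * Y * V * X = 0 := by
    have := congrArg (fun M => X * V * M) hsum
    simp only [Matrix.mul_add, Matrix.mul_zero, ← Matrix.mul_assoc] at this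
    rwa [hX2] at this
  have e2 : X * V * Y * V * X + Y * V * X = 0 := by
    have := congrArg (fun M => M * V * X) hsum
    simp only [Matrix.add_mul, Matrix.zero_mul] at this
    rwa [show Y * V * X * V * X = Y * V * (X * V * X) by simp only [Matrix.mul_assoc], hX2] at this
  have e3 : X * V * Y = Y * V * X := by
    rw [add_comm] at e2
    rw [eq_neg_of_add_eq_zero_left e1, eq_neg_of_add_eq_zero_left e2]
  have hxy : X * V * Y = 0 := by
    rw [← e3, ← two_smul ℂ] at hsum
    simpa using hsum
  have hyx : Y * V * X = 0 := e3 ▸ hxy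
  obtain ⟨Z, hZ⟩ : ∃ Z, Z = U - X - Y := ⟨_, rfl⟩
  have hUZ : X + Y + Z = U := by rw [hZ]; abel
  have hxz : X * V * Z = 0 := by
    rw [hZ, Matrix.mul_sub, Matrix.mul_sub, hX2, hxy, Matrix.mul_assoc, hVU]; simp
  have hyz : Y * V * Z = 0 := by
    rw [hZ, Matrix.mul_sub, Matrix.mul_sub, hY2, hyx, Matrix.mul_assoc, hVU]; simp
  have hZ2 : Z * V * Z = Z := by
    have : U * V * Z = Z := by rw [hUV, Matrix.one_mul]
    rwa [← hUZ, Matrix.add_mul, Matrix.add_mul, Matrix.add_mul, Matrix.add_mul, hxz, hyz,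
      zero_add, zero_add] at this
  have hZL : Z ∈ L := hZ ▸ L.sub_mem (L.sub_mem hUL hX) hY
  have hX0 : X ≠ 0 := hbasis.ne_zero 1
  have hY0 : Y ≠ 0 := hbasis.ne_zero 2
  have hZ0 : Z ≠ 0 := by
    intro h
    rw [Fintype.linearIndependent_iff] at hbasis
    have := hbasis ![1, -1, -1] (by
      simp [Fin.sum_univ_three]
      rw [← h, hZ]; abel) 0
    simp at this
  obtain ⟨k₁, A₁, B₁, f1, g1⟩ := aux_factor X (hsym X hX)
  obtain ⟨k₂, A₂, B₂, f2, g2⟩ := aux_factor Y (hsym Y hY)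
  obtain ⟨k₃, A₃, B₃, f3, g3⟩ := aux_factor Z (hsym Z hZL)
  have pos : ∀ (k : ℕ) (A : Matrix (Fin n) (Fin k) ℂ) (W : Mat n), W = A * Aᵀ → W ≠ 0 → k ≥ 1 := by
    intro k A W h h0
    by_contra hk
    have : k = 0 := by omega
    subst this
    apply h0
    rw [h]
    ext i j
    simp [Matrix.mul_apply]
  have q1 := pos _ _ _ f1 hX0
  have q2 := pos _ _ _ f2 hY0
  have q3 := pos _ _ _ f3 hZ0
  have diag1 : ∀ (k : ℕ) (A : Matrix (Fin n) (Fin k) ℂ) (B : Matrix (Fin k) (Fin n) ℂ) (W : Mat n),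
      W = A * Aᵀ → B * A = 1 → W * V * W = W → Aᵀ * V * A = 1 := by
    intro k A B W h hB hW
    rw [h] at hW
    rw [aux_cancel hB hB hW, ← Matrix.mul_assoc, hB, Matrix.one_mul, ← transpose_mul, hB,
      transpose_one]
  have h11 := diag1 _ _ _ _ f1 g1 hX2
  have h22 := diag1 _ _ _ _ f2 g2 hY2
  have h33 := diag1 _ _ _ _ f3 g3 hZ2
  have h12 : A₁ᵀ * V * A₂ = 0 := by
    rw [f1, f2] at hxy
    rw [aux_cancel g1 g2 hxy]; simp
  have h13 : A₁ᵀ * V * A₃ = 0 := by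
    rw [f1, f3] at hxz
    rw [aux_cancel g1 g3 hxz]; simp
  have h23 : A₂ᵀ * V * A₃ = 0 := by
    rw [f2, f3] at hyz
    rw [aux_cancel g2 g3 hyz]; simp
  have tr : ∀ {a c : ℕ} (A : Matrix (Fin n) (Fin a) ℂ) (C : Matrix (Fin n) (Fin c) ℂ),
      (Aᵀ * V * C)ᵀ = Cᵀ * V * A := by
    intro a c A C
    simp [transpose_mul, hVs, Matrix.mul_assoc]
  have h21 : A₂ᵀ * V * A₁ = 0 := by rw [← tr, h12, transpose_zero]
  have h31 : A₃ᵀ * V * A₁ = 0 := by rw [← tr, h13, transpose_zero]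
  have h32 : A₃ᵀ * V * A₂ = 0 := by rw [← tr, h23, transpose_zero]
  have s123 : (X + Y + Z) * V = 1 := by rw [hUZ, hUV]
  have L123 : ∀ M, M ∈ (L : Set (Mat n)) ↔ ∃ x y z : ℂ, M = x • X + y • Y + z • Z := by
    intro M
    constructor
    · intro hM
      rw [SetLike.mem_coe, ← hspan, Submodule.mem_span_triple] at hM
      obtain ⟨a, b, c, rfl⟩ := hM
      refine ⟨a + b, a + c, a, ?_⟩
      rw [← hUZ]
      module
    · rintro ⟨x, y, z, rfl⟩
      exact L.add_mem (L.add_mem (L.smul_mem _ hX) (L.smul_mem _ hY)) (L.smul_mem _ hZL)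
  have permL : ∀ (W₁ W₂ W₃ : Mat n), (∀ x y z : ℂ, ∃ x' y' z' : ℂ,
      x • X + y • Y + z • Z = x' • W₁ + y' • W₂ + z' • W₃) → W₁ ∈ L → W₂ ∈ L → W₃ ∈ L →
      ∀ M, M ∈ (L : Set (Mat n)) ↔ ∃ x y z : ℂ, M = x • W₁ + y • W₂ + z • W₃ := by
    intro W₁ W₂ W₃ h m1 m2 m3 M
    constructor
    · intro hM
      obtain ⟨x, y, z, rfl⟩ := (L123 M).1 hM
      exact h x y z
    · rintro ⟨x, y, z, rfl⟩
      exact L.add_mem (L.add_mem (L.smul_mem _ m1) (L.smul_mem _ m2)) (L.smul_mem _ m3)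
  rcases le_total k₁ k₂ with a | a <;> rcases le_total k₂ k₃ with b | b <;>
    rcases le_total k₁ k₃ with c | c
  · exact aux_core L V Z Y X A₃ A₂ A₁ hVs f3 f2 f1 h33 h22 h11 h32 h31 h21
      (by rw [← s123]; congr 1; abel)
      (permL _ _ _ (fun x y z => ⟨z, y, x, by abel⟩) hZL hY hX) ⟨b, a, q1⟩
  · exact aux_core L V Z Y X A₃ A₂ A₁ hVs f3 f2 f1 h33 h22 h11 h32 h31 h21
      (by rw [← s123]; congr 1; abel)
      (permL _ _ _ (fun x y z => ⟨z, y, x, by abel⟩) hZL hY hX) ⟨b, a, q1⟩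
  · exact aux_core L V Y Z X A₂ A₃ A₁ hVs f2 f3 f1 h22 h33 h11 h23 h21 h31
      (by rw [← s123]; congr 1; abel)
      (permL _ _ _ (fun x y z => ⟨y, z, x, by abel⟩) hY hZL hX) ⟨b, c, q1⟩
  · exact aux_core L V Y X Z A₂ A₁ A₃ hVs f2 f1 f3 h22 h11 h33 h21 h23 h13
      (by rw [← s123]; congr 1; abel)
      (permL _ _ _ (fun x y z => ⟨y, x, z, by abel⟩) hY hX hZL) ⟨a, c, q3⟩
  · exact aux_core L V Z X Y A₃ A₁ A₂ hVs f3 f1 f2 h33 h11 h22 h31 h32 h12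
      (by rw [← s123]; congr 1; abel)
      (permL _ _ _ (fun x y z => ⟨z, x, y, by abel⟩) hZL hX hY) ⟨c, a, q2⟩
  · exact aux_core L V X Z Y A₁ A₃ A₂ hVs f1 f3 f2 h11 h33 h22 h13 h12 h32
      (by rw [← s123]; congr 1; abel)
      (permL _ _ _ (fun x y z => ⟨x, z, y, by abel⟩) hX hZL hY) ⟨c, b, q2⟩
  · exact aux_core L V X Y Z A₁ A₂ A₃ hVs f1 f2 f3 h11 h22 h33 h12 h13 h23
      s123 L123 ⟨a, b, q3⟩
  · exact aux_core L V X Y Z A₁ A₂ A₃ hVs f1 f2 f3 h11 h22 h33 h12 h13 h23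
      s123 L123 ⟨a, b, q3⟩
end
end

section
/- Let L ⊆ Sⁿ be a 3-dimensional Jordan subalgebra of (Sⁿ, •_U) with invertible unit U ∈ L, admitting a basis {U, X, Y} with X •_U X = U, Y •_U Y = U and X •_U Y = 0 (type 1(b)). Then n is even, and there exists an invertible P ∈ GL(n, ℂ) such that P L Pᵀ = {1_{n/2} ⊗ A : A a symmetric 2×2 complex matrix}, the set of block-diagonal matrices consisting of n/2 identical symmetric 2×2 blocks. -/
open Matrix

noncomputable section

/-- The Kronecker product `1_{n/2} ⊗ A` for a `2 × 2` matrix `A`: the `n × n`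
block-diagonal matrix whose consecutive `2 × 2` diagonal blocks all equal `A`. -/
def blockRep (n : ℕ) (A : Matrix (Fin 2) (Fin 2) ℂ) : Mat n :=
  Matrix.of fun i j =>
    if (i : ℕ) / 2 = (j : ℕ) / 2 then
      A ⟨(i : ℕ) % 2, by omega⟩ ⟨(j : ℕ) % 2, by omega⟩
    else 0

/-- Every Jordan net in `Sⁿ` of type 1(b) (basis `{U, X, Y}` with `X•X = U`,
`Y•Y = U`, `X•Y = 0`) exists only for even `n` and is congruent to the Kronecker
product of `1_{n/2}` with `S²`. -/
theorem core {V : Type} [AddCommGroup V] [Module ℂ V] [FiniteDimensional ℂ V]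
    (B : LinearMap.BilinForm ℂ V) (hs : B.IsSymm) (hn : ∀ x, (∀ y, B x y = 0) → x = 0)
    (S T : V →ₗ[ℂ] V) (hS : ∀ x, S (S x) = x) (hT : ∀ x, T (T x) = x)
    (hST : ∀ x, S (T x) = - T (S x))
    (hBS : ∀ x y, B (S x) y = B x (S y)) (hBT : ∀ x y, B (T x) y = B x (T y)) :
    ∃ (k : ℕ) (e : Fin k → V), Module.finrank ℂ V = k * 2 ∧ (∀ i, S (e i) = e i) ∧
      (∀ i j, B (e i) (e j) = if i = j then 1 else 0) := by
  classical
  let E : Submodule ℂ V := LinearMap.ker (S - LinearMap.id)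
  have hE : ∀ x, x ∈ E ↔ S x = x := fun x => by
    simp [E, sub_eq_zero]
  have horth : ∀ x y, S x = x → S y = -y → B x y = 0 := by
    intro x y hx hy
    have := hBS x y
    rw [hx, hy, map_neg] at this
    exact self_eq_neg.mp this
  have hproj : ∀ y, S (y + S y) = y + S y := fun y => by rw [map_add, hS, add_comm]
  have hproj' : ∀ y, S (y - S y) = -(y - S y) := fun y => by rw [map_sub, hS]; abel
  have hdec : ∀ y, y = (1/2:ℂ) • (y + S y) + (1/2:ℂ) • (y - S y) := fun y => by module
  let B' : LinearMap.BilinForm ℂ E := B.restrict E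
  have hs' : B'.IsSymm := ⟨fun x y => hs.eq x y⟩
  have hn' : B'.Nondegenerate := by
    have key : ∀ x : E, (∀ y, B' x y = 0) → x = 0 := by
      intro x hx
      apply Subtype.ext
      apply hn
      intro y
      have h1 := hx ⟨y + S y, (hE _).2 (hproj y)⟩
      have h2 := horth x _ ((hE _).1 x.2) (hproj' y)
      have h1' : B x (y + S y) = 0 := h1
      rw [hdec y, map_add, map_smul, map_smul, h1', h2]; simp
    refine ⟨key, fun x hx => key x fun y => ?_⟩
    rw [← hx y]; exact hs'.eq y x |>.symm ▸ rfl
  obtain ⟨v, hv⟩ := LinearMap.BilinForm.exists_orthogonal_basis (B := B') ⟨fun x y => hs'.eq x y⟩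
  have hvv : ∀ i, B' (v i) (v i) ≠ 0 := fun i =>
    LinearMap.BilinForm.iIsOrtho.not_isOrtho_basis_self_of_nondegenerate hv hn' i
  have hc : ∀ i, ∃ c : ℂ, c ^ 2 = (B' (v i) (v i))⁻¹ := fun i =>
    IsAlgClosed.exists_pow_nat_eq _ (by norm_num)
  choose c hc using hc
  have hc0 : ∀ i, c i ≠ 0 := fun i h => by
    have := hc i
    rw [h] at this
    simp at this
    exact hvv i this.symm
  let e : Fin (Module.finrank ℂ E) → V := fun i => c i • (v i : V)
  have heS : ∀ i, S (e i) = e i := fun i => by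
    simp only [e, map_smul, (hE _).1 (v i).2]
  have heB : ∀ i j, B (e i) (e j) = if i = j then 1 else 0 := by
    intro i j
    have h0 : B (e i) (e j) = c i * (c j * B' (v i) (v j)) := by
      simp [e, B']; ring
    rw [h0]
    split_ifs with h
    · subst h
      rw [← mul_assoc, ← sq, hc, inv_mul_cancel₀ (hvv i)]
    · have : B' (v i) (v j) = 0 := hv h
      rw [this]; simp
  refine ⟨_, e, ?_, heS, heB⟩
  -- dimension
  let F : Submodule ℂ V := LinearMap.ker (S + LinearMap.id)
  have hF : ∀ x, x ∈ F ↔ S x = -x := fun x => by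
    simp [F, add_eq_zero_iff_eq_neg]
  have hcompl : IsCompl E F := by
    refine IsCompl.of_eq ?_ ?_
    · rw [eq_bot_iff]
      rintro x ⟨h1, h2⟩
      have h1 := (hE x).1 h1
      have h2 := (hF x).1 h2
      rw [h1] at h2
      have h3 : x = (1/2:ℂ) • (x - -x) := by module
      rw [← h2, sub_self, smul_zero] at h3
      exact h3
    · rw [eq_top_iff]
      intro x _
      rw [hdec x]
      exact Submodule.add_mem_sup (E.smul_mem _ ((hE _).2 (hproj x)))
        (F.smul_mem _ ((hF _).2 (hproj' x)))
  have hEF : Module.finrank ℂ E = Module.finrank ℂ F := by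
    let φ : E ≃ₗ[ℂ] F := 
      { toFun := fun x => ⟨T x, (hF _).2 (by rw [hST, (hE _).1 x.2])⟩
        invFun := fun x => ⟨T x, (hE _).2 (by rw [hST, (hF _).1 x.2, map_neg, neg_neg])⟩
        map_add' := fun x y => Subtype.ext (by simp)
        map_smul' := fun a x => Subtype.ext (by simp)
        left_inv := fun x => Subtype.ext (by simp [hT])
        right_inv := fun x => Subtype.ext (by simp [hT]) }
    exact φ.finrank_eq
  have := Submodule.finrank_add_eq_of_isCompl hcompl
  omega

theorem stmt16 {n : ℕ} (U : Mat n) (hU : IsUnit U.det)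
    (L : Submodule ℂ (Mat n)) (hsym : ∀ X ∈ L, Matrix.IsSymm X)
    (hUL : U ∈ L) (hclosed : ∀ X ∈ L, ∀ Y ∈ L, jmul U X Y ∈ L)
    (hdim : Module.finrank ℂ L = 3)
    (X Y : Mat n) (hX : X ∈ L) (hY : Y ∈ L)
    (hbasis : LinearIndependent ℂ ![U, X, Y])
    (hspan : Submodule.span ℂ {U, X, Y} = L)
    (hXX : jmul U X X = U) (hYY : jmul U Y Y = U) (hXY : jmul U X Y = 0) :
    Even n ∧
    ∃ P : Mat n, IsUnit P.det ∧
      (fun A => P * A * Pᵀ) '' (L : Set (Mat n)) =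
        {M : Mat n | ∃ A : Matrix (Fin 2) (Fin 2) ℂ, A.IsSymm ∧ M = blockRep n A} := by
  have hUs := hsym U hUL
  have hXs := hsym X hX
  have hYs := hsym Y hY
  have hVU : U⁻¹ * U = 1 := Matrix.nonsing_inv_mul U hU
  have hUV : U * U⁻¹ = 1 := Matrix.mul_nonsing_inv U hU
  have h1 : X * U⁻¹ * X = U := by
    refine Eq.trans ?_ hXX
    rw [jmul]; module
  have h2 : Y * U⁻¹ * Y = U := by
    refine Eq.trans ?_ hYY
    rw [jmul]; module
  have h3 : X * U⁻¹ * Y = - (Y * U⁻¹ * X) := by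
    have : X * U⁻¹ * Y + Y * U⁻¹ * X = (2:ℂ) • jmul U X Y := by
      rw [jmul]; module
    rw [hXY, smul_zero] at this
    exact eq_neg_of_add_eq_zero_left this
  clear hXX hYY hXY hdim hbasis hclosed
  have hUS : U * (U⁻¹ * X) = X := by rw [← mul_assoc, hUV, one_mul]
  have hUT : U * (U⁻¹ * Y) = Y := by rw [← mul_assoc, hUV, one_mul]
  have swap : ∀ M : Mat n, M.IsSymm → ∀ x y, x ⬝ᵥ M *ᵥ y = y ⬝ᵥ M *ᵥ x := by
    intro M hM x y
    rw [Matrix.dotProduct_mulVec, ← Matrix.mulVec_transpose, hM.eq, dotProduct_comm]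
  have adj : ∀ M : Mat n, M.IsSymm → ∀ x y, ((U⁻¹ * M) *ᵥ x) ⬝ᵥ U *ᵥ y
      = x ⬝ᵥ U *ᵥ ((U⁻¹ * M) *ᵥ y) := by
    intro M hM x y
    rw [swap U hUs, Matrix.mulVec_mulVec, Matrix.mulVec_mulVec, ← mul_assoc, hUV, one_mul,
      swap M hM]
  have hSS : (U⁻¹ * X) * (U⁻¹ * X) = 1 := by
    rw [mul_assoc, ← mul_assoc X, h1, hVU]
  have hTT : (U⁻¹ * Y) * (U⁻¹ * Y) = 1 := by
    rw [mul_assoc, ← mul_assoc Y, h2, hVU]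
  have hST : (U⁻¹ * X) * (U⁻¹ * Y) = -((U⁻¹ * Y) * (U⁻¹ * X)) := by
    have : U⁻¹ * (X * U⁻¹ * Y) = -(U⁻¹ * (Y * U⁻¹ * X)) := by rw [h3, mul_neg]
    simpa only [mul_assoc] using this
  obtain ⟨k, e, hk, heS, heB⟩ := core (Matrix.toBilin' U)
    ⟨fun x y => by simp only [Matrix.toBilin'_apply']; exact swap U hUs x y⟩
    (by
      intro x hx
      have h : U *ᵥ x = 0 := by
        apply dotProduct_eq_zero
        intro y
        have := hx y
        rw [Matrix.toBilin'_apply', swap U hUs, dotProduct_comm] at this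
        exact this
      have : U⁻¹ *ᵥ (U *ᵥ x) = 0 := by rw [h, Matrix.mulVec_zero]
      rwa [Matrix.mulVec_mulVec, hVU, Matrix.one_mulVec] at this)
    (Matrix.toLin' (U⁻¹ * X)) (Matrix.toLin' (U⁻¹ * Y))
    (fun x => by simp only [Matrix.toLin'_apply, Matrix.mulVec_mulVec, hSS, Matrix.one_mulVec])
    (fun x => by simp only [Matrix.toLin'_apply, Matrix.mulVec_mulVec, hTT, Matrix.one_mulVec])
    (fun x => by simp only [Matrix.toLin'_apply, Matrix.mulVec_mulVec, hST, Matrix.neg_mulVec])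
    (fun x y => by simp only [Matrix.toLin'_apply, Matrix.toBilin'_apply']; exact adj X hXs x y)
    (fun x y => by simp only [Matrix.toLin'_apply, Matrix.toBilin'_apply']; exact adj Y hYs x y)
  simp only [Matrix.toLin'_apply, Matrix.toBilin'_apply'] at heS heB
  rw [Module.finrank_fin_fun] at hk
  subst hk
  refine ⟨⟨k, by ring⟩, ?_⟩
  obtain ⟨f, hf⟩ : ∃ f : Fin k → Fin (k*2) → ℂ, ∀ i, (U⁻¹ * Y) *ᵥ e i = f i := ⟨_, fun _ => rfl⟩
  have hTf : ∀ i, (U⁻¹ * Y) *ᵥ f i = e i := fun i => by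
    rw [← hf, Matrix.mulVec_mulVec, hTT, Matrix.one_mulVec]
  have hSf : ∀ i, (U⁻¹ * X) *ᵥ f i = - f i := fun i => by
    rw [← hf, Matrix.mulVec_mulVec, hST, Matrix.neg_mulVec, ← Matrix.mulVec_mulVec, heS]
  have hff : ∀ i j, f i ⬝ᵥ U *ᵥ f j = if i = j then 1 else 0 := fun i j => by
    rw [← hf i, adj Y hYs, hTf, heB]
  have hef : ∀ i j, e i ⬝ᵥ U *ᵥ f j = 0 := fun i j => by
    have := adj X hXs (e i) (f j)
    rw [heS, hSf, Matrix.mulVec_neg, dotProduct_neg] at this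
    exact self_eq_neg.mp this
  have hfe : ∀ i j, f i ⬝ᵥ U *ᵥ e j = 0 := fun i j => by
    rw [swap U hUs, hef]
  have toX : ∀ x y, x ⬝ᵥ X *ᵥ y = x ⬝ᵥ U *ᵥ ((U⁻¹ * X) *ᵥ y) := fun x y => by
    rw [Matrix.mulVec_mulVec, hUS]
  have toY : ∀ x y, x ⬝ᵥ Y *ᵥ y = x ⬝ᵥ U *ᵥ ((U⁻¹ * Y) *ᵥ y) := fun x y => by
    rw [Matrix.mulVec_mulVec, hUT]
  let P : Mat (k*2) := Matrix.of fun i => ![e i.divNat, f i.divNat] i.modNat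
  have hent : ∀ (M : Mat (k*2)) i j, (P * M * Pᵀ) i j = P i ⬝ᵥ M *ᵥ P j := by
    intro M i j
    rw [mul_assoc]
    rfl
  have main : ∀ a b c : ℂ, P * (a • U + b • X + c • Y) * Pᵀ
      = blockRep (k*2) !![a + b, c; c, a - b] := by
    intro a b c
    ext i j
    rw [hent]
    have hd : ((i:ℕ)/2 = (j:ℕ)/2) ↔ i.divNat = j.divNat := by
      rw [Fin.ext_iff]; rfl
    have hb : blockRep (k*2) !![a + b, c; c, a - b] i j = if i.divNat = j.divNat then
        (!![a + b, c; c, a - b] : Matrix (Fin 2) (Fin 2) ℂ) i.modNat j.modNat else 0 := by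
      simp only [blockRep, Matrix.of_apply, hd]; rfl
    rw [hb]
    have hP : ∀ i, P i = ![e i.divNat, f i.divNat] i.modNat := fun i => rfl
    rw [hP i, hP j]
    simp only [Matrix.add_mulVec, Matrix.smul_mulVec, dotProduct_add, dotProduct_smul, toX, toY]
    generalize i.divNat = i1
    generalize j.divNat = j1
    generalize i.modNat = i2
    generalize j.modNat = j2
    fin_cases i2 <;> fin_cases j2 <;>
      simp [heS, hf, hTf, hSf, hff, hef, hfe, heB, Matrix.mulVec_neg] <;>
      split_ifs <;> ring
  refine ⟨P, ?_, ?_⟩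
  · have h := main 1 0 0
    have h1 : blockRep (k*2) !![(1:ℂ) + 0, 0; 0, 1 - 0] = 1 := by
      have : !![(1:ℂ) + 0, 0; 0, 1 - 0] = 1 := by simp [Matrix.one_fin_two]
      rw [this]
      ext i j
      simp only [blockRep, Matrix.of_apply, Matrix.one_apply, Fin.ext_iff]
      split_ifs <;> first | rfl | omega
    rw [h1] at h
    have := congrArg Matrix.det h
    rw [mul_assoc, Matrix.det_mul, Matrix.det_one] at this
    exact IsUnit.of_mul_eq_one _ this
  · ext M
    simp only [Set.mem_image, Set.mem_ofPred_eq, SetLike.mem_coe, ← hspan,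
      Submodule.mem_span_triple]
    constructor
    · rintro ⟨_, ⟨a, b, c, rfl⟩, rfl⟩
      refine ⟨_, ?_, main a b c⟩
      ext i j
      fin_cases i <;> fin_cases j <;> rfl
    · rintro ⟨A, hA, rfl⟩
      refine ⟨_, ⟨(A 0 0 + A 1 1)/2, (A 0 0 - A 1 1)/2, A 0 1, rfl⟩, ?_⟩
      rw [main]
      congr 1
      have := hA.apply 0 1
      ext i j
      fin_cases i <;> fin_cases j <;> simp [this] <;> ring
end
end

section
/- In S⁵, let J₅ be the 5×5 matrix with ones on the antidiagonal, and let L* = span_ℂ{J₅, E₁₅+E₅₁, E₁₄+E₄₁}. Then L* is a 3-dimensional Jordan subalgebra of (S⁵, •_{J₅}) with unit J₅, and every nonzero matrix in L* has rank at least 2 (so L* contains no rank-one matrix). -/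
open Matrix

noncomputable section

/-- `J₅`, the `5 × 5` matrix with ones on the antidiagonal. -/
def J5 : Mat 5 := !![(0:ℂ),0,0,0,1;0,0,0,1,0;0,0,1,0,0;0,1,0,0,0;1,0,0,0,0]

/-- `E₁₅ + E₅₁`. -/
def E15 : Mat 5 := !![(0:ℂ),0,0,0,1;0,0,0,0,0;0,0,0,0,0;0,0,0,0,0;1,0,0,0,0]

/-- `E₁₄ + E₄₁`. -/
def E14 : Mat 5 := !![(0:ℂ),0,0,1,0;0,0,0,0,0;0,0,0,0,0;1,0,0,0,0;0,0,0,0,0]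

/-- The net `L* = span{J₅, E₁₅+E₅₁, E₁₄+E₄₁}` in `S⁵`. -/
def Lstar : Submodule ℂ (Mat 5) := Submodule.span ℂ {J5, E15, E14}

set_option maxHeartbeats 4000000

lemma mem_Lstar (M : Mat 5) : M ∈ Lstar ↔ ∃ a b c : ℂ,
    M = !![0,0,0,c,a+b;0,0,0,a,0;0,0,a,0,0;c,a,0,0,0;a+b,0,0,0,0] := by
  have key : ∀ a b c : ℂ, a • J5 + b • E15 + c • E14 =
      !![0,0,0,c,a+b;0,0,0,a,0;0,0,a,0,0;c,a,0,0,0;a+b,0,0,0,0] := by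
    intro a b c
    ext i j
    fin_cases i <;> fin_cases j <;> simp [J5, E15, E14]
  unfold Lstar
  rw [Submodule.mem_span_triple]
  constructor
  · rintro ⟨a, b, c, h⟩
    exact ⟨a, b, c, by rw [← key, h]⟩
  · rintro ⟨a, b, c, h⟩
    exact ⟨a, b, c, by rw [key, h]⟩

lemma J5_inv : J5⁻¹ = J5 := by
  apply Matrix.inv_eq_right_inv
  ext i j
  fin_cases i <;> fin_cases j <;> simp [J5, Matrix.mul_apply, Fin.sum_univ_five]

lemma two_le_rank (M : Mat 5) (f g : Fin 2 → Fin 5)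
    (h : (M.submatrix f g).det ≠ 0) : 2 ≤ M.rank := by
  have h1 : (M.submatrix f g).rank = 2 := by
    rw [Matrix.rank_of_isUnit _ ((Matrix.isUnit_iff_isUnit_det _).2 (isUnit_iff_ne_zero.2 h))]
    simp
  have h2 : M.submatrix f g =
      (1 : Mat 5).submatrix f id * M * (1 : Mat 5).submatrix id g := by
    ext i j
    simp [Matrix.mul_apply, Matrix.one_apply]
  rw [← h1, h2]
  exact (Matrix.rank_mul_le_left _ _).trans (Matrix.rank_mul_le_right _ _)

/-- `L*` is a `3`-dimensional Jordan subalgebra of `(S⁵, •_{J₅})` with unit `J₅`,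
and every nonzero matrix in `L*` has rank at least `2`. -/
theorem stmt17 :
    (∀ M ∈ Lstar, Matrix.IsSymm M) ∧
    J5 ∈ Lstar ∧
    (∀ X ∈ Lstar, ∀ Y ∈ Lstar, jmul J5 X Y ∈ Lstar) ∧
    Module.finrank ℂ Lstar = 3 ∧
    (∀ M ∈ Lstar, M ≠ 0 → 2 ≤ M.rank) := by
  refine ⟨?_, Submodule.subset_span (by simp), ?_, ?_, ?_⟩
  · intro M hM
    obtain ⟨a, b, c, rfl⟩ := (mem_Lstar M).1 hM
    ext i j
    fin_cases i <;> fin_cases j <;> simp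
  · intro X hX Y hY
    obtain ⟨a, b, c, rfl⟩ := (mem_Lstar X).1 hX
    obtain ⟨a', b', c', rfl⟩ := (mem_Lstar Y).1 hY
    refine (mem_Lstar _).2 ⟨a * a', a * b' + b * a' + b * b',
      a * c' + c * a' + (b * c' + c * b') / 2, ?_⟩
    rw [jmul, J5_inv]
    ext i j
    fin_cases i <;> fin_cases j <;>
      simp [J5] <;> ring
  · have hli : LinearIndependent ℂ ![J5, E15, E14] := by
      rw [Fintype.linearIndependent_iff]
      intro g hg
      simp only [Fin.sum_univ_three] at hg
      have e1 := congrFun (congrFun hg 2) 2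
      have e2 := congrFun (congrFun hg 0) 4
      have e3 := congrFun (congrFun hg 0) 3
      simp [J5, E15, E14] at e1 e2 e3
      intro i
      fin_cases i
      · exact e1
      · simpa [e1] using e2
      · exact e3
    have := finrank_span_eq_card hli
    have hr : Set.range ![J5, E15, E14] = {J5, E15, E14} := by
      ext x
      simp only [Set.mem_range, Fin.exists_fin_succ, Set.mem_insert_iff, Set.mem_singleton_iff]
      simp [eq_comm]
    rw [hr] at this
    exact this.trans (by simp)
  · intro M hM h0
    obtain ⟨a, b, c, rfl⟩ := (mem_Lstar M).1 hM
    by_cases ha : a = 0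
    · by_cases hb : b = 0
      · by_cases hc : c = 0
        · exfalso
          apply h0
          subst ha hb hc
          ext i j
          fin_cases i <;> fin_cases j <;> simp
        · exact two_le_rank _ ![0, 3] ![0, 3] (by rw [Matrix.det_fin_two]; simp [hc])
      · exact two_le_rank _ ![0, 4] ![0, 4] (by rw [Matrix.det_fin_two]; simp [ha, hb])
    · exact two_le_rank _ ![1, 2] ![3, 2] (by rw [Matrix.det_fin_two]; simp [ha])
end
end

section
/- Let n ≥ 3 and let L ⊆ Sⁿ be a regular 3-dimensional linear subspace. Then every nonzero matrix in L has rank at least n − 1 if and only if the adjugate matrices {adj(M) : M ∈ L} span all of Sⁿ (equivalently, the linear span of the reciprocal variety L⁻¹ is the whole ambient space Sⁿ). -/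
open Matrix

noncomputable section

/-- The space `Sⁿ` of symmetric `n × n` complex matrices, as a submodule. -/
def symmSub (n : ℕ) : Submodule ℂ (Mat n) where
  carrier := {X : Mat n | X.IsSymm}
  add_mem' := fun ha hb => ha.add hb
  zero_mem' := Matrix.isSymm_zero
  smul_mem' := fun c _ hX => hX.smul c
section helpers

open MvPolynomial in
abbrev PR := MvPolynomial (Fin 3) ℂ

lemma adj_pair {R : Type*} [CommRing R] {n : ℕ} (A : Matrix (Fin n) (Fin n) R) (i j : Fin n) :
    ∃ Q : Matrix (Fin n) (Fin n) R,
      A.adjugate * Matrix.single i j 1 * A.adjugate - A.adjugate j i • A.adjugate = A.det • Q := by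
  have hrow : A + Matrix.single i j 1 = A.updateRow i (A i + Pi.single j 1) := by
    ext a b
    by_cases h : a = i
    · subst h
      simp [Matrix.single_apply, Pi.single_apply, eq_comm]
    · simp [Matrix.updateRow_ne h, Ne.symm h]
  have hdet : (A + Matrix.single i j 1).det = A.det + A.adjugate j i := by
    rw [hrow, Matrix.det_updateRow_add, Matrix.adjugate_apply, Matrix.updateRow_eq_self]
  have hcol : (A + Matrix.single i j 1).adjugate * Matrix.single i j 1
      = A.adjugate * Matrix.single i j 1 := by
    ext a b
    by_cases hb : b = j
    · subst hb
      simp only [Matrix.mul_single_apply_same, mul_one]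
      rw [hrow, Matrix.adjugate_apply, Matrix.adjugate_apply, Matrix.updateRow_idem]
    · rw [Matrix.mul_single_apply_of_ne _ _ _ _ _ hb, Matrix.mul_single_apply_of_ne _ _ _ _ _ hb]
  have h1 := Matrix.adjugate_mul (A + Matrix.single i j 1)
  rw [Matrix.mul_add, hcol, hdet] at h1
  have h2 := congrArg (· * A.adjugate) h1
  simp only [Matrix.add_mul, Matrix.mul_assoc, Matrix.mul_adjugate, Matrix.smul_mul,
    Matrix.one_mul, Matrix.mul_smul, Matrix.mul_one] at h2
  refine ⟨A.adjugate - (A + Matrix.single i j 1).adjugate, ?_⟩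
  rw [smul_sub, Matrix.mul_assoc]
  rw [add_smul] at h2
  rw [sub_eq_sub_iff_add_eq_add, add_comm, h2]

lemma adj_E {R : Type*} [CommRing R] {n : ℕ} (A E : Matrix (Fin n) (Fin n) R) :
    ∃ Q : Matrix (Fin n) (Fin n) R,
      A.adjugate * E * A.adjugate - (E * A.adjugate).trace • A.adjugate = A.det • Q := by
  choose Q hQ using adj_pair A
  refine ⟨∑ i, ∑ j, E i j • Q i j, ?_⟩
  have hE : E = ∑ i, ∑ j, E i j • Matrix.single i j (1 : R) := by
    conv_lhs => rw [Matrix.matrix_eq_sum_single E]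
    simp
  have htr : (E * A.adjugate).trace = ∑ i, ∑ j, E i j * A.adjugate j i := by
    simp [Matrix.trace, Matrix.mul_apply]
  rw [htr]
  conv_lhs => enter [1]; rw [hE]
  simp only [Finset.smul_sum, Matrix.mul_sum, Matrix.sum_mul, Finset.sum_smul,
    Matrix.mul_smul, Matrix.smul_mul, ← Finset.sum_sub_distrib]
  refine Finset.sum_congr rfl fun i _ => Finset.sum_congr rfl fun j _ => ?_
  rw [smul_comm, ← hQ i j, smul_sub, smul_smul]

lemma mat_smul_cancel {R : Type*} [CommRing R] [IsDomain R] {n : ℕ} {r : R} (hr : r ≠ 0)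
    {X Y : Matrix (Fin n) (Fin n) R} (h : r • X = r • Y) : X = Y := by
  ext i j
  have := congrFun (congrFun h i) j
  simpa [hr] using this

/-- homotopy data -/
lemma adj_Q {R : Type*} [CommRing R] [IsDomain R] {n : ℕ} (A E : Matrix (Fin n) (Fin n) R)
    (hf : A.det ≠ 0) :
    ∃ Q : Matrix (Fin n) (Fin n) R,
      A.adjugate * E * A.adjugate = (E * A.adjugate).trace • A.adjugate + A.det • Q ∧
      A * Q = E * A.adjugate - (E * A.adjugate).trace • 1 ∧
      Q * A = A.adjugate * E - (E * A.adjugate).trace • 1 ∧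
      (Aᵀ = A → Eᵀ = E → Qᵀ = Q) := by
  obtain ⟨Q, hQ⟩ := adj_E A E
  have h1 : A.adjugate * E * A.adjugate = (E * A.adjugate).trace • A.adjugate + A.det • Q := by
    rw [← hQ]; abel
  refine ⟨Q, h1, ?_, ?_, ?_⟩
  · apply mat_smul_cancel hf
    rw [← Matrix.mul_smul, ← hQ, Matrix.mul_sub, Matrix.mul_smul, Matrix.mul_adjugate,
      ← Matrix.mul_assoc, ← Matrix.mul_assoc, Matrix.mul_adjugate, smul_sub]
    simp only [Matrix.smul_mul, Matrix.mul_smul, Matrix.one_mul, Matrix.mul_one]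
    rw [smul_comm]
  · apply mat_smul_cancel hf
    rw [← Matrix.smul_mul, ← hQ, Matrix.sub_mul, Matrix.smul_mul, Matrix.adjugate_mul,
      Matrix.mul_assoc, Matrix.adjugate_mul, smul_sub]
    simp only [Matrix.smul_mul, Matrix.mul_smul, Matrix.one_mul, Matrix.mul_one]
    rw [smul_comm]
  · intro hA hE
    apply mat_smul_cancel hf
    have hN : A.adjugateᵀ = A.adjugate := by rw [Matrix.adjugate_transpose, hA]
    rw [← Matrix.transpose_smul, ← hQ]
    simp [hN, hE, Matrix.mul_assoc]

lemma homotopy_S {n : ℕ} (A S E : Matrix (Fin n) (Fin n) PR) (hf : A.det ≠ 0)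
    (hA : Aᵀ = A) (hS : Sᵀ = S) (hE : Eᵀ = E) (h0 : (S * A.adjugate).trace = 0) :
    ∃ X : Matrix (Fin n) (Fin n) PR,
      (E * A.adjugate).trace • S = A * X + Xᵀ * A := by
  obtain ⟨Q, -, q1, q2, q3⟩ := adj_Q A E hf
  obtain ⟨P, -, p1, p2, p3⟩ := adj_Q A S hf
  have q3 := q3 hA hE
  have p3 := p3 hA hS
  have key : (2 : ℂ) • ((E * A.adjugate).trace • S) = A * (P * E - Q * S) + (P * E - Q * S)ᵀ * A := by
    rw [h0] at p1 p2
    simp only [Matrix.transpose_sub, Matrix.transpose_mul, q3, p3, hS, hE, Matrix.mul_sub,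
      Matrix.sub_mul]
    rw [← Matrix.mul_assoc, ← Matrix.mul_assoc, Matrix.mul_assoc E, Matrix.mul_assoc S, p1, p2, q1, q2]
    simp only [Matrix.sub_mul, Matrix.mul_sub, Matrix.smul_mul, Matrix.mul_smul, Matrix.one_mul,
      Matrix.mul_one, Matrix.mul_assoc, zero_smul, sub_zero, two_smul]
    abel
  refine ⟨(1/2 : ℂ) • (P * E - Q * S), ?_⟩
  rw [Matrix.mul_smul, Matrix.transpose_smul, Matrix.smul_mul, ← smul_add, ← key, smul_smul]
  norm_num

lemma trace_skew {n : ℕ} (E Q : Matrix (Fin n) (Fin n) PR) (hE : Eᵀ = E) (hQ : Qᵀ = -Q) :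
    (E * Q).trace = 0 := by
  have h : (E * Q).trace = -(E * Q).trace := by
    conv_lhs => rw [← Matrix.trace_transpose, Matrix.transpose_mul, hE, hQ, Matrix.neg_mul,
      Matrix.trace_neg, Matrix.trace_mul_comm]
  exact self_eq_neg.mp h

lemma homotopy_X {n : ℕ} (A X E : Matrix (Fin n) (Fin n) PR) (hf : A.det ≠ 0)
    (hA : Aᵀ = A) (hE : Eᵀ = E) (h0 : A * X + Xᵀ * A = 0) :
    ∃ K : Matrix (Fin n) (Fin n) PR, Kᵀ = -K ∧
      (E * A.adjugate).trace • X = K * A := by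
  have hN : A.adjugateᵀ = A.adjugate := by rw [Matrix.adjugate_transpose, hA]
  have hXN : X * A.adjugate = -(A.adjugate * Xᵀ) := by
    apply mat_smul_cancel hf
    have := congrArg (fun Z => A.adjugate * Z * A.adjugate) h0
    simp only [Matrix.mul_add, Matrix.add_mul, Matrix.mul_zero, Matrix.zero_mul] at this
    rw [← Matrix.mul_assoc, Matrix.adjugate_mul, Matrix.mul_assoc _ _ A.adjugate,
      Matrix.mul_assoc _ _ A.adjugate, Matrix.mul_assoc _ A, Matrix.mul_adjugate] at this
    simp only [Matrix.smul_mul, Matrix.one_mul, Matrix.mul_smul, Matrix.mul_one] at this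
    rw [smul_neg]
    exact eq_neg_of_add_eq_zero_left this
  have hsk : (X * A.adjugate)ᵀ = -(X * A.adjugate) := by
    rw [Matrix.transpose_mul, hN, hXN, neg_neg]
  obtain ⟨Q, q0, -, -, q3⟩ := adj_Q A E hf
  obtain ⟨P, p0, -, -, -⟩ := adj_Q A (E * X) hf
  rw [Matrix.mul_assoc E, trace_skew E _ hE hsk, zero_smul, zero_add] at p0
  have p0' := congrArg Matrix.transpose p0
  have e1 : X * A.adjugate * E * A.adjugate = - (A.det • Pᵀ) := by
    rw [← Matrix.transpose_smul, ← p0]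
    rw [Matrix.mul_assoc A.adjugate, Matrix.mul_assoc E, Matrix.transpose_mul,
      Matrix.transpose_mul, hsk, hN, hE]
    simp [Matrix.mul_assoc]
  have e2 : (E * A.adjugate).trace • (X * A.adjugate) = A.det • (-(Pᵀ + X * Q)) := by
    have : X * (A.adjugate * E * A.adjugate) = - (A.det • Pᵀ) := by
      rw [← e1]; simp [Matrix.mul_assoc]
    rw [q0, Matrix.mul_add, Matrix.mul_smul, Matrix.mul_smul] at this
    rw [smul_neg, smul_add, neg_add, ← this]; abel
  refine ⟨-(Pᵀ + X * Q), ?_, ?_⟩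
  · apply mat_smul_cancel hf
    rw [← Matrix.transpose_smul, smul_neg _ (-(Pᵀ + X * Q)), ← e2, Matrix.transpose_smul, hsk, smul_neg]
  · apply mat_smul_cancel hf
    rw [← Matrix.smul_mul, ← e2, Matrix.smul_mul, Matrix.mul_assoc, Matrix.adjugate_mul,
      Matrix.mul_smul, Matrix.mul_one, smul_comm]

open MvPolynomial

lemma Xne (i : Fin 3) : (X i : PR) ≠ 0 := MvPolynomial.X_ne_zero i

lemma X_cop {i j : Fin 3} (h : i ≠ j) {a b : PR} (e : (X j : PR) * a = X i * b) :
    ∃ c, a = X i * c ∧ b = X j * c := by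
  have hp : Prime (X i : PR) := MvPolynomial.X_prime
  have : (X i : PR) ∣ X j * a := ⟨b, e⟩
  rcases hp.dvd_or_dvd this with h1 | h1
  · exact absurd (MvPolynomial.X_dvd_X.mp h1) h
  · obtain ⟨c, rfl⟩ := h1
    refine ⟨c, rfl, ?_⟩
    apply mul_left_cancel₀ (Xne i)
    rw [← e]; ring

lemma koszul1 {n : ℕ} (F : Fin 3 → Matrix (Fin n) (Fin n) PR)
    (h : ∀ i j, (X j : PR) • F i = (X i : PR) • F j) :
    ∃ Y, ∀ i, F i = (X i : PR) • Y := by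
  have h01 : ∀ a b, ∃ c, F 0 a b = X 0 * c ∧ F 1 a b = X 1 * c := fun a b =>
    X_cop (by decide) (congrFun (congrFun (h 0 1) a) b)
  choose Y hY0 hY1 using h01
  refine ⟨Matrix.of Y, ?_⟩
  intro i
  apply mat_smul_cancel (Xne 0)
  rw [h i 0]
  ext1 a b
  simp [hY0]
  ring

lemma koszul2s {p q r : PR} (h : (X 2 : PR) * p - X 1 * q + X 0 * r = 0) :
    ∃ α β γ : PR, p = X 1 * α - X 0 * β ∧ q = X 2 * α - X 0 * γ ∧ r = X 2 * β - X 1 * γ := by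
  have hp : p ∈ Ideal.span (X '' ({0, 1} : Set (Fin 3)) : Set PR) := by
    have h2 : (X 2 : PR) * p ∈ Ideal.span (X '' ({0, 1} : Set (Fin 3)) : Set PR) := by
      have : (X 2 : PR) * p = q * X 1 - r * X 0 := by linear_combination h
      rw [this]
      exact Ideal.sub_mem _ (Ideal.mul_mem_left _ _ (Ideal.subset_span ⟨1, by simp, rfl⟩))
        (Ideal.mul_mem_left _ _ (Ideal.subset_span ⟨0, by simp, rfl⟩))
    rw [mem_ideal_span_X_image] at h2 ⊢
    intro m hm
    obtain ⟨i, hi, hi'⟩ := h2 (Finsupp.single 2 1 + m) (by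
      rw [mem_support_iff, coeff_X_mul]; exact mem_support_iff.mp hm)
    refine ⟨i, hi, ?_⟩
    rcases hi with rfl | rfl <;> simpa using hi'
  rw [Set.image_pair, Ideal.mem_span_pair] at hp
  obtain ⟨a, b, rfl⟩ := hp
  obtain ⟨c, hc1, hc2⟩ := X_cop (i := 0) (j := 1) (by decide) (a := X 2 * b - q)
    (b := - X 2 * a - r) (by linear_combination h)
  exact ⟨b, -a, c, by ring, by linear_combination -hc1, by linear_combination -hc2⟩

lemma koszul2 {n : ℕ} {P Q S : Matrix (Fin n) (Fin n) PR}
    (h : (X 2 : PR) • P - (X 1 : PR) • Q + (X 0 : PR) • S = 0) :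
    ∃ L : Fin 3 → Matrix (Fin n) (Fin n) PR, P = (X 1 : PR) • L 0 - (X 0 : PR) • L 1 ∧
      Q = (X 2 : PR) • L 0 - (X 0 : PR) • L 2 ∧ S = (X 2 : PR) • L 1 - (X 1 : PR) • L 2 := by
  have := fun a b => koszul2s (p := P a b) (q := Q a b) (r := S a b) (by
    simpa using congrFun (congrFun h a) b)
  choose α β γ h1 h2 h3 using this
  refine ⟨![Matrix.of α, Matrix.of β, Matrix.of γ], ?_, ?_, ?_⟩
  · ext1 a b; simpa using h1 a b
  · ext1 a b; simpa using h2 a b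
  · ext1 a b; simpa using h3 a b

lemma ideal_top {n : ℕ} (A : Matrix (Fin n) (Fin n) PR) (hA : Aᵀ = A)
    (hz : ∀ x : Fin 3 → ℂ, (eval x).mapMatrix A.adjugate = 0 → x = 0)
    (J : Ideal PR) (hJ : ∀ E : Matrix (Fin n) (Fin n) PR, Eᵀ = E → (E * A.adjugate).trace ∈ J)
    (hst : ∀ r, (∀ i, X i * r ∈ J) → r ∈ J) : (1 : PR) ∈ J := by
  have hN : A.adjugateᵀ = A.adjugate := by rw [Matrix.adjugate_transpose, hA]
  have hrad : Ideal.span (Set.range (X : Fin 3 → PR)) ≤ J.radical := by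
    rw [← vanishingIdeal_zeroLocus_eq_radical (K := ℂ), Ideal.span_le]
    rintro _ ⟨i, rfl⟩
    rw [SetLike.mem_coe, mem_vanishingIdeal_iff]
    intro x hx
    have : x = 0 := by
      apply hz
      ext a b
      have h1 := hx _ (hJ (Matrix.single a b 1 + Matrix.single b a 1) (by
        simp [Matrix.transpose_single, add_comm]))
      have h2 : A.adjugate b a = A.adjugate a b := congrFun (congrFun hN a) b
      rw [Matrix.add_mul, Matrix.trace_add, Matrix.trace_single_mul, Matrix.trace_single_mul] at h1
      simp [h2] at h1
      simpa [aeval_eq_eval] using h1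
    simp [this]
  obtain ⟨k, hk⟩ := Ideal.exists_pow_le_of_le_radical_of_fg hrad (IsNoetherian.noetherian _)
  have : ∀ k, Ideal.span (Set.range (X : Fin 3 → PR)) ^ k ≤ J → (1 : PR) ∈ J := by
    intro k
    induction k with
    | zero => intro h; exact h (by simp)
    | succ k ih =>
      intro h
      apply ih
      intro r hr
      apply hst
      intro i
      apply h
      rw [pow_succ']
      exact Ideal.mul_mem_mul (Ideal.subset_span ⟨i, rfl⟩) hr
  exact this k hk

lemma mat_cancel_A {n : ℕ} {A K : Matrix (Fin n) (Fin n) PR} (hf : A.det ≠ 0)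
    (h : K * A = 0) : K = 0 := by
  apply mat_smul_cancel hf
  have := congrArg (· * A.adjugate) h
  simp only [Matrix.mul_assoc, Matrix.mul_adjugate, Matrix.mul_smul, Matrix.mul_one,
    Matrix.zero_mul] at this
  rw [this, smul_zero]

lemma exact_X {n : ℕ} (A Z : Matrix (Fin n) (Fin n) PR) (hf : A.det ≠ 0)
    (hA : Aᵀ = A)
    (hz : ∀ x : Fin 3 → ℂ, (eval x).mapMatrix A.adjugate = 0 → x = 0)
    (h0 : A * Z + Zᵀ * A = 0) :
    ∃ K : Matrix (Fin n) (Fin n) PR, Kᵀ = -K ∧ Z = K * A := by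
  let J : Ideal PR :=
    { carrier := {r | ∃ K : Matrix (Fin n) (Fin n) PR, Kᵀ = -K ∧ r • Z = K * A}
      add_mem' := by
        rintro a b ⟨K, h1, h2⟩ ⟨K', h1', h2'⟩
        exact ⟨K + K', by rw [Matrix.transpose_add, h1, h1']; abel, by
          rw [add_smul, h2, h2', Matrix.add_mul]⟩
      zero_mem' := ⟨0, by simp, by simp⟩
      smul_mem' := by
        rintro c a ⟨K, h1, h2⟩
        exact ⟨c • K, by rw [Matrix.transpose_smul, h1, smul_neg], by
          rw [smul_assoc, h2, Matrix.smul_mul]⟩ }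
  have h1 : (1 : PR) ∈ J := by
    apply ideal_top A hA hz J
    · intro E hE
      exact homotopy_X A Z E hf hA hE h0
    · intro r hr
      choose K hK1 hK2 using hr
      obtain ⟨Y, hY⟩ := koszul1 K (by
        intro i j
        rw [← sub_eq_zero]
        apply mat_cancel_A hf
        rw [Matrix.sub_mul, Matrix.smul_mul, Matrix.smul_mul, ← hK2, ← hK2, smul_smul, smul_smul,
          ← sub_smul]
        ring_nf
        simp)
      refine ⟨Y, ?_, ?_⟩
      · apply mat_smul_cancel (Xne 0)
        rw [smul_neg, ← Matrix.transpose_smul, ← hY, hK1]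
      · apply mat_smul_cancel (Xne 0)
        rw [smul_smul, hK2, hY, Matrix.smul_mul]
  obtain ⟨K, hK, e⟩ := h1
  exact ⟨K, hK, by rw [← e, one_smul]⟩

lemma exact_S {n : ℕ} (A S : Matrix (Fin n) (Fin n) PR) (hf : A.det ≠ 0)
    (hA : Aᵀ = A)
    (hz : ∀ x : Fin 3 → ℂ, (eval x).mapMatrix A.adjugate = 0 → x = 0)
    (hS : Sᵀ = S) (h0 : (S * A.adjugate).trace = 0) :
    ∃ Z : Matrix (Fin n) (Fin n) PR, S = A * Z + Zᵀ * A := by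
  let J : Ideal PR :=
    { carrier := {r | ∃ Z : Matrix (Fin n) (Fin n) PR, r • S = A * Z + Zᵀ * A}
      add_mem' := by
        rintro a b ⟨K, h2⟩ ⟨K', h2'⟩
        exact ⟨K + K', by
          rw [add_smul, h2, h2', Matrix.transpose_add, Matrix.add_mul, Matrix.mul_add]; abel⟩
      zero_mem' := ⟨0, by simp⟩
      smul_mem' := by
        rintro c a ⟨K, h2⟩
        exact ⟨c • K, by
          rw [smul_assoc, h2, Matrix.transpose_smul, Matrix.smul_mul, Matrix.mul_smul, smul_add]⟩ }
  have h1 : (1 : PR) ∈ J := by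
    apply ideal_top A hA hz J
    · intro E hE
      exact homotopy_S A S E hf hA hS hE h0
    · intro r hr
      choose F hF using hr
      have hk : ∀ i j, ∃ K : Matrix (Fin n) (Fin n) PR, Kᵀ = -K ∧
          (X j : PR) • F i - (X i : PR) • F j = K * A := by
        intro i j
        apply exact_X A _ hf hA hz
        have e1 : (X j : PR) • ((X i * r : PR) • S) = (X i : PR) • ((X j * r : PR) • S) := by
          rw [smul_smul, smul_smul]; ring_nf
        rw [hF, hF, ← sub_eq_zero] at e1
        rw [← e1]
        simp only [Matrix.transpose_sub, Matrix.transpose_smul, Matrix.sub_mul, Matrix.mul_sub,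
          Matrix.smul_mul, Matrix.mul_smul, smul_add]
        abel
      choose K hK1 hK2 using hk
      obtain ⟨M, m1, m2, m3⟩ := koszul2 (P := K 0 1) (Q := K 0 2) (S := K 1 2) (by
        apply mat_cancel_A hf
        simp only [Matrix.add_mul, Matrix.sub_mul, Matrix.smul_mul, ← hK2, smul_sub, smul_smul]
        rw [mul_comm (X 2 : PR) (X 1), mul_comm (X 2 : PR) (X 0), mul_comm (X 1 : PR) (X 0)]
        abel)
      let L : Fin 3 → Matrix (Fin n) (Fin n) PR := fun i => (1/2 : ℂ) • (M i - (M i)ᵀ)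
      have hL : ∀ i, (L i)ᵀ = - L i := by
        intro i
        simp only [L, Matrix.transpose_smul, Matrix.transpose_sub, Matrix.transpose_transpose]
        rw [← smul_neg, neg_sub]
      have hsk : ∀ (P P1 P2 : Matrix (Fin n) (Fin n) PR) (a b : PR), Pᵀ = -P →
          P = a • P1 - b • P2 → 
          P = a • ((1/2 : ℂ) • (P1 - P1ᵀ)) - b • ((1/2 : ℂ) • (P2 - P2ᵀ)) := by
        intro P P1 P2 a b h1 h2
        have h3 : P = (1/2 : ℂ) • (P - Pᵀ) := by
          rw [h1, sub_neg_eq_add, ← two_smul ℂ, smul_smul]; norm_num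
        rw [h3, h2]
        simp only [Matrix.transpose_sub, Matrix.transpose_smul]
        rw [smul_comm a, smul_comm b, ← smul_sub]
        congr 1
        simp only [smul_sub]
        abel
      have m1' := hsk _ _ _ _ _ (hK1 0 1) m1
      have m2' := hsk _ _ _ _ _ (hK1 0 2) m2
      have m3' := hsk _ _ _ _ _ (hK1 1 2) m3
      have c01 := hK2 0 1
      have c02 := hK2 0 2
      have c12 := hK2 1 2
      rw [m1'] at c01
      rw [m2'] at c02
      rw [m3'] at c12
      change _ = ((X 1 : PR) • L 0 - (X 0 : PR) • L 1) * A at c01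
      change _ = ((X 2 : PR) • L 0 - (X 0 : PR) • L 2) * A at c02
      change _ = ((X 2 : PR) • L 1 - (X 1 : PR) • L 2) * A at c12
      have hc : ∀ i j, (X j : PR) • F i - (X i : PR) • F j
          = ((X j : PR) • L i - (X i : PR) • L j) * A := by
        have sw : ∀ i j, (X j : PR) • F i - (X i : PR) • F j
            = ((X j : PR) • L i - (X i : PR) • L j) * A → 
            (X i : PR) • F j - (X j : PR) • F i
            = ((X i : PR) • L j - (X j : PR) • L i) * A := by
          intro i j h
          rw [← neg_sub, h, ← neg_sub ((X i : PR) • L j), Matrix.neg_mul, neg_neg]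
        intro i j
        fin_cases i <;> fin_cases j
        · simp
        · exact c01
        · exact c02
        · exact sw _ _ c01
        · simp
        · exact c12
        · exact sw _ _ c02
        · exact sw _ _ c12
        · simp
      clear_value L
      obtain ⟨Y, hY⟩ := koszul1 (fun i => F i - L i * A) (by
        intro i j
        have := hc i j
        rw [Matrix.sub_mul, Matrix.smul_mul, Matrix.smul_mul] at this
        rw [smul_sub, smul_sub, sub_eq_sub_iff_sub_eq_sub]
        exact this)
      refine ⟨Y, ?_⟩
      apply mat_smul_cancel (Xne 0)
      rw [smul_smul, hF]
      have hF0 : F 0 = (X 0 : PR) • Y + L 0 * A := by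
        rw [← hY 0]; simp
      rw [hF0, Matrix.transpose_add, Matrix.transpose_mul, Matrix.transpose_smul, hA, hL, smul_add]
      simp only [Matrix.mul_add, Matrix.add_mul, Matrix.mul_smul, Matrix.smul_mul, Matrix.mul_neg,
        Matrix.neg_mul, Matrix.mul_assoc]
      abel
  obtain ⟨Z, e⟩ := h1
  exact ⟨Z, by rw [← e, one_smul]⟩

lemma adj_diag_zero_iff {n : ℕ} (hn : 1 ≤ n) (D : Fin n → ℂ) :
    (Matrix.diagonal D).adjugate = 0 ↔ (Matrix.diagonal D).rank < n - 1 := by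
  classical
  have e : (Matrix.diagonal D).adjugate = 0 ↔ ∀ i, ∃ j, j ≠ i ∧ D j = 0 := by
    rw [Matrix.adjugate_diagonal, Matrix.diagonal_eq_zero, funext_iff]
    simp [Finset.prod_eq_zero_iff]
  rw [e, Matrix.rank_diagonal, Fintype.card_subtype]
  constructor
  · intro h
    obtain ⟨j, -, hj⟩ := h ⟨0, hn⟩
    obtain ⟨k, hkj, hk⟩ := h j
    have hsub : (Finset.univ.filter fun i => D i ≠ 0) ⊆ (Finset.univ.erase j).erase k := by
      intro a ha
      simp only [Finset.mem_filter, Finset.mem_univ, true_and] at ha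
      simp only [Finset.mem_erase, Finset.mem_univ, and_true]
      exact ⟨fun h => ha (h ▸ hk), fun h => ha (h ▸ hj)⟩
    have hc := Finset.card_le_card hsub
    rw [Finset.card_erase_of_mem (by simp [hkj]), Finset.card_erase_of_mem (by simp),
      Finset.card_univ, Fintype.card_fin] at hc
    have : 2 ≤ n := by
      have h1 := j.2; have h2 := k.2
      by_contra hh
      exact hkj (Fin.ext (by omega))
    omega
  · intro h i
    by_contra! hh
    have hsub : Finset.univ.erase i ⊆ (Finset.univ.filter fun i => D i ≠ 0) := by
      intro a ha
      simp only [Finset.mem_erase, Finset.mem_univ, and_true] at ha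
      simp [hh a ha]
    have hc := Finset.card_le_card hsub
    rw [Finset.card_erase_of_mem (by simp), Finset.card_univ, Fintype.card_fin] at hc
    omega

lemma adj_zero_iff {n : ℕ} (hn : 1 ≤ n) (M : Mat n) : M.adjugate = 0 ↔ M.rank < n - 1 := by
  obtain ⟨L, L', D, h⟩ := Matrix.Pivot.exists_list_transvec_mul_diagonal_mul_list_transvec M
  have hP := Matrix.TransvectionStruct.det_toMatrix_prod L
  have hP' := Matrix.TransvectionStruct.det_toMatrix_prod L'
  generalize (L.map Matrix.TransvectionStruct.toMatrix).prod = P at *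
  generalize (L'.map Matrix.TransvectionStruct.toMatrix).prod = P' at *
  have hr : M.rank = (Matrix.diagonal D).rank := by
    rw [h, Matrix.rank_mul_eq_left_of_isUnit_det _ _ (by rw [hP']; exact isUnit_one),
      Matrix.rank_mul_eq_right_of_isUnit_det _ _ (by rw [hP]; exact isUnit_one)]
  have ha : M.adjugate = P'.adjugate * (Matrix.diagonal D).adjugate * P.adjugate := by
    rw [h, Matrix.adjugate_mul_distrib, Matrix.adjugate_mul_distrib, Matrix.mul_assoc]
  have hb : (Matrix.diagonal D).adjugate = P' * M.adjugate * P := by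
    rw [ha]
    calc (Matrix.diagonal D).adjugate
        = (P' * P'.adjugate) * (Matrix.diagonal D).adjugate * (P.adjugate * P) := by
          rw [Matrix.mul_adjugate, Matrix.adjugate_mul, hP, hP']; simp
      _ = _ := by simp only [Matrix.mul_assoc]
  rw [hr, ← adj_diag_zero_iff hn]
  constructor
  · intro h; rw [hb, h]; simp
  · intro h; rw [ha, h]; simp

/-- generic matrix of the net -/
def genA {n : ℕ} (b : Fin 3 → Mat n) : Matrix (Fin n) (Fin n) PR :=
  ∑ i, (X i : PR) • (b i).map C

lemma genA_eval {n : ℕ} (b : Fin 3 → Mat n) (x : Fin 3 → ℂ) :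
    (eval x).mapMatrix (genA b) = ∑ i, x i • b i := by
  ext i j
  simp [genA, Matrix.sum_apply]

lemma genA_adj_eval {n : ℕ} (b : Fin 3 → Mat n) (x : Fin 3 → ℂ) :
    (eval x).mapMatrix (genA b).adjugate = (∑ i, x i • b i).adjugate := by
  rw [RingHom.map_adjugate, genA_eval]

lemma genA_tr_eval {n : ℕ} (b : Fin 3 → Mat n) (x : Fin 3 → ℂ) (S : Mat n) :
    eval x ((S.map C * (genA b).adjugate).trace) = (S * (∑ i, x i • b i).adjugate).trace := by
  rw [← genA_adj_eval]
  simp [Matrix.trace, Matrix.mul_apply]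

lemma genA_homog {n : ℕ} (b : Fin 3 → Mat n) (i j : Fin n) : (genA b i j).IsHomogeneous 1 := by
  rw [genA, Matrix.sum_apply]
  apply IsHomogeneous.sum
  intro k _
  simpa [mul_comm] using isHomogeneous_C_mul_X (b k i j) k

lemma det_homog {m : ℕ} (A : Matrix (Fin m) (Fin m) PR) (h : ∀ i j, (A i j).IsHomogeneous 1) :
    A.det.IsHomogeneous m := by
  rw [Matrix.det_apply']
  apply IsHomogeneous.sum
  intro σ _
  have h1 : (∏ i, A (σ i) i).IsHomogeneous (∑ i : Fin m, 1) :=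
    IsHomogeneous.prod _ _ _ fun i _ => h _ _
  have := h1.C_mul (((Equiv.Perm.sign σ : ℤˣ) : ℤ) : ℂ)
  simpa using this

lemma genA_adj_homog {n : ℕ} (hn : 1 ≤ n) (b : Fin 3 → Mat n) (i j : Fin n) :
    ((genA b).adjugate i j).IsHomogeneous (n - 1) := by
  obtain ⟨m, rfl⟩ : ∃ m, n = m + 1 := ⟨n - 1, by omega⟩
  rw [Matrix.adjugate_fin_succ_eq_det_submatrix]
  have := (det_homog ((genA b).submatrix j.succAbove i.succAbove)
    (fun _ _ => genA_homog b _ _)).C_mul ((-1) ^ (j + i : ℕ))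
  simpa using this

lemma backward {n : ℕ} (hn : 1 ≤ n) (b : Fin 3 → Mat n)
    (hinj : ∀ S : Mat n, Sᵀ = S → (∀ x : Fin 3 → ℂ, (S * (∑ i, x i • b i).adjugate).trace = 0) →
      S = 0)
    (x0 : Fin 3 → ℂ) (hx0 : x0 ≠ 0) : (∑ i, x0 i • b i).adjugate ≠ 0 := by
  intro h0
  let P := {p : Fin n × Fin n // p.1 ≤ p.2}
  let T : (P → ℂ) →ₗ[ℂ] Mat n :=
    { toFun := fun g => Matrix.of fun i j => g ⟨(min i j, max i j), min_le_max⟩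
      map_add' := fun _ _ => rfl
      map_smul' := fun _ _ => rfl }
  let Φ : Mat n →ₗ[ℂ] PR :=
    { toFun := fun S => (S.map C * (genA b).adjugate).trace
      map_add' := by
        intro S S'
        rw [Matrix.map_add _ (by simp), Matrix.add_mul, Matrix.trace_add]
      map_smul' := by
        intro c S
        simp [Matrix.trace, Matrix.mul_apply, Finset.smul_sum, MvPolynomial.smul_eq_C_mul,
          Finset.mul_sum, mul_assoc] }
  let ex : P → (Fin 3 →₀ ℕ) := fun p =>
    Finsupp.equivFunOnFinite.symm ![(p.1.1 : ℕ), p.1.2 - p.1.1, n - 1 - p.1.2]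
  let Ψ : PR →ₗ[ℂ] (P → ℂ) := LinearMap.pi fun p => lcoeff ℂ (ex p)
  have hΨ : ∀ p : PR, p.IsHomogeneous (n - 1) → Ψ p = 0 → p = 0 := by
    intro p hp h
    ext d
    rw [coeff_zero]
    by_contra hd
    have hdeg : d.degree = n - 1 := by
      by_contra hne
      exact hd (hp.coeff_eq_zero hne)
    rw [Finsupp.degree_eq_sum, Fin.sum_univ_three] at hdeg
    have := congrFun h ⟨(⟨d 0, by omega⟩, ⟨d 0 + d 1, by omega⟩), by simp [Fin.le_def]⟩
    apply hd
    change coeff (ex _) p = 0 at this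
    convert this using 2
    ext k
    fin_cases k
    · simp [ex]
    · simp [ex]
    · simp [ex]; omega
  have hΦ : ∀ S, (Φ S).IsHomogeneous (n - 1) := by
    intro S
    change ((S.map C * (genA b).adjugate).trace).IsHomogeneous (n - 1)
    simp only [Matrix.trace, Matrix.diag_apply, Matrix.mul_apply]
    apply IsHomogeneous.sum
    intro i _
    apply IsHomogeneous.sum
    intro j _
    exact (genA_adj_homog hn b j i).C_mul _
  have hT : ∀ g, (T g)ᵀ = T g := by
    intro g
    ext i j
    change g ⟨(min j i, max j i), min_le_max⟩ = g ⟨(min i j, max i j), min_le_max⟩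
    congr 2
    rw [min_comm, max_comm]
  have hcomp : Function.Injective (Ψ ∘ₗ Φ ∘ₗ T) := by
    rw [← LinearMap.ker_eq_bot, LinearMap.ker_eq_bot']
    intro g hg
    have h1 : Φ (T g) = 0 := hΨ _ (hΦ _) hg
    have h2 : T g = 0 := hinj _ (hT g) (by
      intro x
      rw [← genA_tr_eval]
      change eval x (Φ (T g)) = 0
      rw [h1, map_zero])
    funext p
    have h3 := congrFun (congrFun h2 p.1.1) p.1.2
    change g ⟨(min p.1.1 p.1.2, max p.1.1 p.1.2), min_le_max⟩ = 0 at h3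
    change g p = 0
    rw [← h3]
    congr 1
    apply Subtype.ext
    change p.1 = (min p.1.1 p.1.2, max p.1.1 p.1.2)
    rw [min_eq_left p.2, max_eq_right p.2]
  have hsurj := LinearMap.injective_iff_surjective.mp hcomp
  obtain ⟨i, hi⟩ := Function.ne_iff.mp hx0
  obtain ⟨g, hg⟩ := hsurj (Ψ (X i ^ (n - 1)))
  have h4 : Φ (T g) - X i ^ (n - 1) = 0 := by
    apply hΨ
    · exact (hΦ _).sub (isHomogeneous_X_pow i (n - 1))
    · rw [map_sub, sub_eq_zero]; exact hg
  have h5 := congrArg (eval x0) (sub_eq_zero.mp h4)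
  change eval x0 ((T g).map C * (genA b).adjugate).trace = _ at h5
  rw [genA_tr_eval, h0] at h5
  simp at h5
  exact hi (by simpa using (eq_zero_or_pos (n - 1)).elim (fun h => by simp [h] at h5) (fun h => (pow_eq_zero_iff h.ne').mp h5.symm))

lemma forward {n : ℕ} (b : Fin 3 → Mat n) (hb : ∀ i, (b i)ᵀ = b i)
    (hreg : ∃ x : Fin 3 → ℂ, (∑ i, x i • b i).det ≠ 0)
    (hz : ∀ x : Fin 3 → ℂ, (∑ i, x i • b i).adjugate = 0 → x = 0)
    (S : Mat n) (hS : Sᵀ = S) 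
    (h : ∀ x : Fin 3 → ℂ, (S * (∑ i, x i • b i).adjugate).trace = 0) : S = 0 := by
  have hA : (genA b)ᵀ = genA b := by
    simp only [genA, Matrix.transpose_sum, Matrix.transpose_smul, ← Matrix.transpose_map, hb]
  have hf : (genA b).det ≠ 0 := by
    intro h0
    obtain ⟨x, hx⟩ := hreg
    apply hx
    rw [← genA_eval, ← RingHom.map_det, h0, map_zero]
  obtain ⟨Z, hZ⟩ := exact_S (genA b) (S.map C) hf hA
    (fun x hx => hz x (by rw [← genA_adj_eval]; exact hx))
    (by rw [← Matrix.transpose_map, hS])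
    (by
      apply MvPolynomial.funext
      intro x
      rw [genA_tr_eval, h x, map_zero])
  have := congrArg (eval (0 : Fin 3 → ℂ)).mapMatrix hZ
  rw [map_add, map_mul, map_mul, genA_eval] at this
  ext i j
  have := congrFun (congrFun this i) j
  simpa using this

end helpers

/-- For a regular net `L ⊆ Sⁿ` (`n ≥ 3`), every nonzero matrix in `L` has rank
`≥ n - 1` if and only if the adjugates of the matrices in `L` span all of `Sⁿ`
(equivalently, the linear span of the reciprocal variety `L⁻¹` is all of `Sⁿ`). -/
theorem stmt18 {n : ℕ} (hn : 3 ≤ n)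
    (L : Submodule ℂ (Mat n)) (hsym : ∀ X ∈ L, Matrix.IsSymm X)
    (hreg : ∃ X ∈ L, IsUnit (Matrix.det X))
    (hdim : Module.finrank ℂ L = 3) :
    (∀ M ∈ L, M ≠ 0 → n - 1 ≤ M.rank) ↔
      Submodule.span ℂ (Matrix.adjugate '' (L : Set (Mat n))) = symmSub n := by

  classical
  have : FiniteDimensional ℂ L := inferInstance
  let B : Module.Basis (Fin 3) ℂ L := Module.finBasisOfFinrankEq ℂ L hdim
  let b : Fin 3 → Mat n := fun i => (B i : Mat n)
  have hbL : ∀ x : Fin 3 → ℂ, (∑ i, x i • b i) ∈ L := fun x =>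
    Submodule.sum_mem _ fun i _ => L.smul_mem _ (B i).2
  have hLb : ∀ M ∈ L, ∃ x : Fin 3 → ℂ, M = ∑ i, x i • b i := by
    intro M hM
    refine ⟨B.repr ⟨M, hM⟩, ?_⟩
    have := congrArg (Subtype.val) (B.sum_repr ⟨M, hM⟩)
    rw [Submodule.coe_sum] at this
    exact this.symm
  have hb0 : ∀ x : Fin 3 → ℂ, (∑ i, x i • b i) = 0 → x = 0 := by
    intro x hx
    have h1 : ∑ i, x i • B i = 0 := by
      apply Subtype.ext
      simpa [b] using hx
    funext i
    exact Fintype.linearIndependent_iff.mp B.linearIndependent x h1 i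
  have hsymb : ∀ i, (b i)ᵀ = b i := fun i => hsym _ (B i).2
  have hn1 : 1 ≤ n := by omega
  constructor
  · intro hr
    have hz : ∀ x : Fin 3 → ℂ, (∑ i, x i • b i).adjugate = 0 → x = 0 := by
      intro x hx
      by_contra hne
      have h1 := hr _ (hbL x) (fun h => hne (hb0 x h))
      have h2 := (adj_zero_iff hn1 _).mp hx
      omega
    have hreg' : ∃ x : Fin 3 → ℂ, (∑ i, x i • b i).det ≠ 0 := by
      obtain ⟨M, hM, hu⟩ := hreg
      obtain ⟨x, rfl⟩ := hLb M hM
      exact ⟨x, hu.ne_zero⟩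
    apply le_antisymm
    · rw [Submodule.span_le]
      rintro _ ⟨M, hM, rfl⟩
      change (M.adjugate)ᵀ = _
      rw [Matrix.adjugate_transpose, hsym M hM]
    · intro S hS
      by_contra hns
      obtain ⟨φ, hφS, hφ⟩ := Submodule.exists_le_ker_of_notMem hns
      let D : Mat n := Matrix.of fun i j => φ (Matrix.single i j 1) + φ (Matrix.single j i 1)
      have hD : ∀ Y : Mat n, Yᵀ = Y → (D * Y).trace = 2 * φ Y := by
        intro Y hY
        have e1 : φ Y = ∑ i, ∑ j, Y i j * φ (Matrix.single i j 1) := by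
          conv_lhs => rw [Matrix.matrix_eq_sum_single Y]
          simp only [map_sum]
          refine Finset.sum_congr rfl fun i _ => Finset.sum_congr rfl fun j _ => ?_
          rw [← smul_eq_mul, ← map_smul, Matrix.smul_single, smul_eq_mul, mul_one]
        have e2 : φ Y = ∑ i, ∑ j, Y i j * φ (Matrix.single j i 1) := by
          rw [e1, Finset.sum_comm]
          refine Finset.sum_congr rfl fun i _ => Finset.sum_congr rfl fun j _ => ?_
          rw [show Y j i = Y i j from congrFun (congrFun hY i) j]
        rw [two_mul]
        nth_rewrite 1 [e1]
        rw [e2, ← Finset.sum_add_distrib]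
        simp only [Matrix.trace, Matrix.diag_apply, Matrix.mul_apply, ← Finset.sum_add_distrib]
        refine Finset.sum_congr rfl fun i _ => Finset.sum_congr rfl fun j _ => ?_
        rw [show Y j i = Y i j from congrFun (congrFun hY i) j]
        simp only [D, Matrix.of_apply]
        ring
      have hD0 : D = 0 := by
        apply forward b hsymb hreg' hz D
        · ext i j
          simp [D, add_comm]
        · intro x
          rw [hD]
          · have : φ (∑ i, x i • b i).adjugate = 0 :=
              hφ (Submodule.subset_span ⟨_, hbL x, rfl⟩)
            rw [this, mul_zero]
          · rw [Matrix.adjugate_transpose, hsym _ (hbL x)]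
      have := hD S hS
      rw [hD0] at this
      simp at this
      exact hφS this
  · intro hspan M hM hM0
    by_contra hlt
    obtain ⟨x0, rfl⟩ := hLb M hM
    refine backward hn1 b ?_ x0 ?_ ((adj_zero_iff hn1 _).mpr (by omega))
    · intro S hS h
      have h1 : ∀ Y ∈ symmSub n, (S * Y).trace = 0 := by
        intro Y hY
        rw [← hspan] at hY
        induction hY using Submodule.span_induction with
        | mem Y hY =>
          obtain ⟨M, hM, rfl⟩ := hY
          obtain ⟨x, rfl⟩ := hLb M hM
          exact h x
        | zero => simp
        | add u v _ _ hu hv => rw [Matrix.mul_add, Matrix.trace_add, hu, hv, add_zero]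
        | smul c u _ hu => rw [Matrix.mul_smul, Matrix.trace_smul, hu, smul_zero]
      ext i j
      have h2 := h1 (Matrix.single i j 1 + Matrix.single j i 1) (by
        change _ᵀ = _
        simp [Matrix.transpose_single, add_comm])
      rw [Matrix.mul_add, Matrix.trace_add, Matrix.trace_mul_single, Matrix.trace_mul_single,
        show S j i = S i j from congrFun (congrFun hS i) j] at h2
      simpa using h2
    · rintro rfl
      simp at hM0
end
end

section
/- Let L ⊆ Sⁿ be a regular linear subspace of dimension m. Then the reciprocal variety L⁻¹ is a linear subspace of Sⁿ if and only if the dimension of the linear span of the adjugates {adj(M) : M ∈ L} is at most m (in which case L⁻¹ equals this span). -/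
open Matrix

noncomputable section

/-- The reciprocal variety of a linear subspace `L` of matrices. -/
def recipVar {n : ℕ} (L : Submodule ℂ (Mat n)) : Set (Mat n) :=
  closure {Y : Mat n | ∃ X ∈ L, IsUnit (Matrix.det X) ∧ Y = X⁻¹}

theorem aux_closed {n : ℕ} (T : Submodule ℂ (Mat n)) : IsClosed (T : Set (Mat n)) :=
  T.closed_of_finiteDimensional

theorem aux_adj_cont {n : ℕ} : Continuous (fun X : Mat n => X.adjugate) :=
  Continuous.matrix_adjugate continuous_id

/-- Invertible elements are dense in a regular subspace. -/
theorem aux_dense {n : ℕ} (W : Submodule ℂ (Mat n)) (E : Mat n) (hE : E ∈ W)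
    (hu : IsUnit E.det) (X : Mat n) (hX : X ∈ W) :
    X ∈ closure {Y : Mat n | Y ∈ W ∧ IsUnit Y.det} := by
  have hEE : E * E⁻¹ = 1 := Matrix.mul_nonsing_inv _ hu
  have hEE' : E⁻¹ * E = 1 := Matrix.nonsing_inv_mul _ hu
  have hf : Continuous (fun t : ℂ => X + t • E) := by fun_prop
  have hfin : {t : ℂ | (Matrix.charpoly (-(E⁻¹ * X))).IsRoot t}.Finite :=
    Polynomial.finite_setOfPred_isRoot (Matrix.charpoly_monic _).ne_zero
  have hd : (0 : ℂ) ∈ closure {t : ℂ | (Matrix.charpoly (-(E⁻¹ * X))).IsRoot t}ᶜ :=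
    (Set.Finite.countable hfin).dense_compl ℂ 0
  have h2 := image_closure_subset_closure_image hf (Set.mem_image_of_mem _ hd)
  simp only [zero_smul, add_zero] at h2
  refine closure_mono ?_ h2
  rintro _ ⟨t, ht, rfl⟩
  refine ⟨W.add_mem hX (W.smul_mem _ hE), ?_⟩
  have : X + t • E = E * (Matrix.scalar (Fin n) t - (-(E⁻¹ * X))) := by
    rw [sub_neg_eq_add, mul_add, ← mul_assoc, hEE, one_mul, add_comm]
    congr 1
    rw [Matrix.scalar_apply, ← Matrix.smul_one_eq_diagonal, Matrix.mul_smul, mul_one]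
  show IsUnit (X + t • E).det
  rw [this, Matrix.det_mul]
  refine hu.mul ?_
  rw [isUnit_iff_ne_zero]
  intro h0
  apply ht
  simp only [Set.mem_setOf_eq, Polynomial.IsRoot.def, Matrix.eval_charpoly]
  exact h0

/-- Derivative of the inversion. -/
theorem aux_deriv {n : ℕ} (W T : Submodule ℂ (Mat n))
    (h : ∀ Z ∈ W, IsUnit Z.det → Z⁻¹ ∈ T) (X H : Mat n) (hX : X ∈ W) (hH : H ∈ W)
    (hu : IsUnit X.det) : X⁻¹ * H * X⁻¹ ∈ T := by
  have hf : Continuous (fun t : ℂ => X⁻¹ * H * (X + t • H).adjugate) := by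
    have : Continuous (fun t : ℂ => X + t • H) := by fun_prop
    exact Continuous.mul continuous_const (aux_adj_cont.comp this)
  have hg : Continuous (fun t : ℂ => (X + t • H).det) := by
    have : Continuous (fun t : ℂ => X + t • H) := by fun_prop
    exact this.matrix_det
  have hne : ∀ᶠ t in nhds (0 : ℂ), (X + t • H).det ≠ 0 := by
    apply hg.continuousAt.eventually_ne
    simpa using hu.ne_zero
  have key : ∀ᶠ t in nhdsWithin (0 : ℂ) {0}ᶜ, X⁻¹ * H * (X + t • H).adjugate ∈ (T : Set (Mat n)) := by
    filter_upwards [hne.filter_mono nhdsWithin_le_nhds, self_mem_nhdsWithin] with t ht ht0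
    have ht0 : t ≠ 0 := ht0
    have hu2 : IsUnit (X + t • H).det := isUnit_iff_ne_zero.mpr ht
    have hm : X⁻¹ - (X + t • H)⁻¹ ∈ T :=
      T.sub_mem (h X hX hu) (h _ (W.add_mem hX (W.smul_mem _ hH)) hu2)
    have e1 : X⁻¹ - (X + t • H)⁻¹ = t • (X⁻¹ * H * (X + t • H)⁻¹) := by
      have a1 : X⁻¹ = X⁻¹ * ((X + t • H) * (X + t • H)⁻¹) := by
        rw [Matrix.mul_nonsing_inv _ hu2, mul_one]
      have a2 : X⁻¹ * X = 1 := Matrix.nonsing_inv_mul _ hu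
      conv_lhs => lhs; rw [a1]
      rw [← mul_assoc, mul_add, a2, add_mul, one_mul, add_sub_cancel_left, Matrix.mul_smul,
        Matrix.smul_mul]
    have e2 : X⁻¹ * H * (X + t • H).adjugate
        = ((X + t • H).det * t⁻¹) • (X⁻¹ - (X + t • H)⁻¹) := by
      rw [e1, smul_smul, mul_assoc (Matrix.det _), inv_mul_cancel₀ ht0, mul_one, Matrix.inv_def (X + t • H),
        Ring.inverse_eq_inv', Matrix.mul_smul, smul_smul, mul_inv_cancel₀ ht, one_smul]
    rw [e2]
    exact T.smul_mem _ hm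
  have h0 : X⁻¹ * H * X.adjugate ∈ (T : Set (Mat n)) := by
    have ht := (hf.tendsto 0).mono_left (nhdsWithin_le_nhds (s := {0}ᶜ))
    simp only [zero_smul, add_zero] at ht
    exact (aux_closed T).mem_of_tendsto ht key
  have : X⁻¹ * H * X⁻¹ = (X.det)⁻¹ • (X⁻¹ * H * X.adjugate) := by
    conv_lhs => rhs; rw [Matrix.inv_def, Ring.inverse_eq_inv']
    rw [Matrix.mul_smul]
  rw [this]
  exact T.smul_mem _ h0

/-- The linear map `H ↦ A H A`. -/
def auxQ {n : ℕ} (A : Mat n) : Mat n →ₗ[ℂ] Mat n :=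
  (LinearMap.mulRight ℂ A).comp (LinearMap.mulLeft ℂ A)

theorem auxQ_apply {n : ℕ} (A H : Mat n) : auxQ A H = A * H * A := rfl

theorem auxQ_inj {n : ℕ} (A : Mat n) (hu : IsUnit A.det) : Function.Injective (auxQ A) := by
  have hA : IsUnit A := (Matrix.isUnit_iff_isUnit_det A).mpr hu
  intro H K h
  simp only [auxQ_apply] at h
  exact hA.mul_left_cancel (hA.mul_right_cancel h)

theorem aux_finrank {n : ℕ} (W T : Submodule ℂ (Mat n)) (A : Mat n) (hu : IsUnit A.det)
    (h : ∀ H ∈ W, A * H * A ∈ T) :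
    W.map (auxQ A) ≤ T ∧ Module.finrank ℂ (W.map (auxQ A)) = Module.finrank ℂ W := by
  constructor
  · rintro _ ⟨H, hH, rfl⟩
    exact h H hH
  · exact LinearEquiv.finrank_eq (Submodule.equivMapOfInjective _ (auxQ_inj A hu) W).symm

theorem aux_inv_poly {n : ℕ} (a : Mat n) (hu : IsUnit a.det) :
    ∃ p : Polynomial ℂ, a⁻¹ = Polynomial.aeval a p := by
  have h := Matrix.aeval_self_charpoly a
  rw [← Polynomial.X_mul_divX_add a.charpoly] at h
  simp only [map_add, map_mul, Polynomial.aeval_X, Polynomial.aeval_C] at h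
  have hc : a.charpoly.coeff 0 ≠ 0 := by
    intro h0
    have := Matrix.det_eq_sign_charpoly_coeff a
    rw [h0, mul_zero] at this
    exact hu.ne_zero this
  refine ⟨Polynomial.C (-(a.charpoly.coeff 0)⁻¹) * a.charpoly.divX, ?_⟩
  apply Matrix.inv_eq_right_inv
  rw [map_mul, Polynomial.aeval_C, ← mul_assoc, ← Algebra.commutes, mul_assoc,
    eq_neg_of_add_eq_zero_left h, ← map_neg, ← map_mul]
  simp [hc]

theorem aux_poly_mem {n : ℕ} (L : Submodule ℂ (Mat n)) (a X : Mat n)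
    (h : ∀ k : ℕ, a ^ k * X ∈ L) (p : Polynomial ℂ) : Polynomial.aeval a p * X ∈ L := by
  induction p using Polynomial.induction_on' with
  | add p q hp hq => rw [map_add, add_mul]; exact L.add_mem hp hq
  | monomial k c =>
    rw [Polynomial.aeval_monomial, mul_assoc, ← Algebra.smul_def]
    exact L.smul_mem _ (h k)

theorem aux_jordan {n : ℕ} (L S : Submodule ℂ (Mat n)) (X0 Z : Mat n) (hX0 : X0 ∈ L)
    (hu : IsUnit X0.det) (hZ : Z ∈ L) (huZ : IsUnit Z.det)
    (h1 : ∀ H ∈ L, X0⁻¹ * H * X0⁻¹ ∈ S) (h2 : ∀ K ∈ S, Z * K * Z ∈ L) :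
    X0 * Z⁻¹ * X0 ∈ L := by
  have e1 : X0⁻¹ * X0 = 1 := Matrix.nonsing_inv_mul _ hu
  have hp : ∀ k : ℕ, (Z * X0⁻¹) ^ k * X0 ∈ L ∧ (Z * X0⁻¹) ^ (k + 1) * X0 ∈ L := by
    intro k
    induction k with
    | zero => simpa [mul_assoc, e1] using ⟨hX0, hZ⟩
    | succ k ih =>
      refine ⟨ih.2, ?_⟩
      have := h2 _ (h1 _ ih.1)
      convert this using 1
      rw [pow_succ, pow_succ']
      simp only [mul_assoc, e1, mul_one]
      have hc : (Z * X0⁻¹) ^ k * X0 * (X0⁻¹ * Z) = (Z * X0⁻¹) ^ k * Z := by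
        rw [mul_assoc, ← mul_assoc X0, Matrix.mul_nonsing_inv _ hu, one_mul]
      simp only [mul_assoc] at hc
      rw [hc]
  have hua : IsUnit (Z * X0⁻¹).det := by
    rw [Matrix.det_mul]
    exact huZ.mul (Matrix.isUnit_nonsing_inv_det _ hu)
  obtain ⟨p, hpp⟩ := aux_inv_poly _ hua
  have := aux_poly_mem L _ X0 (fun k => (hp k).1) p
  rw [← hpp, Matrix.mul_inv_rev, Matrix.nonsing_inv_nonsing_inv _ hu] at this
  exact this


/-- For a regular `m`-dimensional subspace `L ⊆ Sⁿ`, the reciprocal variety `L⁻¹`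
is a linear space if and only if the span of the adjugates `{adj(M) : M ∈ L}` has
dimension at most `m`; in that case `L⁻¹` equals this span. -/
theorem stmt19 {n m : ℕ}
    (L : Submodule ℂ (Mat n)) (hsym : ∀ X ∈ L, Matrix.IsSymm X)
    (hreg : ∃ X ∈ L, IsUnit (Matrix.det X))
    (hdim : Module.finrank ℂ L = m) :
    ((∃ M : Submodule ℂ (Mat n), recipVar L = (M : Set (Mat n))) ↔
      Module.finrank ℂ
        (Submodule.span ℂ (Matrix.adjugate '' (L : Set (Mat n)))) ≤ m) ∧
    ((∃ M : Submodule ℂ (Mat n), recipVar L = (M : Set (Mat n))) →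
      recipVar L =
        (Submodule.span ℂ (Matrix.adjugate '' (L : Set (Mat n))) : Set (Mat n))) := by
  set S := Submodule.span ℂ (Matrix.adjugate '' (L : Set (Mat n))) with hS
  obtain ⟨X0, hX0, hu0⟩ := hreg
  have hinvS : ∀ Z ∈ L, IsUnit Z.det → Z⁻¹ ∈ S := by
    intro Z hZ _
    rw [Matrix.inv_def]
    exact S.smul_mem _ (Submodule.subset_span ⟨Z, hZ, rfl⟩)
  have hsub : recipVar L ⊆ (S : Set (Mat n)) := by
    refine closure_minimal ?_ (aux_closed S)
    rintro _ ⟨X, hX, hu, rfl⟩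
    exact hinvS X hX hu
  have hlin : ∀ M : Submodule ℂ (Mat n), recipVar L = (M : Set (Mat n)) →
      recipVar L = (S : Set (Mat n)) := by
    intro M hM
    refine Set.Subset.antisymm hsub ?_
    rw [hM]
    have : S ≤ M := by
      refine Submodule.span_le.mpr ?_
      rintro _ ⟨X, hX, rfl⟩
      have hc : IsClosed {Y : Mat n | Y.adjugate ∈ (M : Set (Mat n))} :=
        (aux_closed M).preimage aux_adj_cont
      refine closure_minimal ?_ hc (aux_dense L X0 hX0 hu0 X hX)
      rintro Y ⟨hY, huY⟩
      have h1 : Y⁻¹ ∈ (M : Set (Mat n)) := by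
        rw [← hM]
        exact subset_closure ⟨Y, hY, huY, rfl⟩
      have h2 : Y.adjugate = Y.det • Y⁻¹ := by
        rw [Matrix.inv_def, Ring.inverse_eq_inv', smul_smul, mul_inv_cancel₀ huY.ne_zero,
          one_smul]
      show Y.adjugate ∈ M
      rw [h2]
      exact M.smul_mem _ h1
    exact this
  have hui : IsUnit (X0⁻¹).det := Matrix.isUnit_nonsing_inv_det _ hu0
  refine ⟨⟨?_, ?_⟩, fun ⟨M, hM⟩ => hlin M hM⟩
  · rintro ⟨M, hM⟩
    have hRS := hlin M hM
    have hSinv : ∀ Y ∈ S, IsUnit Y.det → Y⁻¹ ∈ L := by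
      intro Y hY _
      have hY' : Y ∈ recipVar L := by rw [hRS]; exact hY
      have hc : IsClosed {Y : Mat n | Y.adjugate ∈ (L : Set (Mat n))} :=
        (aux_closed L).preimage aux_adj_cont
      have : Y.adjugate ∈ L := by
        refine closure_minimal ?_ hc hY'
        rintro _ ⟨X, hX, hu, rfl⟩
        have hu' := Matrix.isUnit_nonsing_inv_det _ hu
        have h2 : (X⁻¹).adjugate = (X⁻¹).det • X := by
          conv_rhs => rhs; rw [← Matrix.nonsing_inv_nonsing_inv X hu, Matrix.inv_def X⁻¹]
          rw [Ring.inverse_eq_inv', smul_smul, mul_inv_cancel₀ hu'.ne_zero, one_smul]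
        show (X⁻¹).adjugate ∈ L
        rw [h2]
        exact L.smul_mem _ hX
      rw [Matrix.inv_def]
      exact L.smul_mem _ this
    have hd := fun H hH => aux_deriv S L hSinv X0⁻¹ H (hinvS X0 hX0 hu0) hH hui
    rw [Matrix.nonsing_inv_nonsing_inv _ hu0] at hd
    obtain ⟨h1, h2⟩ := aux_finrank S L X0 hu0 hd
    rw [← h2, ← hdim]
    exact Submodule.finrank_mono h1
  · intro hle
    have hQ : ∀ Z ∈ L, IsUnit Z.det → L.map (auxQ Z⁻¹) = S := by
      intro Z hZ hu
      obtain ⟨h1, h2⟩ := aux_finrank L S Z⁻¹ (Matrix.isUnit_nonsing_inv_det _ hu)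
        (fun H hH => aux_deriv L S hinvS Z H hZ hH hu)
      exact Submodule.eq_of_le_of_finrank_le h1 (by rw [h2, hdim]; exact hle)
    refine ⟨S, Set.Subset.antisymm hsub ?_⟩
    intro Y hY
    refine closure_mono ?_ (aux_dense S X0⁻¹ (hinvS X0 hX0 hu0) hui Y hY)
    rintro K ⟨hK, huK⟩
    refine ⟨K⁻¹, ?_, Matrix.isUnit_nonsing_inv_det _ huK,
      (Matrix.nonsing_inv_nonsing_inv _ huK).symm⟩
    rw [← hQ X0 hX0 hu0] at hK
    obtain ⟨Z, hZ, rfl⟩ := hK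
    rw [auxQ_apply] at huK ⊢
    have huZ : IsUnit Z.det := by
      rw [Matrix.det_mul, Matrix.det_mul] at huK
      exact isUnit_of_mul_isUnit_right (isUnit_of_mul_isUnit_left huK)
    rw [Matrix.mul_inv_rev, Matrix.mul_inv_rev, Matrix.nonsing_inv_nonsing_inv _ hu0, ← mul_assoc]
    refine aux_jordan L S X0 Z hX0 hu0 hZ huZ
      (fun H hH => aux_deriv L S hinvS X0 H hX0 hH hu0) ?_
    intro K hK
    rw [← hQ Z hZ huZ] at hK
    obtain ⟨W, hW, rfl⟩ := hK
    rw [auxQ_apply]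
    have : Z * (Z⁻¹ * W * Z⁻¹) * Z = W := by
      rw [mul_assoc, mul_assoc, Matrix.nonsing_inv_mul _ huZ, mul_one, ← mul_assoc,
        Matrix.mul_nonsing_inv _ huZ, one_mul]
    rw [this]
    exact hW
end
end
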